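/- Let n ≥ 2 and 0 < α, s < 1. Suppose u ∈ 𝓛_{2s,α}(ℝⁿ×ℝ) is a distributional solution of ∂_t^α u + (-Δ)^s u = 0 in ℝⁿ×ℝ, i.e. ∫_ℝ ∫_{ℝⁿ} u(x,t)·[D_right^α φ(x,t) + (-Δ)^s φ(x,t)] dx dt = 0 for every real-valued Schwartz function φ on ℝⁿ×ℝ. Then u is affine in x and independent of t: there exist real constants C₀, C₁, …, Cₙ such that u(x,t) = C₀ + Σ_{i=1}^n Cᵢ xᵢ for almost every (x,t) ∈ ℝⁿ×ℝ. -/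

import Mathlib

open MeasureTheory Set

/-- The normalization constant `C_α = 1/|Γ(-α)|` for the Marchaud fractional derivative. -/
noncomputable def Calpha (α : ℝ) : ℝ := 1 / |Real.Gamma (-α)|

/-- The normalization constant `C_{n,s} = 4^s Γ(n/2+s)/(π^{n/2}|Γ(-s)|)` for the
fractional Laplacian. -/
noncomputable def Cns (n : ℕ) (s : ℝ) : ℝ :=
  (4 : ℝ) ^ s * Real.Gamma ((n : ℝ) / 2 + s) / (Real.pi ^ ((n : ℝ) / 2) * |Real.Gamma (-s)|)

/-- The right Marchaud fractional derivative of order `α` in the time variable: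
`D_right^α φ(x,t) = C_α ∫_t^∞ (φ(x,t) - φ(x,τ))/(τ-t)^{1+α} dτ`. -/
noncomputable def marchaudRight {n : ℕ} (α : ℝ) (φ : EuclideanSpace ℝ (Fin n) × ℝ → ℝ)
    (x : EuclideanSpace ℝ (Fin n)) (t : ℝ) : ℝ :=
  Calpha α * ∫ τ in Ioi t, (φ (x, t) - φ (x, τ)) / (τ - t) ^ (1 + α)

/-- The fractional Laplacian `(-Δ)^s` acting in the space variable:
`(-Δ)^s φ(x,t) = (C_{n,s}/2) ∫_{ℝⁿ} (2φ(x,t) - φ(x+y,t) - φ(x-y,t))/|y|^{n+2s} dy`. -/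
noncomputable def fracLap {n : ℕ} (s : ℝ) (φ : EuclideanSpace ℝ (Fin n) × ℝ → ℝ)
    (x : EuclideanSpace ℝ (Fin n)) (t : ℝ) : ℝ :=
  Cns n s / 2 * ∫ y : EuclideanSpace ℝ (Fin n),
    (2 * φ (x, t) - φ (x + y, t) - φ (x - y, t)) / ‖y‖ ^ ((n : ℝ) + 2 * s)

open scoped ContDiff FourierTransform SchwartzMap LineDeriv Topology

/-!
The operator `D_right^α + (-Δ)^s` differs from a Fourier multiplier with a smooth, elliptic symbol
`m` of temperate growth by the convolution with a finite measure `ν`: the smooth symbol comes from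
the jump kernels damped at infinity, `ν` from the remaining, integrable part of the kernels. Hence
a solution satisfies `m(D) u = ν ∗ u`, and iterating `u = m⁻¹(D) (ν ∗ u)` until `m⁻ᴺ` is
integrable against second derivatives bounds `⟨u, ∂_v ∂_v' (η ∘ S)⟩` by the weighted norm of `u`,
uniformly in the symmetric maps `S` with `‖S⁻¹‖ ≤ 1`.

The equation is invariant under the dilations `(x, t) ↦ (l x, m t)` with `l ^ (2 s) = m ^ α`,
which enlarge the weighted norm by at most `l ^ (2 s) * m ^ α`. Applying the bound to dilated
solutions and letting `l, m → ∞` kills the pure second time derivative, as `2 α < 2`. So `u` is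
affine in time, and then independent of time, since the weight does not integrate a linear
function of `t`. Now the dilation in time costs nothing, and the same limit kills the second space
derivatives, as `2 s < 2`.
-/

section DerivBound

variable {V F : Type*} [NormedAddCommGroup V] [NormedSpace ℝ V] [NormedAddCommGroup F]
  [NormedSpace ℝ F]

/-- The derivatives of `f` up to order `n` are bounded by `C * (1 + ‖x‖) ^ d`. The constant is
explicit because the estimates below have to be uniform over families of functions. -/
def DerivBound (n : ℕ) (C d : ℝ) (f : V → F) : Prop :=
  ∀ m ≤ n, ∀ x, ‖iteratedFDeriv ℝ m f x‖ ≤ C * (1 + ‖x‖) ^ d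

variable {n : ℕ} {C C' d d' : ℝ}

lemma derivBound_zero_iff {f : V → F} :
    DerivBound 0 C d f ↔ ∀ x, ‖f x‖ ≤ C * (1 + ‖x‖) ^ d := by
  simp [DerivBound]

namespace DerivBound

lemma nonneg {f : V → F} (h : DerivBound n C d f) : 0 ≤ C := by
  simpa using (norm_nonneg _).trans (h 0 (Nat.zero_le _) 0)

lemma fderiv {f : V → F} (h : DerivBound (n + 1) C d f) : DerivBound n C d (fderiv ℝ f) :=
  fun m hm x => by rw [norm_iteratedFDeriv_fderiv]; exact h _ (by omega) x

lemma succ {f : V → F} (h0 : DerivBound 0 C d f) (h1 : DerivBound n C' d (_root_.fderiv ℝ f)) :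
    DerivBound (n + 1) (max C C') d f := by
  rintro (_ | m) hm x
  · exact (h0 0 le_rfl x).trans (by gcongr; exact le_max_left _ _)
  · rw [← norm_iteratedFDeriv_fderiv]
    exact (h1 m (by omega) x).trans (by gcongr; exact le_max_right _ _)

lemma const_smul {f : V → F} (hf : ContDiff ℝ ∞ f) (h : DerivBound n C d f) (a : ℝ) :
    DerivBound n (‖a‖ * C) d (a • f) := fun m hm x => by
  rw [iteratedFDeriv_const_smul_apply (hf.contDiffAt.of_le (mod_cast le_top)), norm_smul, mul_assoc]
  gcongr
  exact h m hm x

lemma smul [NormedSpace ℂ F] {f : V → ℂ} {g : V → F} (hf : ContDiff ℝ ∞ f) (hg : ContDiff ℝ ∞ g)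
    (hfb : DerivBound n C d f) (hgb : DerivBound n C' d' g) :
    DerivBound n (2 ^ n * (C * C')) (d + d') (fun x => f x • g x) := by
  intro m hm x
  have hC := hfb.nonneg
  have hC' := hgb.nonneg
  calc ‖iteratedFDeriv ℝ m (fun x => f x • g x) x‖
      ≤ ∑ i ∈ Finset.range (m + 1), (m.choose i : ℝ) * ‖iteratedFDeriv ℝ i f x‖ *
          ‖iteratedFDeriv ℝ (m - i) g x‖ :=
        norm_iteratedFDeriv_smul_le (𝕜 := ℝ) hf hg x (mod_cast le_top)
    _ ≤ ∑ i ∈ Finset.range (m + 1), (m.choose i : ℝ) *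
          ((C * (1 + ‖x‖) ^ d) * (C' * (1 + ‖x‖) ^ d')) := by
        refine Finset.sum_le_sum fun i hi => ?_
        have hi' : i ≤ m := Finset.mem_range_succ_iff.1 hi
        rw [mul_assoc]
        gcongr
        · exact hfb i (hi'.trans hm) x
        · exact hgb (m - i) ((Nat.sub_le _ _).trans hm) x
    _ = 2 ^ m * (C * C') * (1 + ‖x‖) ^ (d + d') := by
        rw [← Finset.sum_mul, ← Nat.cast_sum, Nat.sum_range_choose, Real.rpow_add (by positivity)]
        push_cast
        ring
    _ ≤ 2 ^ n * (C * C') * (1 + ‖x‖) ^ (d + d') := by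
        gcongr
        norm_num

lemma comp_contraction {f : V → F} (hf : ContDiff ℝ ∞ f) (h : DerivBound n C 0 f)
    {A : V →L[ℝ] V} (hA : ‖A‖ ≤ 1) : DerivBound n C 0 (fun x => f (A x)) := by
  intro m hm x
  have hC := h.nonneg
  rw [show (fun x => f (A x)) = f ∘ A from rfl,
    A.iteratedFDeriv_comp_right hf x (i := m) (mod_cast le_top)]
  refine (ContinuousMultilinearMap.norm_compContinuousLinearMap_le _ _).trans ?_
  have hprod : ∏ _j : Fin m, ‖A‖ ≤ 1 := Finset.prod_le_one (fun _ _ => norm_nonneg _) fun _ _ => hA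
  simpa using mul_le_mul (h m hm (A x)) hprod (by positivity) (by positivity)

end DerivBound

lemma exists_derivBound_of_hasTemperateGrowth {f : V → F} (hf : f.HasTemperateGrowth) (n : ℕ) :
    ∃ C d, DerivBound n C d f := by
  obtain ⟨k, C, -, h⟩ := hf.norm_iteratedFDeriv_le_uniform n
  exact ⟨C, k, fun m hm x => by simpa using h m hm x⟩

lemma exists_derivBound_pow_zero {g : V → ℂ} {δ : ℝ} (hδ : 0 < δ)
    (hC : DerivBound 0 C (-δ) g) (D : ℝ) :
    ∃ N₀ : ℕ, ∀ N ≥ N₀, DerivBound 0 (C ^ N) (-D) (fun x => g x ^ N) := by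
  refine ⟨⌈D / δ⌉₊, fun N hN => derivBound_zero_iff.2 fun x => ?_⟩
  have hC0 := hC.nonneg
  have hD : D / δ ≤ N := (Nat.le_ceil _).trans (by exact_mod_cast hN)
  rw [div_le_iff₀ hδ] at hD
  calc ‖g x ^ N‖ ≤ (C * (1 + ‖x‖) ^ (-δ)) ^ N := by
        rw [norm_pow]
        exact pow_le_pow_left₀ (norm_nonneg _) (derivBound_zero_iff.1 hC x) N
    _ = C ^ N * (1 + ‖x‖) ^ (-δ * N) := by
        rw [mul_pow, Real.rpow_mul_natCast (by positivity)]
    _ ≤ C ^ N * (1 + ‖x‖) ^ (-D) := by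
        gcongr
        · linarith [norm_nonneg x]
        · linarith

lemma fderiv_fun_pow_eq_smul {g : V → ℂ} (hg : ContDiff ℝ ∞ g) (N : ℕ) :
    fderiv ℝ (fun x => g x ^ N) = (N : ℝ) • fun x => g x ^ (N - 1) • fderiv ℝ g x := by
  ext x v
  rw [fderiv_fun_pow N (hg.differentiable (by simp) x)]
  simp [mul_assoc]

/-- Each derivative of `g ^ N` keeps the factor `g ^ (N - n)`, so a high power makes all derivatives
of order at most `n` decay as fast as desired. -/
lemma exists_derivBound_pow {g : V → ℂ} (hg : g.HasTemperateGrowth) {δ : ℝ} (hδ : 0 < δ)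
    (hC : DerivBound 0 C (-δ) g) (n : ℕ) (D : ℝ) :
    ∃ N₀ : ℕ, ∀ N ≥ N₀, ∃ K, DerivBound n K (-D) (fun x => g x ^ N) := by
  induction n generalizing D with
  | zero =>
    obtain ⟨N₀, h⟩ := exists_derivBound_pow_zero hδ hC D
    exact ⟨N₀, fun N hN => ⟨_, h N hN⟩⟩
  | succ n ih =>
    obtain ⟨C', d, hg'⟩ := exists_derivBound_of_hasTemperateGrowth hg (n + 1)
    obtain ⟨N₁, h₁⟩ := ih (D + d)
    obtain ⟨N₂, h₂⟩ := exists_derivBound_pow_zero hδ hC D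
    refine ⟨max (N₁ + 1) N₂, fun N hN => ?_⟩
    obtain ⟨K, hK⟩ := h₁ (N - 1) (by omega)
    have hsm : ContDiff ℝ ∞ (fderiv ℝ g) := hg.1.fderiv_right (by simp)
    have hpow := hg.1.pow (N - 1)
    have hderiv : DerivBound n _ _ ((N : ℝ) • fun x => g x ^ (N - 1) • fderiv ℝ g x) :=
      (DerivBound.smul hpow hsm hK hg'.fderiv).const_smul (hpow.smul hsm) N
    rw [← fderiv_fun_pow_eq_smul hg.1, show -(D + d) + d = -D by ring] at hderiv
    exact ⟨_, DerivBound.succ (h₂ N (by omega)) hderiv⟩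

end DerivBound

section Reciprocal

lemma norm_iteratedFDerivWithin_inv_le {r : ℝ} (hr : 0 < r) {n N : ℕ} (hn : n ≤ N) {y : ℝ}
    (hy : r < y) :
    ‖iteratedFDerivWithin ℝ n (fun x : ℝ => x⁻¹) (Ioi r) y‖ ≤
      N.factorial * (max 1 r⁻¹) ^ (N + 1) := by
  have hy0 : 0 < y := hr.trans hy
  have hzpow : y ^ (-1 - n : ℤ) = y⁻¹ ^ (n + 1) := by
    rw [show (-1 - n : ℤ) = -((n + 1 : ℕ) : ℤ) by push_cast; ring, zpow_neg, zpow_natCast, inv_pow]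
  rw [iteratedFDerivWithin_of_isOpen n isOpen_Ioi hy, norm_iteratedFDeriv_eq_norm_iteratedDeriv,
    iteratedDeriv_eq_iterate, iter_deriv_inv, norm_mul, norm_mul, norm_pow, norm_neg, norm_one,
    one_pow, one_mul, hzpow, Real.norm_natCast, Real.norm_of_nonneg (by positivity)]
  gcongr
  calc y⁻¹ ^ (n + 1) ≤ (max 1 r⁻¹) ^ (n + 1) := by
        gcongr
        exact le_max_of_le_right (inv_anti₀ hr hy.le)
    _ ≤ (max 1 r⁻¹) ^ (N + 1) := by
        gcongr
        exact le_max_left _ _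

variable {V : Type*} [NormedAddCommGroup V] [NormedSpace ℝ V]

lemma hasTemperateGrowth_inv_of_real {f : V → ℝ} (hf : f.HasTemperateGrowth) {c : ℝ} (hc : 0 < c)
    (h : ∀ x, c ≤ f x) : (fun x => (f x)⁻¹).HasTemperateGrowth := by
  have hrange : range f ⊆ Ioi (c / 2) := by
    rintro - ⟨x, rfl⟩
    exact (half_lt_self hc).trans_le (h x)
  refine Function.HasTemperateGrowth.comp' (g := fun y : ℝ => y⁻¹) hrange
    isOpen_Ioi.uniqueDiffOn ?_ (fun N => ?_) hf
  · exact contDiffOn_id.inv fun y hy => ((half_pos hc).trans hy).ne'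
  · exact ⟨0, N.factorial * (max 1 (c / 2)⁻¹) ^ (N + 1), by positivity, fun n hn y hy => by
      simpa only [pow_zero, mul_one] using norm_iteratedFDerivWithin_inv_le (half_pos hc) hn hy⟩

lemma hasTemperateGrowth_inv {f : V → ℂ} (hf : f.HasTemperateGrowth) {c : ℝ} (hc : 0 < c)
    (h : ∀ x, c ≤ ‖f x‖) : (fun x => (f x)⁻¹).HasTemperateGrowth := by
  have hconj : (fun x => (starRingEnd ℂ) (f x)).HasTemperateGrowth :=
    Complex.conjCLE.hasTemperateGrowth.comp hf
  have hsq : (fun x => ‖f x‖ ^ 2).HasTemperateGrowth :=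
    (Function.hasTemperateGrowth_norm_sq (H := ℂ)).comp hf
  have hinv := hasTemperateGrowth_inv_of_real hsq (pow_pos hc 2)
    fun x => pow_le_pow_left₀ hc.le (h x) 2
  have hmul := hconj.mul (Complex.ofRealCLM.hasTemperateGrowth.comp hinv)
  have heq : (fun x => (f x)⁻¹) =
      (fun x => (starRingEnd ℂ) (f x)) * (Complex.ofReal ∘ fun x => (‖f x‖ ^ 2)⁻¹) := by
    ext x
    simp only [Complex.inv_def, Complex.normSq_eq_norm_sq, Pi.mul_apply, Function.comp_apply]
  rwa [heq]

end Reciprocal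

section FourierDecay

variable {V : Type*} [NormedAddCommGroup V] [InnerProductSpace ℝ V] [FiniteDimensional ℝ V]
  [MeasurableSpace V] [BorelSpace V] {f : V → ℂ} {M : ℕ} {C D : ℝ}

namespace DerivBound

lemma integrable (hf : ContDiff ℝ ∞ f) (h : DerivBound M C (-D) f) (hD : Module.finrank ℝ V < D)
    {m : ℕ} (hm : m ≤ M) : Integrable (fun x => ‖iteratedFDeriv ℝ m f x‖) := by
  refine ((integrable_one_add_norm hD).const_mul C).mono'
    ((hf.continuous_iteratedFDeriv (mod_cast le_top)).norm.aestronglyMeasurable) ?_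
  filter_upwards with x
  simpa using h m hm x

lemma integral_le (hf : ContDiff ℝ ∞ f) (h : DerivBound M C (-D) f) (hD : Module.finrank ℝ V < D)
    {m : ℕ} (hm : m ≤ M) :
    ∫ x, ‖iteratedFDeriv ℝ m f x‖ ≤ C * ∫ x : V, (1 + ‖x‖) ^ (-D) := by
  rw [← integral_const_mul]
  exact integral_mono (h.integrable hf hD hm) ((integrable_one_add_norm hD).const_mul C) (h m hm)

lemma pow_mul_norm_fourierInv_le (hf : ContDiff ℝ ∞ f) (h : DerivBound M C (-D) f)
    (hD : Module.finrank ℝ V < D) {n : ℕ} (hn : n ≤ M) (z : V) :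
    ‖z‖ ^ n * ‖𝓕⁻ f z‖ ≤ 2 ^ n * ((n + 1) * (C * ∫ x : V, (1 + ‖x‖) ^ (-D))) := by
  have hfourier := Real.pow_mul_norm_iteratedFDeriv_fourier_le (f := f) (K := 0) (N := (M : ℕ∞))
    (hf.of_le (mod_cast le_top)) (fun k m hk hm => by
      obtain rfl : k = 0 := by simpa using hk
      simpa using h.integrable hf hD (by simpa using hm))
    (k := 0) (n := n) (by simp) (by exact_mod_cast hn) (-z)
  rw [norm_iteratedFDeriv_zero, norm_neg] at hfourier
  rw [Real.fourierInv_eq_fourier_neg]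
  refine hfourier.trans ?_
  simp only [pow_zero, one_mul, Nat.cast_zero, mul_zero, zero_add, Finset.range_one]
  gcongr
  calc ∑ p ∈ ({0} : Finset ℕ) ×ˢ Finset.range (n + 1), ∫ v, ‖v‖ ^ p.1 * ‖iteratedFDeriv ℝ p.2 f v‖
      ≤ ∑ _p ∈ ({0} : Finset ℕ) ×ˢ Finset.range (n + 1), C * ∫ x : V, (1 + ‖x‖) ^ (-D) := by
        refine Finset.sum_le_sum ?_
        rintro ⟨a, b⟩ hp
        obtain ⟨hb, rfl⟩ : b ≤ n ∧ 0 = a := by simpa using hp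
        simpa using h.integral_le hf hD (m := b) (by omega)
    _ = (n + 1) * (C * ∫ x : V, (1 + ‖x‖) ^ (-D)) := by
        simp

lemma one_add_pow_mul_norm_fourierInv_le (hf : ContDiff ℝ ∞ f) (h : DerivBound M C (-D) f)
    (hD : Module.finrank ℝ V < D) (z : V) :
    (1 + ‖z‖) ^ M * ‖𝓕⁻ f z‖ ≤
      2 ^ (M - 1) * (1 + 2 ^ M * (M + 1)) * (C * ∫ x : V, (1 + ‖x‖) ^ (-D)) := by
  have h0 := h.pow_mul_norm_fourierInv_le hf hD (Nat.zero_le M) z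
  have hM := h.pow_mul_norm_fourierInv_le hf hD le_rfl z
  simp only [pow_zero, one_mul, Nat.cast_zero, zero_add] at h0
  calc (1 + ‖z‖) ^ M * ‖𝓕⁻ f z‖ ≤ 2 ^ (M - 1) * (1 ^ M + ‖z‖ ^ M) * ‖𝓕⁻ f z‖ := by
        gcongr
        exact add_pow_le zero_le_one (norm_nonneg z) M
    _ = 2 ^ (M - 1) * (‖𝓕⁻ f z‖ + ‖z‖ ^ M * ‖𝓕⁻ f z‖) := by rw [one_pow]; ring
    _ ≤ 2 ^ (M - 1) * ((C * ∫ x : V, (1 + ‖x‖) ^ (-D)) +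
          2 ^ M * ((M + 1) * (C * ∫ x : V, (1 + ‖x‖) ^ (-D)))) := by gcongr
    _ = _ := by ring

end DerivBound

end FourierDecay

section Weight

lemma le_inv_mul_mul_of_mul_le {a b c w x : ℝ} (hc : 0 < c) (hw : 0 ≤ w) (hx : 0 ≤ x)
    (hcw : c ≤ a * w) (hb : a * x ≤ b) : x ≤ c⁻¹ * b * w := by
  rw [mul_assoc, inv_mul_eq_div, le_div_iff₀ hc]
  calc x * c ≤ x * (a * w) := by gcongr
    _ = a * x * w := by ring
    _ ≤ b * w := by gcongr

lemma norm_ofReal_mul {r : ℝ} (hr : 0 ≤ r) (a : ℂ) : ‖(r : ℂ) * a‖ = r * ‖a‖ := by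
  rw [norm_mul, Complex.norm_real, Real.norm_of_nonneg hr]

lemma norm_mul_le_mul_norm_ofReal_mul {r B : ℝ} {x : ℂ} (hr : 0 ≤ r) (hx : ‖x‖ ≤ B * r) (a : ℂ) :
    ‖a * x‖ ≤ B * ‖(r : ℂ) * a‖ := by
  calc ‖a * x‖ ≤ ‖a‖ * (B * r) := by
        rw [norm_mul]
        gcongr
    _ = B * ‖(r : ℂ) * a‖ := by rw [norm_ofReal_mul hr]; ring

variable {V : Type*} [NormedAddCommGroup V] {w : V → ℝ} {u ψ : V → ℂ} {B c : ℝ} {M : ℕ}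

lemma exists_schwartz_le_weight [NormedSpace ℝ V] (hpos : ∀ z, 0 < w z) (hc : 0 < c)
    (hw : ∀ z, c ≤ (1 + ‖z‖) ^ M * w z) (ψ : 𝓢(V, ℂ)) : ∃ B, ∀ z, ‖ψ z‖ ≤ B * w z := by
  refine ⟨c⁻¹ * (2 ^ M * ((Finset.Iic (M, 0)).sup fun m => SchwartzMap.seminorm ℂ m.1 m.2) ψ),
    fun z => le_inv_mul_mul_of_mul_le hc (hpos z).le (norm_nonneg _) (hw z) ?_⟩
  simpa using SchwartzMap.one_add_le_sup_seminorm_apply (𝕜 := ℂ) (m := (M, 0)) (k := M) (n := 0)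
    le_rfl le_rfl ψ z

variable [MeasureSpace V] [BorelSpace V]

lemma aestronglyMeasurable_of_integrable_weight_mul (hpos : ∀ z, 0 < w z) (hw : Continuous w)
    (hu : Integrable (fun z => (w z : ℂ) * u z)) : AEStronglyMeasurable u := by
  have hinv : AEStronglyMeasurable (fun z => ((w z)⁻¹ : ℂ)) (volume : Measure V) := by
    have := hw.measurable
    exact (by fun_prop : Measurable fun z => ((w z)⁻¹ : ℂ)).aestronglyMeasurable
  refine (hinv.mul hu.aestronglyMeasurable).congr (Filter.Eventually.of_forall fun z => ?_)
  exact inv_mul_cancel_left₀ (Complex.ofReal_ne_zero.2 (hpos z).ne') (u z)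

lemma integrable_mul_of_le_weight (hpos : ∀ z, 0 < w z) (hw : Continuous w)
    (hu : Integrable (fun z => (w z : ℂ) * u z)) (hψm : AEStronglyMeasurable ψ)
    (hψ : ∀ z, ‖ψ z‖ ≤ B * w z) : Integrable (fun z => u z * ψ z) :=
  (hu.norm.const_mul B).mono'
    ((aestronglyMeasurable_of_integrable_weight_mul hpos hw hu).mul hψm)
    (.of_forall fun z => norm_mul_le_mul_norm_ofReal_mul (hpos z).le (hψ z) (u z))

lemma norm_integral_mul_le_of_le_weight (hpos : ∀ z, 0 < w z) (hw : Continuous w)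
    (hu : Integrable (fun z => (w z : ℂ) * u z)) (hψm : AEStronglyMeasurable ψ)
    (hψ : ∀ z, ‖ψ z‖ ≤ B * w z) : ‖∫ z, u z * ψ z‖ ≤ B * ∫ z, ‖(w z : ℂ) * u z‖ := by
  rw [← integral_const_mul]
  exact (norm_integral_le_integral_norm _).trans <|
    integral_mono (integrable_mul_of_le_weight hpos hw hu hψm hψ).norm (hu.norm.const_mul B)
      fun z => norm_mul_le_mul_norm_ofReal_mul (hpos z).le (hψ z) (u z)

end Weight

section ExcessiveWeight

variable {V : Type*} [NormedAddCommGroup V] [MeasurableSpace V]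

/-- `w` is a positive continuous weight which is excessive, up to the factor `C`, for averaging
against translates by `ν`. Such averages then act boundedly on functions integrable against `w`. -/
structure ExcessiveWeight (w : V → ℝ) (ν : Measure V) (C : ℝ) : Prop where
  pos : ∀ z, 0 < w z
  continuous : Continuous w
  integrable : ∀ z, Integrable (fun y => w (z + y)) ν
  integral_le : ∀ z, ∫ y, w (z + y) ∂ν ≤ C * w z

/-- The convolution `ν ∗ u`, that is, the transpose of `φ ↦ ∫ y, φ (· + y) ∂ν`. -/
noncomputable def backAverage (ν : Measure V) (u : V → ℂ) (z : V) : ℂ := ∫ y, u (z - y) ∂ν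

variable {w : V → ℝ} {ν : Measure V} {C : ℝ} {u ψ : V → ℂ} {B c : ℝ} {M : ℕ}

namespace ExcessiveWeight

lemma constant_nonneg (h : ExcessiveWeight w ν C) : 0 ≤ C :=
  nonneg_of_mul_nonneg_left ((integral_nonneg fun y => (h.pos (0 + y)).le).trans (h.integral_le 0))
    (h.pos 0)

lemma integrable_shear_fiber (h : ExcessiveWeight w ν C) (u : V → ℂ) (z : V) :
    Integrable (fun y => (w (z + y) : ℂ) * u z) ν :=
  ((h.integrable z).ofReal (𝕜 := ℂ)).mul_const (u z)

lemma integral_shear_fiber_le (h : ExcessiveWeight w ν C) (u : V → ℂ) (z : V) :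
    ∫ y, ‖(w (z + y) : ℂ) * u z‖ ∂ν ≤ C * ‖(w z : ℂ) * u z‖ := by
  simp only [fun a => norm_ofReal_mul (h.pos a).le, integral_mul_const, ← mul_assoc]
  gcongr
  exact h.integral_le z

lemma norm_integral_add_le (h : ExcessiveWeight w ν C) (hψ : ∀ z, ‖ψ z‖ ≤ B * w z) (z : V) :
    ‖∫ y, ψ (z + y) ∂ν‖ ≤ B * C * w z := by
  have hB : 0 ≤ B := nonneg_of_mul_nonneg_left ((norm_nonneg _).trans (hψ 0)) (h.pos 0)
  calc ‖∫ y, ψ (z + y) ∂ν‖ ≤ ∫ y, B * w (z + y) ∂ν :=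
        norm_integral_le_of_norm_le ((h.integrable z).const_mul B) (.of_forall fun y => hψ _)
    _ ≤ B * C * w z := by
        rw [integral_const_mul, mul_assoc]
        gcongr
        exact h.integral_le z

end ExcessiveWeight

end ExcessiveWeight

section BackAverage

variable {V : Type*} [NormedAddCommGroup V] [MeasureSpace V] [BorelSpace V]
  {w : V → ℝ} {ν : Measure V} {C : ℝ} {u ψ : V → ℂ} {B c : ℝ} {M : ℕ}

namespace ExcessiveWeight

lemma aestronglyMeasurable (h : ExcessiveWeight w ν C)
    (hu : Integrable (fun z => (w z : ℂ) * u z)) : AEStronglyMeasurable u :=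
  aestronglyMeasurable_of_integrable_weight_mul h.pos h.continuous hu

variable [SecondCountableTopology V] [SFinite ν]

lemma integrable_shear (h : ExcessiveWeight w ν C) (hu : Integrable (fun z => (w z : ℂ) * u z)) :
    Integrable (fun p : V × V => (w (p.1 + p.2) : ℂ) * u p.1) (volume.prod ν) := by
  have hm : AEStronglyMeasurable (fun p : V × V => (w (p.1 + p.2) : ℂ) * u p.1)
      (volume.prod ν) := by
    refine AEStronglyMeasurable.mul ?_ (h.aestronglyMeasurable hu).comp_fst
    have := h.continuous
    exact (by fun_prop : Continuous fun p : V × V => (w (p.1 + p.2) : ℂ)).aestronglyMeasurable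
  rw [integrable_prod_iff hm]
  refine ⟨Filter.Eventually.of_forall (h.integrable_shear_fiber u),
    (hu.norm.const_mul C).mono' hm.norm.integral_prod_right' ?_⟩
  filter_upwards with z
  rw [Real.norm_of_nonneg (integral_nonneg fun y => norm_nonneg _)]
  exact h.integral_shear_fiber_le u z

variable [SFinite (volume : Measure V)]

lemma integral_shear_le (h : ExcessiveWeight w ν C) (hu : Integrable (fun z => (w z : ℂ) * u z)) :
    ∫ p : V × V, ‖(w (p.1 + p.2) : ℂ) * u p.1‖ ∂(volume.prod ν) ≤
      C * ∫ z, ‖(w z : ℂ) * u z‖ := by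
  rw [integral_prod _ (h.integrable_shear hu).norm, ← integral_const_mul]
  exact integral_mono (h.integrable_shear hu).norm.integral_prod_left (hu.norm.const_mul C)
    (h.integral_shear_fiber_le u)

variable [(volume : Measure V).IsAddRightInvariant]

lemma integrable_unshear (h : ExcessiveWeight w ν C)
    (hu : Integrable (fun z => (w z : ℂ) * u z)) :
    Integrable (fun p : V × V => (w p.1 : ℂ) * u (p.1 - p.2)) (volume.prod ν) := by
  simpa [Function.comp_def] using (measurePreserving_sub_prod (volume : Measure V)
    ν).integrable_comp_of_integrable (h.integrable_shear hu)

lemma integral_unshear_le (h : ExcessiveWeight w ν C)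
    (hu : Integrable (fun z => (w z : ℂ) * u z)) :
    ∫ p : V × V, ‖(w p.1 : ℂ) * u (p.1 - p.2)‖ ∂(volume.prod ν) ≤
      C * ∫ z, ‖(w z : ℂ) * u z‖ := by
  refine le_of_eq_of_le ?_ (h.integral_shear_le hu)
  have hpres := measurePreserving_sub_prod (volume : Measure V) ν
  conv_rhs => rw [← hpres.map_eq]
  rw [integral_map hpres.aemeasurable]
  · simp
  · rw [hpres.map_eq]
    exact (h.integrable_shear hu).norm.aestronglyMeasurable

lemma integrable_backAverage (h : ExcessiveWeight w ν C)
    (hu : Integrable (fun z => (w z : ℂ) * u z)) :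
    Integrable (fun z => (w z : ℂ) * backAverage ν u z) := by
  simpa only [integral_const_mul, backAverage] using (h.integrable_unshear hu).integral_prod_left

lemma integral_backAverage_le (h : ExcessiveWeight w ν C)
    (hu : Integrable (fun z => (w z : ℂ) * u z)) :
    ∫ z, ‖(w z : ℂ) * backAverage ν u z‖ ≤ C * ∫ z, ‖(w z : ℂ) * u z‖ := by
  refine le_trans ?_ (h.integral_unshear_le hu)
  rw [integral_prod _ (h.integrable_unshear hu).norm]
  refine integral_mono (h.integrable_backAverage hu).norm
    (h.integrable_unshear hu).norm.integral_prod_left fun z => ?_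
  simp only [backAverage, ← integral_const_mul]
  exact norm_integral_le_integral_norm _

lemma integrable_unshear_mul (h : ExcessiveWeight w ν C)
    (hu : Integrable (fun z => (w z : ℂ) * u z)) (hψc : Continuous ψ)
    (hψ : ∀ z, ‖ψ z‖ ≤ B * w z) :
    Integrable (fun p : V × V => u (p.1 - p.2) * ψ p.1) (volume.prod ν) := by
  have hm : AEStronglyMeasurable (fun p : V × V => u (p.1 - p.2)) (volume.prod ν) :=
    (h.aestronglyMeasurable hu).comp_quasiMeasurePreserving
      (quasiMeasurePreserving_sub_of_right_invariant _ _)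
  exact ((h.integrable_unshear hu).norm.const_mul B).mono'
    (hm.mul (hψc.comp continuous_fst).aestronglyMeasurable)
    (.of_forall fun p => norm_mul_le_mul_norm_ofReal_mul (h.pos p.1).le (hψ p.1) _)

lemma integral_backAverage_mul (h : ExcessiveWeight w ν C)
    (hu : Integrable (fun z => (w z : ℂ) * u z)) (hψc : Continuous ψ)
    (hψ : ∀ z, ‖ψ z‖ ≤ B * w z) :
    ∫ z, backAverage ν u z * ψ z = ∫ y, (∫ z, u z * ψ (z + y)) ∂ν := by
  have hswap := integral_integral_swap (f := fun z y => u (z - y) * ψ z)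
    (h.integrable_unshear_mul hu hψc hψ)
  simp only [integral_mul_const] at hswap
  rw [show (fun z => backAverage ν u z * ψ z) = fun z => (∫ y, u (z - y) ∂ν) * ψ z from rfl, hswap]
  congr 1 with y
  rw [← integral_add_right_eq_self (fun z => u (z - y) * ψ z) y]
  simp

lemma integral_backAverage_mul' (h : ExcessiveWeight w ν C)
    (hu : Integrable (fun z => (w z : ℂ) * u z)) (hψc : Continuous ψ)
    (hψ : ∀ z, ‖ψ z‖ ≤ B * w z) :
    ∫ z, backAverage ν u z * ψ z = ∫ z, u z * ∫ y, ψ (z + y) ∂ν := by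
  rw [h.integral_backAverage_mul hu hψc hψ]
  have hshear := (measurePreserving_add_prod (volume : Measure V) ν).integrable_comp_of_integrable
    (h.integrable_unshear_mul hu hψc hψ)
  simp only [Function.comp_def, add_sub_cancel_right] at hshear
  rw [← integral_integral_swap (f := fun z y => u z * ψ (z + y)) hshear]
  simp only [integral_const_mul]

end ExcessiveWeight

variable [NormedSpace ℝ V]

/-- `u` solves `P' u = ν ∗ u` in the sense of distributions, `P'` being the transpose of `P`. -/
def IsAverageSol (P : 𝓢(V, ℂ) → 𝓢(V, ℂ)) (ν : Measure V) (u : V → ℂ) : Prop :=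
  ∀ φ : 𝓢(V, ℂ), ∫ z, u z * P φ z = ∫ z, backAverage ν u z * φ z

variable [SecondCountableTopology V] [SFinite (volume : Measure V)] [SFinite ν]
  [(volume : Measure V).IsAddRightInvariant] {P R : 𝓢(V, ℂ) → 𝓢(V, ℂ)}

lemma IsAverageSol.backAverage (h : ExcessiveWeight w ν C) (hc : 0 < c)
    (hw : ∀ z, c ≤ (1 + ‖z‖) ^ M * w z)
    (hP : ∀ φ a, P (φ.compSubConstCLM ℂ a) = (P φ).compSubConstCLM ℂ a)
    (hu : Integrable (fun z => (w z : ℂ) * u z)) (hs : IsAverageSol P ν u) :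
    IsAverageSol P ν (backAverage ν u) := by
  intro φ
  obtain ⟨B, hB⟩ := exists_schwartz_le_weight h.pos hc hw (P φ)
  obtain ⟨B', hB'⟩ := exists_schwartz_le_weight h.pos hc hw φ
  rw [h.integral_backAverage_mul hu (P φ).continuous hB,
    h.integral_backAverage_mul (h.integrable_backAverage hu) φ.continuous hB']
  congr 1 with y
  have htranslate := hs (φ.compSubConstCLM ℂ (-y))
  rw [hP] at htranslate
  simpa using htranslate

/-- A right inverse `R` of `P` turns the equation into `u = R' (ν ∗ u)`, which is iterated. -/
lemma IsAverageSol.norm_integral_mul_le (h : ExcessiveWeight w ν C) (hc : 0 < c)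
    (hw : ∀ z, c ≤ (1 + ‖z‖) ^ M * w z)
    (hP : ∀ φ a, P (φ.compSubConstCLM ℂ a) = (P φ).compSubConstCLM ℂ a)
    (hR : ∀ φ, P (R φ) = φ) (hu : Integrable (fun z => (w z : ℂ) * u z))
    (hs : IsAverageSol P ν u) (N : ℕ) (η : 𝓢(V, ℂ))
    (hB : ∀ z, (1 + ‖z‖) ^ M * ‖(R^[N] η) z‖ ≤ B) :
    ‖∫ z, u z * η z‖ ≤ c⁻¹ * B * C ^ N * ∫ z, ‖(w z : ℂ) * u z‖ := by
  induction N generalizing u η with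
  | zero =>
    rw [pow_zero, mul_one]
    exact norm_integral_mul_le_of_le_weight h.pos h.continuous hu η.continuous.aestronglyMeasurable
      fun z => le_inv_mul_mul_of_mul_le hc (h.pos z).le (norm_nonneg _) (hw z) (hB z)
  | succ N ih =>
    have hC := h.constant_nonneg
    have hB0 : 0 ≤ B := le_trans (by positivity) (hB 0)
    have hresolvent := hs (R η)
    rw [hR] at hresolvent
    calc ‖∫ z, u z * η z‖
        ≤ c⁻¹ * B * C ^ N * ∫ z, ‖(w z : ℂ) * _root_.backAverage ν u z‖ := by
          rw [hresolvent]
          exact ih (h.integrable_backAverage hu) (hs.backAverage h hc hw hP hu) (R η) hB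
      _ ≤ c⁻¹ * B * C ^ N * (C * ∫ z, ‖(w z : ℂ) * u z‖) := by
          gcongr
          exact h.integral_backAverage_le hu
      _ = c⁻¹ * B * C ^ (N + 1) * ∫ z, ‖(w z : ℂ) * u z‖ := by ring

end BackAverage

section Symbol

variable {V : Type*} [NormedAddCommGroup V] {m : V → ℂ} {c δ : ℝ}

lemma le_norm_of_mul_rpow_le (hc : 0 ≤ c) (hδ : 0 ≤ δ)
    (hmc : ∀ x, c * (1 + ‖x‖) ^ δ ≤ ‖m x‖) (x : V) : c ≤ ‖m x‖ :=
  (le_mul_of_one_le_right hc (Real.one_le_rpow (by linarith [norm_nonneg x]) hδ)).trans (hmc x)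

lemma derivBound_inv_of_mul_rpow_le [NormedSpace ℝ V] (hc : 0 < c)
    (hmc : ∀ x, c * (1 + ‖x‖) ^ δ ≤ ‖m x‖) : DerivBound 0 c⁻¹ (-δ) (fun x => (m x)⁻¹) :=
  derivBound_zero_iff.2 fun x => by
    rw [norm_inv, Real.rpow_neg (by positivity), ← mul_inv]
    exact inv_anti₀ (by positivity) (hmc x)

variable [InnerProductSpace ℝ V]

/-- The Fourier symbol of the second derivative `∂_{v} ∂_{v'}`. -/
noncomputable def secondDerivSymbol (v v' ζ : V) : ℂ :=
  ((2 * Real.pi * Complex.I) * (inner ℝ ζ v : ℝ)) * ((2 * Real.pi * Complex.I) * (inner ℝ ζ v' : ℝ))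

lemma hasTemperateGrowth_secondDerivSymbol (v v' : V) :
    (secondDerivSymbol v v').HasTemperateGrowth := by
  unfold secondDerivSymbol
  fun_prop

end Symbol

section Multiplier

variable {V : Type*} [NormedAddCommGroup V] [InnerProductSpace ℝ V] [FiniteDimensional ℝ V]
  [MeasurableSpace V] [BorelSpace V]

open SchwartzMap

lemma fourierMultiplierCLM_eq_fourierInv {m : V → ℂ} (hm : m.HasTemperateGrowth) (φ : 𝓢(V, ℂ))
    (z : V) : fourierMultiplierCLM ℂ m φ z = 𝓕⁻ (fun ζ => m ζ * 𝓕 (φ : V → ℂ) ζ) z := by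
  rw [fourierMultiplierCLM_apply, fourierInv_coe]
  refine congrFun (congrArg _ (funext fun ζ => ?_)) z
  rw [smulLeftCLM_apply_apply hm, fourier_coe, smul_eq_mul]

lemma fourier_compSubConstCLM (φ : 𝓢(V, ℂ)) (a ζ : V) :
    𝓕 (φ.compSubConstCLM ℂ a : V → ℂ) ζ =
      (Real.fourierChar (-inner ℝ a ζ) : ℂ) * 𝓕 (φ : V → ℂ) ζ := by
  have h := congrFun (VectorFourier.fourierIntegral_comp_add_right Real.fourierChar volume
    (innerₗ V) (φ : V → ℂ) (-a)) ζ
  rw [map_neg, LinearMap.neg_apply, innerₗ_apply_apply, Circle.smul_def] at h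
  rwa [show (φ.compSubConstCLM ℂ a : V → ℂ) = φ ∘ fun v => v + -a from
    funext fun v => congrArg φ (sub_eq_add_neg v a)]

lemma fourierMultiplierCLM_compSubConstCLM {m : V → ℂ} (hm : m.HasTemperateGrowth) (φ : 𝓢(V, ℂ))
    (a : V) : fourierMultiplierCLM ℂ m (φ.compSubConstCLM ℂ a) =
      (fourierMultiplierCLM ℂ m φ).compSubConstCLM ℂ a := by
  ext z
  rw [compSubConstCLM_apply, fourierMultiplierCLM_eq_fourierInv hm,
    fourierMultiplierCLM_eq_fourierInv hm, Real.fourierInv_eq, Real.fourierInv_eq]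
  congr 1 with ζ
  rw [fourier_compSubConstCLM, inner_sub_right, sub_eq_add_neg, AddChar.map_add_eq_mul,
    real_inner_comm a ζ]
  simp only [Circle.smul_def, smul_eq_mul, Circle.coe_mul]
  ring

lemma fourierMultiplierCLM_fourierMultiplierCLM_inv {m : V → ℂ} (hm : m.HasTemperateGrowth) {c : ℝ}
    (hc : 0 < c) (hmc : ∀ x, c ≤ ‖m x‖) (φ : 𝓢(V, ℂ)) :
    fourierMultiplierCLM ℂ m (fourierMultiplierCLM ℂ (fun x => (m x)⁻¹) φ) = φ := by
  rw [fourierMultiplierCLM_fourierMultiplierCLM_apply hm (hasTemperateGrowth_inv hm hc hmc)]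
  have hone : m * (fun x => (m x)⁻¹) = fun _ => 1 :=
    funext fun x => mul_inv_cancel₀ (norm_pos_iff.1 (hc.trans_le (hmc x)))
  rw [hone, fourierMultiplierCLM_const]
  simp

lemma fourierMultiplierCLM_iterate {g : V → ℂ} (hg : g.HasTemperateGrowth) (N : ℕ)
    (φ : 𝓢(V, ℂ)) :
    (fourierMultiplierCLM ℂ g)^[N] φ = fourierMultiplierCLM ℂ (fun x => g x ^ N) φ := by
  induction N generalizing φ with
  | zero => simp
  | succ N ih =>
    rw [Function.iterate_succ_apply', ih,
      fourierMultiplierCLM_fourierMultiplierCLM_apply hg (g₂ := fun x => g x ^ N) (hg.pow N)]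
    congr 2
    ext x
    simp [pow_succ']

lemma fourier_comp_of_symmetric (S : V ≃L[ℝ] V)
    (hS : ∀ x y, inner ℝ (S x) y = inner ℝ x (S y)) (f : V → ℂ) (ζ : V) :
    𝓕 (fun x => f (S x)) ζ =
      ((|LinearMap.det (S : V →ₗ[ℝ] V)|⁻¹ : ℝ) : ℂ) * 𝓕 f (S.symm ζ) := by
  have hdet : LinearMap.det (S : V →ₗ[ℝ] V) ≠ 0 :=
    (LinearEquiv.isUnit_det' S.toLinearEquiv).ne_zero
  have hmap : Measure.map S (volume : Measure V) =
      ENNReal.ofReal |(LinearMap.det (S : V →ₗ[ℝ] V))⁻¹| • volume :=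
    Measure.map_linearMap_addHaar_eq_smul_addHaar volume hdet
  have hchange := S.toHomeomorph.toMeasurableEquiv.measurableEmbedding.integral_map (μ := volume)
    (fun y => Real.fourierChar (-inner ℝ y (S.symm ζ)) • f y)
  simp only [Homeomorph.toMeasurableEquiv_coe, ContinuousLinearEquiv.coe_toHomeomorph, hmap,
    integral_smul_measure, ENNReal.toReal_ofReal (abs_nonneg _), hS,
    ContinuousLinearEquiv.apply_symm_apply] at hchange
  rw [Real.fourier_eq, Real.fourier_eq, ← hchange, abs_inv, Complex.real_smul]

lemma lineDeriv_lineDeriv_eq (v v' : V) (φ : 𝓢(V, ℂ)) :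
    ∂_{v} (∂_{v'} φ) = fourierMultiplierCLM ℂ (secondDerivSymbol v v') φ := by
  have hfirst : ∀ (v : V) (φ : 𝓢(V, ℂ)), ∂_{v} φ = fourierMultiplierCLM ℂ
      (fun ζ => (2 * Real.pi * Complex.I) * (inner ℝ ζ v : ℝ)) φ := by
    intro v φ
    rw [lineDeriv_eq_fourierMultiplierCLM, ← fourierMultiplierCLM_ofReal ℂ (by fun_prop),
      ← smul_apply, ← fourierMultiplierCLM_smul (by fun_prop)]
    rfl
  rw [hfirst, hfirst, fourierMultiplierCLM_fourierMultiplierCLM_apply (by fun_prop) (by fun_prop)]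
  rfl

lemma exists_derivBound_fourier (η : 𝓢(V, ℂ)) (M : ℕ) :
    ∃ C, DerivBound M C 0 (𝓕 (η : V → ℂ)) := by
  refine ⟨∑ k ∈ Finset.range (M + 1), SchwartzMap.seminorm ℂ 0 k (𝓕 η), fun k hk z => ?_⟩
  calc ‖iteratedFDeriv ℝ k (𝓕 (η : V → ℂ)) z‖ ≤ SchwartzMap.seminorm ℂ 0 k (𝓕 η) := by
        simpa [fourier_coe] using le_seminorm ℂ 0 k (𝓕 η) z
    _ ≤ ∑ k ∈ Finset.range (M + 1), SchwartzMap.seminorm ℂ 0 k (𝓕 η) :=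
        Finset.single_le_sum (f := fun k => SchwartzMap.seminorm ℂ 0 k (𝓕 η))
          (fun i _ => apply_nonneg _ _) (Finset.mem_range_succ_iff.2 hk)
    _ = (∑ k ∈ Finset.range (M + 1), SchwartzMap.seminorm ℂ 0 k (𝓕 η)) * (1 + ‖z‖) ^ (0 : ℝ) := by
        rw [Real.rpow_zero, mul_one]

lemma fourierMultiplierCLM_comp_of_symmetric {F : V → ℂ} (hF : F.HasTemperateGrowth)
    (S : V ≃L[ℝ] V) (hS : ∀ x y, inner ℝ (S x) y = inner ℝ x (S y)) (η : 𝓢(V, ℂ)) (z : V) :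
    fourierMultiplierCLM ℂ F (compCLMOfContinuousLinearEquiv ℂ S η) z =
      ((|LinearMap.det (S : V →ₗ[ℝ] V)|⁻¹ : ℝ) : ℂ) *
        𝓕⁻ (fun ζ => F ζ * 𝓕 (η : V → ℂ) (S.symm ζ)) z := by
  rw [fourierMultiplierCLM_eq_fourierInv hF, Real.fourierInv_eq, Real.fourierInv_eq,
    ← integral_const_mul]
  congr 1 with ζ
  rw [show (compCLMOfContinuousLinearEquiv ℂ S η : V → ℂ) = fun x => η (S x) from rfl,
    fourier_comp_of_symmetric S hS]
  simp only [Circle.smul_def, smul_eq_mul]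
  ring

lemma exists_fourierMultiplierCLM_comp_le {F : V → ℂ} (hF : F.HasTemperateGrowth) {M : ℕ}
    {C D : ℝ} (hFb : DerivBound M C (-D) F) (hD : Module.finrank ℝ V < D) (η : 𝓢(V, ℂ)) :
    ∃ K, ∀ S : V ≃L[ℝ] V, (∀ x y, inner ℝ (S x) y = inner ℝ x (S y)) →
      ‖(S.symm : V →L[ℝ] V)‖ ≤ 1 → ∀ z, (1 + ‖z‖) ^ M *
        ‖fourierMultiplierCLM ℂ F (compCLMOfContinuousLinearEquiv ℂ S η) z‖ ≤
        K * |LinearMap.det (S : V →ₗ[ℝ] V)|⁻¹ := by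
  obtain ⟨C', hη⟩ := exists_derivBound_fourier η M
  have hηs : ContDiff ℝ ∞ (𝓕 (η : V → ℂ)) := by
    rw [← fourier_coe]
    exact (𝓕 η).smooth'
  refine ⟨2 ^ (M - 1) * (1 + 2 ^ M * (M + 1)) *
    (2 ^ M * (C * C') * ∫ x : V, (1 + ‖x‖) ^ (-D)), fun S hS hS1 z => ?_⟩
  have hcomp := hFb.smul hF.1 (hηs.comp (S.symm : V →L[ℝ] V).contDiff)
    (hη.comp_contraction hηs hS1)
  rw [add_zero] at hcomp
  rw [fourierMultiplierCLM_comp_of_symmetric hF S hS, norm_mul, Complex.norm_real, norm_inv,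
    norm_abs_eq_norm, Real.norm_eq_abs, mul_left_comm, mul_comm]
  refine mul_le_mul_of_nonneg_right ?_ (by positivity)
  exact hcomp.one_add_pow_mul_norm_fourierInv_le
    (hF.1.smul (hηs.comp (S.symm : V →L[ℝ] V).contDiff)) hD z

lemma exists_iterate_inv_comp_le {m q : V → ℂ} (hm : m.HasTemperateGrowth)
    (hq : q.HasTemperateGrowth) {c δ : ℝ} (hc : 0 < c) (hδ : 0 < δ)
    (hmc : ∀ x, c * (1 + ‖x‖) ^ δ ≤ ‖m x‖) (M : ℕ) (η : 𝓢(V, ℂ)) :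
    ∃ (N : ℕ) (K : ℝ), ∀ S : V ≃L[ℝ] V, (∀ x y, inner ℝ (S x) y = inner ℝ x (S y)) →
      ‖(S.symm : V →L[ℝ] V)‖ ≤ 1 → ∀ z, (1 + ‖z‖) ^ M *
        ‖((fourierMultiplierCLM ℂ (fun x => (m x)⁻¹))^[N]
          (fourierMultiplierCLM ℂ q (compCLMOfContinuousLinearEquiv ℂ S η))) z‖ ≤
        K * |LinearMap.det (S : V →ₗ[ℝ] V)|⁻¹ := by
  have hg := hasTemperateGrowth_inv hm hc (le_norm_of_mul_rpow_le hc.le hδ.le hmc)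
  obtain ⟨C', d, hqb⟩ := exists_derivBound_of_hasTemperateGrowth hq M
  obtain ⟨N, hN⟩ := exists_derivBound_pow hg hδ (derivBound_inv_of_mul_rpow_le hc hmc) M
    (Module.finrank ℝ V + 1 + d)
  obtain ⟨K, hK⟩ := hN N le_rfl
  have hgN : (fun x => (m x)⁻¹ ^ N).HasTemperateGrowth := hg.pow N
  have hF := hK.smul hgN.1 hq.1 hqb
  rw [show -((Module.finrank ℝ V : ℝ) + 1 + d) + d = -(Module.finrank ℝ V + 1) by ring] at hF
  obtain ⟨K', hK'⟩ := exists_fourierMultiplierCLM_comp_le (hgN.mul hq) hF (lt_add_one _) η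
  refine ⟨N, K', fun S hS hS1 z => ?_⟩
  rw [fourierMultiplierCLM_iterate hg, fourierMultiplierCLM_fourierMultiplierCLM_apply hgN hq]
  exact hK' S hS hS1 z

/-- The bound is uniform in `S`: it is applied below to dilations `S` that preserve the equation. -/
lemma exists_norm_integral_mul_comp_le {w : V → ℝ} {ν : Measure V} [SFinite ν] {C : ℝ}
    (h : ExcessiveWeight w ν C) {c₀ : ℝ} (hc₀ : 0 < c₀) {M : ℕ}
    (hw : ∀ z, c₀ ≤ (1 + ‖z‖) ^ M * w z) {m q : V → ℂ} (hm : m.HasTemperateGrowth)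
    (hq : q.HasTemperateGrowth) {c δ : ℝ} (hc : 0 < c) (hδ : 0 < δ)
    (hmc : ∀ x, c * (1 + ‖x‖) ^ δ ≤ ‖m x‖) (η : 𝓢(V, ℂ)) :
    ∃ K, ∀ S : V ≃L[ℝ] V, (∀ x y, inner ℝ (S x) y = inner ℝ x (S y)) →
      ‖(S.symm : V →L[ℝ] V)‖ ≤ 1 → ∀ u : V → ℂ, Integrable (fun z => (w z : ℂ) * u z) →
      IsAverageSol (fourierMultiplierCLM ℂ m) ν u →
      ‖∫ z, u z * fourierMultiplierCLM ℂ q (compCLMOfContinuousLinearEquiv ℂ S η) z‖ ≤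
        K * |LinearMap.det (S : V →ₗ[ℝ] V)|⁻¹ * ∫ z, ‖(w z : ℂ) * u z‖ := by
  obtain ⟨N, B, hB⟩ := exists_iterate_inv_comp_le hm hq hc hδ hmc M η
  refine ⟨c₀⁻¹ * B * C ^ N, fun S hS hS1 u hu hs => ?_⟩
  refine (hs.norm_integral_mul_le h hc₀ hw (fourierMultiplierCLM_compSubConstCLM hm)
    (fourierMultiplierCLM_fourierMultiplierCLM_inv hm hc (le_norm_of_mul_rpow_le hc.le hδ.le hmc))
    hu N _ (hB S hS hS1)).trans_eq ?_
  ring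

end Multiplier

section OneSubExp

lemma norm_cexp_neg_le_one {z : ℂ} (hz : 0 ≤ z.re) : ‖Complex.exp (-z)‖ ≤ 1 := by
  rw [Complex.norm_exp]
  exact Real.exp_le_one_iff.2 (by simpa using hz)

lemma norm_one_sub_cexp_neg_le_two {z : ℂ} (hz : 0 ≤ z.re) : ‖1 - Complex.exp (-z)‖ ≤ 2 := by
  calc ‖1 - Complex.exp (-z)‖ ≤ ‖(1 : ℂ)‖ + ‖Complex.exp (-z)‖ := norm_sub_le _ _
    _ ≤ 1 + 1 := by
        rw [norm_one]
        gcongr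
        exact norm_cexp_neg_le_one hz
    _ = 2 := by norm_num

lemma norm_one_sub_cexp_neg_le_norm {z : ℂ} (hz : 0 ≤ z.re) : ‖1 - Complex.exp (-z)‖ ≤ ‖z‖ := by
  have hmv := (convex_halfSpace_re_ge 0).norm_image_sub_le_of_norm_hasDerivWithin_le
    (f := fun z : ℂ => Complex.exp (-z)) (f' := fun z => -Complex.exp (-z)) (C := 1)
    (fun x _ => by simpa using (hasDerivAt_id x).neg.cexp.hasDerivWithinAt)
    (fun x hx => by
      rw [norm_neg]
      exact norm_cexp_neg_le_one hx) (x := z) (y := 0) hz (by simp)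
  simpa using hmv

lemma one_sub_exp_neg_nonneg {x : ℝ} (hx : 0 ≤ x) : 0 ≤ 1 - Real.exp (-x) :=
  sub_nonneg.2 (Real.exp_le_one_iff.2 (neg_nonpos.2 hx))

lemma one_sub_exp_neg_le_min (x : ℝ) : 1 - Real.exp (-x) ≤ min 1 x :=
  le_min (by linarith [Real.exp_pos (-x)]) (by linarith [Real.add_one_le_exp (-x)])

end OneSubExp

section TimeSymbol

variable {α : ℝ}

lemma integrableOn_rpow_mul_min_one (hα0 : 0 < α) (hα1 : α < 1) :
    IntegrableOn (fun σ : ℝ => σ ^ (-(1 + α)) * min 1 σ) (Ioi 0) := by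
  rw [← Ioc_union_Ioi_eq_Ioi zero_le_one]
  refine IntegrableOn.union ?_ ?_
  · have hnear : IntegrableOn (fun σ : ℝ => σ ^ (-α)) (Ioc 0 1) :=
      (intervalIntegrable_iff_integrableOn_Ioc_of_le zero_le_one).1
        (intervalIntegral.intervalIntegrable_rpow' (by linarith))
    refine hnear.congr_fun (fun σ hσ => ?_) measurableSet_Ioc
    rw [min_eq_right hσ.2, ← Real.rpow_add_one hσ.1.ne',
      show -(1 + α) + 1 = -α by ring]
  · refine (integrableOn_Ioi_rpow_of_lt (a := -(1 + α)) (by linarith) zero_lt_one).congr_fun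
      (fun σ hσ => ?_) measurableSet_Ioi
    rw [min_eq_left (le_of_lt hσ), mul_one]

/-- The integrand of `timeSymbol`. -/
noncomputable def timeSymbolIntegrand (α τ σ : ℝ) : ℂ :=
  ((σ ^ (-(1 + α)) : ℝ) : ℂ) * (1 - Complex.exp (-((2 * Real.pi * σ : ℝ) * (1 - Complex.I * τ))))

/-- The Fourier symbol of the exponentially tempered Marchaud derivative, whose kernel is
`exp (-2 * π * σ) * σ ^ (-(1 + α))`. It is proportional to `(1 - i τ) ^ α`; unlike the symbol
`(-i τ) ^ α` of the Marchaud derivative itself, it is smooth. -/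
noncomputable def timeSymbol (α τ : ℝ) : ℂ := ∫ σ in Ioi 0, timeSymbolIntegrand α τ σ

lemma norm_timeSymbolIntegrand_le {τ σ : ℝ} (hσ : 0 < σ) :
    ‖timeSymbolIntegrand α τ σ‖ ≤ (2 * Real.pi * (1 + |τ|)) * (σ ^ (-(1 + α)) * min 1 σ) := by
  have hpow := Real.rpow_nonneg hσ.le (-(1 + α))
  set z : ℂ := (2 * Real.pi * σ : ℝ) * (1 - Complex.I * τ) with hz
  have hre : 0 ≤ z.re := by
    simp only [hz, Complex.re_ofReal_mul, Complex.sub_re, Complex.one_re, Complex.I_mul_re,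
      Complex.ofReal_im, neg_zero, sub_zero, mul_one]
    positivity
  have hnorm : ‖z‖ ≤ 2 * Real.pi * (1 + |τ|) * σ := by
    rw [hz, norm_mul, Complex.norm_real, Real.norm_of_nonneg (by positivity), mul_right_comm]
    gcongr
    exact (norm_sub_le _ _).trans (by simp)
  have hexp : ‖1 - Complex.exp (-z)‖ ≤ 2 * Real.pi * (1 + |τ|) * min 1 σ := by
    rw [mul_min_of_nonneg _ _ (by positivity), mul_one]
    refine le_min ((norm_one_sub_cexp_neg_le_two hre).trans ?_)
      ((norm_one_sub_cexp_neg_le_norm hre).trans hnorm)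
    nlinarith [Real.pi_gt_three, abs_nonneg τ]
  calc ‖timeSymbolIntegrand α τ σ‖ = σ ^ (-(1 + α)) * ‖1 - Complex.exp (-z)‖ := by
        rw [timeSymbolIntegrand, norm_mul, Complex.norm_real, Real.norm_of_nonneg hpow]
    _ ≤ σ ^ (-(1 + α)) * (2 * Real.pi * (1 + |τ|) * min 1 σ) := by gcongr
    _ = _ := by ring

lemma measurable_timeSymbolIntegrand :
    Measurable (fun p : ℝ × ℝ => timeSymbolIntegrand α p.1 p.2) := by
  unfold timeSymbolIntegrand
  fun_prop

lemma integrableOn_timeSymbolIntegrand (hα0 : 0 < α) (hα1 : α < 1) (τ : ℝ) :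
    IntegrableOn (timeSymbolIntegrand α τ) (Ioi 0) := by
  refine Integrable.mono'
    ((integrableOn_rpow_mul_min_one hα0 hα1).const_mul (2 * Real.pi * (1 + |τ|)))
    (measurable_timeSymbolIntegrand.comp measurable_prodMk_left).aestronglyMeasurable ?_
  filter_upwards [ae_restrict_mem measurableSet_Ioi] with σ hσ
  exact norm_timeSymbolIntegrand_le hσ

lemma integral_norm_timeSymbolIntegrand_le (hα0 : 0 < α) (hα1 : α < 1) (τ : ℝ) :
    ∫ σ in Ioi 0, ‖timeSymbolIntegrand α τ σ‖ ≤
      (2 * Real.pi * ∫ σ in Ioi (0 : ℝ), σ ^ (-(1 + α)) * min 1 σ) * (1 + |τ|) := by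
  calc ∫ σ in Ioi 0, ‖timeSymbolIntegrand α τ σ‖
      ≤ ∫ σ in Ioi 0, (2 * Real.pi * (1 + |τ|)) * (σ ^ (-(1 + α)) * min 1 σ) :=
        setIntegral_mono_on (integrableOn_timeSymbolIntegrand hα0 hα1 τ).norm
          ((integrableOn_rpow_mul_min_one hα0 hα1).const_mul _) measurableSet_Ioi
          fun σ hσ => norm_timeSymbolIntegrand_le hσ
    _ = _ := by
        rw [integral_const_mul]
        ring

lemma hasTemperateGrowth_fourier_of_integrable_pow {h : ℝ → ℂ}
    (hh : ∀ n : ℕ, Integrable (fun v => ‖v‖ ^ n * ‖h v‖)) (hm : AEStronglyMeasurable h) :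
    (𝓕 h).HasTemperateGrowth := by
  refine ⟨Real.contDiff_fourier (N := ⊤) (fun n _ => hh n), fun n => ?_⟩
  refine ⟨0, ∫ v : ℝ, ‖((-2 * Real.pi * Complex.I * (v : ℂ)) ^ n • h v)‖, fun x => ?_⟩
  have hpow : ∀ k : ℕ, (k : ℕ∞) ≤ ⊤ → Integrable (fun v : ℝ => v ^ k • h v) := fun k _ => by
    refine (hh k).mono
      ((by fun_prop : Measurable fun x : ℝ => x ^ k).aestronglyMeasurable.smul hm) ?_
    filter_upwards with v
    simp
  rw [pow_zero, mul_one, norm_iteratedFDeriv_eq_norm_iteratedDeriv,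
    Real.iteratedDeriv_fourier hpow le_top, Real.fourier_eq]
  refine (norm_integral_le_integral_norm _).trans_eq ?_
  simp only [Circle.norm_smul]

/-- Up to a constant, the inverse Fourier transform of the derivative of `timeSymbol α`. -/
noncomputable def timeDensity (α : ℝ) : ℝ → ℂ :=
  (Ioi 0).indicator fun σ => ((σ ^ (-α) * Real.exp (-(2 * Real.pi) * σ) : ℝ) : ℂ)

lemma measurable_timeDensity : Measurable (timeDensity α) :=
  Measurable.indicator (by fun_prop) measurableSet_Ioi

lemma integrableOn_pow_mul_rpow_mul_exp (hα1 : α < 1) (n : ℕ) :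
    IntegrableOn (fun σ : ℝ => σ ^ n * (σ ^ (-α) * Real.exp (-(2 * Real.pi) * σ))) (Ioi 0) := by
  have hgamma := integrableOn_rpow_mul_exp_neg_mul_rpow (s := n - α) (p := 1) (b := 2 * Real.pi)
    (by linarith [n.cast_nonneg (α := ℝ)]) one_pos (by positivity)
  refine hgamma.congr_fun (fun σ hσ => ?_) measurableSet_Ioi
  dsimp only
  rw [Real.rpow_one, ← mul_assoc, sub_eq_add_neg, Real.rpow_add hσ, Real.rpow_natCast]

lemma integrable_pow_mul_norm_timeDensity (hα1 : α < 1) (n : ℕ) :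
    Integrable (fun v => ‖v‖ ^ n * ‖timeDensity α v‖) := by
  refine ((integrable_indicator_iff measurableSet_Ioi).2
    (integrableOn_pow_mul_rpow_mul_exp hα1 n)).congr ?_
  filter_upwards with σ
  by_cases hσ : σ ∈ Ioi (0 : ℝ)
  · have hσ0 : 0 < σ := hσ
    simp only [timeDensity, indicator_of_mem hσ, Complex.norm_real]
    rw [Real.norm_of_nonneg hσ0.le, Real.norm_of_nonneg (by positivity)]
  · simp [timeDensity, indicator_of_notMem hσ]

/-- The derivative in `τ` of `timeSymbolIntegrand α τ σ`. -/
noncomputable def timeSymbolIntegrandDeriv (α τ σ : ℝ) : ℂ :=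
  -(2 * Real.pi * Complex.I) * (((σ ^ (-α) : ℝ) : ℂ) *
    Complex.exp (-((2 * Real.pi * σ : ℝ) * (1 - Complex.I * τ))))

lemma hasDerivAt_timeSymbolIntegrand {τ σ : ℝ} (hσ : 0 < σ) :
    HasDerivAt (fun τ => timeSymbolIntegrand α τ σ) (timeSymbolIntegrandDeriv α τ σ) τ := by
  have hexponent : HasDerivAt (fun x : ℝ => -(((2 * Real.pi * σ : ℝ) : ℂ) * (1 - Complex.I * x)))
      (((2 * Real.pi * σ : ℝ) : ℂ) * Complex.I) τ :=
    ((((Complex.ofRealCLM.hasDerivAt (x := τ)).const_mul Complex.I).const_sub 1).const_mul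
      (((2 * Real.pi * σ : ℝ) : ℂ)) |>.neg).congr_deriv (by simp)
  refine ((hexponent.cexp.const_sub 1).const_mul ((σ ^ (-(1 + α)) : ℝ) : ℂ)).congr_deriv ?_
  have hpow : σ ^ (-α) = σ ^ (-(1 + α)) * σ := by
    rw [← Real.rpow_add_one hσ.ne']
    congr 1
    ring
  rw [timeSymbolIntegrandDeriv, hpow]
  push_cast
  ring

lemma norm_timeSymbolIntegrandDeriv {τ σ : ℝ} (hσ : 0 < σ) :
    ‖timeSymbolIntegrandDeriv α τ σ‖ =
      2 * Real.pi * (σ ^ (-α) * Real.exp (-(2 * Real.pi) * σ)) := by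
  rw [timeSymbolIntegrandDeriv, norm_mul, norm_mul _ (Complex.exp _), Complex.norm_real,
    Complex.norm_exp, Real.norm_of_nonneg (by positivity)]
  simp [abs_of_pos Real.pi_pos]

lemma integral_timeSymbolIntegrandDeriv (τ : ℝ) :
    ∫ σ in Ioi 0, timeSymbolIntegrandDeriv α τ σ =
      -(2 * Real.pi * Complex.I) * 𝓕 (timeDensity α) (-τ) := by
  simp only [timeSymbolIntegrandDeriv]
  rw [integral_const_mul, Real.fourier_eq, ← integral_indicator measurableSet_Ioi]
  congr 2 with σ
  by_cases hσ : σ ∈ Ioi (0 : ℝ)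
  · simp only [timeDensity, indicator_of_mem hσ, Circle.smul_def, smul_eq_mul,
      Real.fourierChar_apply]
    push_cast
    rw [mul_left_comm, ← Complex.exp_add]
    congr 2
    simp only [RCLike.inner_apply, conj_trivial, Complex.ofReal_mul, Complex.ofReal_neg]
    ring
  · simp [timeDensity, indicator_of_notMem hσ]

lemma hasDerivAt_timeSymbol (hα0 : 0 < α) (hα1 : α < 1) (τ : ℝ) :
    HasDerivAt (timeSymbol α) (-(2 * Real.pi * Complex.I) * 𝓕 (timeDensity α) (-τ)) τ := by
  have hdiff := hasDerivAt_integral_of_dominated_loc_of_deriv_le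
    (μ := volume.restrict (Ioi (0 : ℝ))) (F := timeSymbolIntegrand α) (x₀ := τ) (s := univ)
    (F' := timeSymbolIntegrandDeriv α)
    (bound := fun σ => 2 * Real.pi * (σ ^ (-α) * Real.exp (-(2 * Real.pi) * σ))) Filter.univ_mem
    (Filter.Eventually.of_forall fun x =>
      (measurable_timeSymbolIntegrand.comp measurable_prodMk_left).aestronglyMeasurable)
    (integrableOn_timeSymbolIntegrand hα0 hα1 τ)
    (by unfold timeSymbolIntegrandDeriv; fun_prop) ?_ ?_ ?_
  · exact hdiff.2.congr_deriv (integral_timeSymbolIntegrandDeriv τ)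
  · filter_upwards [ae_restrict_mem measurableSet_Ioi] with σ hσ x _
    exact (norm_timeSymbolIntegrandDeriv hσ).le
  · simpa using (integrableOn_pow_mul_rpow_mul_exp hα1 0).const_mul (2 * Real.pi)
  · filter_upwards [ae_restrict_mem measurableSet_Ioi] with σ hσ x _
    exact hasDerivAt_timeSymbolIntegrand hσ

lemma hasTemperateGrowth_timeSymbol (hα0 : 0 < α) (hα1 : α < 1) :
    (timeSymbol α).HasTemperateGrowth := by
  have hfd : fderiv ℝ (timeSymbol α) = fun τ => ContinuousLinearMap.toSpanSingleton ℝ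
      (-(2 * Real.pi * Complex.I) * 𝓕 (timeDensity α) (-τ)) :=
    funext fun τ => (hasDerivAt_timeSymbol hα0 hα1 τ).hasFDerivAt.fderiv
  have hfourier : (fun τ : ℝ => 𝓕 (timeDensity α) (-τ)).HasTemperateGrowth :=
    (hasTemperateGrowth_fourier_of_integrable_pow (integrable_pow_mul_norm_timeDensity hα1)
      measurable_timeDensity.aestronglyMeasurable).comp (f := fun τ : ℝ => -τ) (by fun_prop)
  refine Function.HasTemperateGrowth.of_fderiv (k := 1)
    (C := 2 * Real.pi * ∫ σ in Ioi (0 : ℝ), σ ^ (-(1 + α)) * min 1 σ) ?_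
    (fun τ => (hasDerivAt_timeSymbol hα0 hα1 τ).differentiableAt) (fun τ => ?_)
  · rw [hfd]
    exact ((ContinuousLinearMap.toSpanSingletonCLE (𝕜 := ℝ) (E := ℂ) :
      ℂ →L[ℝ] (ℝ →L[ℝ] ℂ)).hasTemperateGrowth).comp
        ((Function.HasTemperateGrowth.const _).mul hfourier)
  · rw [pow_one]
    exact (norm_integral_le_integral_norm _).trans (integral_norm_timeSymbolIntegrand_le hα0 hα1 τ)

lemma timeSymbolIntegrand_re {τ σ : ℝ} :
    (timeSymbolIntegrand α τ σ).re = σ ^ (-(1 + α)) *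
      (1 - Real.exp (-(2 * Real.pi * σ)) * Real.cos (2 * Real.pi * σ * τ)) := by
  rw [timeSymbolIntegrand, Complex.re_ofReal_mul, Complex.sub_re, Complex.exp_re]
  simp

lemma timeSymbolIntegrand_re_nonneg {τ σ : ℝ} (hσ : 0 ≤ σ) :
    0 ≤ (timeSymbolIntegrand α τ σ).re := by
  rw [timeSymbolIntegrand_re]
  have hexp : Real.exp (-(2 * Real.pi * σ)) ≤ 1 :=
    Real.exp_le_one_iff.2 (neg_nonpos.2 (by positivity))
  refine mul_nonneg (by positivity) (sub_nonneg.2 ?_)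
  nlinarith [Real.cos_le_one (2 * Real.pi * σ * τ), Real.exp_pos (-(2 * Real.pi * σ))]

/-- Either `1 ≤ |τ|` and the phase `2 * π * σ * τ` makes the cosine nonpositive, or `|τ| ≤ 1` and
the exponential is small. -/
lemma one_sub_exp_le_one_sub_exp_mul_cos {τ σ : ℝ} (hσ : 1 ≤ σ * (4 * max |τ| 1))
    (hσ' : σ * (2 * max |τ| 1) ≤ 1) :
    1 - Real.exp (-(Real.pi / 2)) ≤
      1 - Real.exp (-(2 * Real.pi * σ)) * Real.cos (2 * Real.pi * σ * τ) := by
  have hσ0 : 0 < σ := pos_of_mul_pos_left (one_pos.trans_le hσ) (by positivity)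
  rcases le_total 1 |τ| with h | h
  · rw [max_eq_left h] at hσ hσ'
    have hcos : Real.cos (2 * Real.pi * σ * τ) ≤ 0 := by
      rw [← Real.cos_abs, abs_mul, abs_of_pos (by positivity : 0 < 2 * Real.pi * σ)]
      exact Real.cos_nonpos_of_pi_div_two_le_of_le (by nlinarith [Real.pi_pos])
        (by nlinarith [Real.pi_pos])
    nlinarith [Real.exp_pos (-(2 * Real.pi * σ)), Real.exp_pos (-(Real.pi / 2))]
  · rw [max_eq_right h] at hσ
    have hexp : Real.exp (-(2 * Real.pi * σ)) ≤ Real.exp (-(Real.pi / 2)) :=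
      Real.exp_le_exp.2 (by nlinarith [Real.pi_pos])
    nlinarith [Real.cos_le_one (2 * Real.pi * σ * τ), Real.exp_pos (-(2 * Real.pi * σ))]

lemma mul_rpow_le_timeSymbolIntegrand_re (hα0 : 0 < α) {τ σ : ℝ}
    (hσ : 1 ≤ σ * (4 * max |τ| 1)) (hσ' : σ * (2 * max |τ| 1) ≤ 1) :
    (1 - Real.exp (-(Real.pi / 2))) * (2 * max |τ| 1) ^ (1 + α) ≤
      (timeSymbolIntegrand α τ σ).re := by
  have hσ0 : 0 < σ := pos_of_mul_pos_left (one_pos.trans_le hσ) (by positivity)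
  have hk : 0 ≤ 1 - Real.exp (-(Real.pi / 2)) :=
    sub_nonneg.2 (Real.exp_le_one_iff.2 (by linarith [Real.pi_pos]))
  rw [timeSymbolIntegrand_re, mul_comm]
  refine mul_le_mul ?_ (one_sub_exp_le_one_sub_exp_mul_cos hσ hσ') hk (by positivity)
  rw [Real.rpow_neg hσ0.le, ← Real.inv_rpow hσ0.le]
  refine Real.rpow_le_rpow (by positivity) ?_ (by linarith)
  rwa [le_inv_comm₀ (by positivity) hσ0, inv_eq_one_div, le_div_iff₀ (by positivity)]

lemma mul_volume_le_setIntegral {X : Type*} [MeasureSpace X] {f : X → ℝ} {s t : Set X} {a : ℝ}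
    (hf : IntegrableOn f t) (hf0 : ∀ x ∈ t, 0 ≤ f x) (hs : MeasurableSet s) (ht : MeasurableSet t)
    (hst : s ⊆ t) (hs' : volume s ≠ ⊤) (ha : ∀ x ∈ s, a ≤ f x) :
    a * volume.real s ≤ ∫ x in t, f x := by
  calc a * volume.real s = ∫ _ in s, a := by rw [setIntegral_const, smul_eq_mul, mul_comm]
    _ ≤ ∫ x in s, f x := setIntegral_mono_on (integrableOn_const hs') (hf.mono_set hst) hs ha
    _ ≤ ∫ x in t, f x := setIntegral_mono_set hf
        ((ae_restrict_iff' ht).2 (Filter.Eventually.of_forall hf0)) hst.eventuallyLE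

lemma exists_mul_rpow_le_timeSymbol_re (hα0 : 0 < α) (hα1 : α < 1) :
    ∃ c, 0 < c ∧ ∀ τ, c * (1 + |τ|) ^ α ≤ (timeSymbol α τ).re := by
  set k : ℝ := 1 - Real.exp (-(Real.pi / 2))
  have hk0 : 0 < k := sub_pos.2 (Real.exp_lt_one_iff.2 (by linarith [Real.pi_pos]))
  refine ⟨k / 2, by positivity, fun τ => ?_⟩
  set T : ℝ := max |τ| 1
  have hT0 : 0 < T := one_pos.trans_le (le_max_right _ _)
  have hint := integrableOn_timeSymbolIntegrand hα0 hα1 τ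
  have hle : 1 / (4 * T) ≤ 1 / (2 * T) := by
    gcongr
    norm_num
  have hlower := mul_volume_le_setIntegral (a := k * (2 * T) ^ (1 + α)) hint.re
    (fun σ hσ => timeSymbolIntegrand_re_nonneg (le_of_lt hσ)) measurableSet_Icc measurableSet_Ioi
    (fun σ hσ => lt_of_lt_of_le (by positivity) hσ.1) measure_Icc_lt_top.ne
    (fun σ (hσ : σ ∈ Icc (1 / (4 * T)) (1 / (2 * T))) => mul_rpow_le_timeSymbolIntegrand_re hα0
      ((div_le_iff₀ (by positivity)).1 hσ.1) ((le_div_iff₀ (by positivity)).1 hσ.2))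
  calc k / 2 * (1 + |τ|) ^ α ≤ k / 2 * (2 * T) ^ α := by
        gcongr
        linarith [le_max_left |τ| 1, le_max_right |τ| 1]
    _ = k * (2 * T) ^ (1 + α) * volume.real (Icc (1 / (4 * T)) (1 / (2 * T))) := by
        rw [Real.volume_real_Icc_of_le hle, add_comm 1 α, Real.rpow_add_one (by positivity)]
        field_simp
        norm_num
    _ ≤ ∫ σ in Ioi 0, (timeSymbolIntegrand α τ σ).re := hlower
    _ = (timeSymbol α τ).re := integral_re hint

end TimeSymbol

section MultiplierKernel

variable {V : Type*} [NormedAddCommGroup V] [InnerProductSpace ℝ V]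

lemma continuous_fourierChar_inner (z : V) :
    Continuous fun ζ : V => (Real.fourierChar (inner ℝ ζ z) : ℂ) := by
  have := Real.continuous_fourierChar
  fun_prop

variable [FiniteDimensional ℝ V] [MeasurableSpace V] [BorelSpace V]

lemma integrable_one_add_norm_pow_mul_schwartz (φ : 𝓢(V, ℂ)) (k : ℕ) :
    Integrable (fun ζ => (1 + ‖ζ‖) ^ k * ‖φ ζ‖) := by
  have hdom := ((φ.integrable_pow_mul volume 0).add (φ.integrable_pow_mul volume k)).const_mul
    (2 ^ (k - 1))
  refine hdom.mono' (by fun_prop) (.of_forall fun ζ => ?_)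
  rw [Real.norm_of_nonneg (by positivity), Pi.add_apply, pow_zero, ← add_mul, ← mul_assoc]
  gcongr
  simpa only [one_pow] using add_pow_le zero_le_one (norm_nonneg ζ) k

lemma integrable_schwartz_mul_char (ψ : 𝓢(V, ℂ)) (z : V) :
    Integrable fun ζ => (Real.fourierChar (inner ℝ ζ z) : ℂ) * ψ ζ :=
  ψ.integrable.bdd_mul (c := 1) (continuous_fourierChar_inner z).aestronglyMeasurable
    (.of_forall fun _ => (Circle.norm_coe _).le)

lemma fourierInv_sum_char_mul_fourier {ι : Type*} [Fintype ι] (φ : 𝓢(V, ℂ)) (z : V) (c : ι → ℂ)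
    (v : ι → V) :
    𝓕⁻ (fun ζ => (∑ i, c i * (Real.fourierChar (inner ℝ ζ (v i)) : ℂ)) * 𝓕 (φ : V → ℂ) ζ) z =
      ∑ i, c i * φ (z + v i) := by
  have hinv : ∀ x, ∫ ζ, (Real.fourierChar (inner ℝ ζ x) : ℂ) * 𝓕 φ ζ = φ x := fun x => by
    rw [← DFunLike.congr_fun (FourierTransform.fourierInv_fourier_eq (F := 𝓢(V, ℂ)) φ) x,
      SchwartzMap.fourierInv_coe, Real.fourierInv_eq]
    simp only [Circle.smul_def, smul_eq_mul]
  simp only [← hinv, ← integral_const_mul]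
  rw [← integral_finsetSum _ fun i _ => (integrable_schwartz_mul_char (𝓕 φ) _).const_mul (c i),
    Real.fourierInv_eq]
  congr 1 with ζ
  simp only [SchwartzMap.fourier_coe, Circle.smul_def, smul_eq_mul, Finset.sum_mul, Finset.mul_sum,
    inner_add_right, AddChar.map_add_eq_mul, Circle.coe_mul]
  exact Finset.sum_congr rfl fun i _ => by ring

variable {Q : Type*} [MeasurableSpace Q] {μ : Measure Q} [SFinite μ] {G : Q → V → ℂ} {K : ℝ} {k : ℕ}

lemma integrable_char_mul_kernel_mul_schwartz (hG : Measurable (Function.uncurry G))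
    (hGi : ∀ ζ, Integrable (fun q => G q ζ) μ) (hGn : ∀ ζ, ∫ q, ‖G q ζ‖ ∂μ ≤ K * (1 + ‖ζ‖) ^ k)
    (ψ : 𝓢(V, ℂ)) (z : V) :
    Integrable (fun p : V × Q => (Real.fourierChar (inner ℝ p.1 z) : ℂ) * (G p.2 p.1 * ψ p.1))
      (volume.prod μ) := by
  have hmeas : Measurable fun p : V × Q =>
      (Real.fourierChar (inner ℝ p.1 z) : ℂ) * (G p.2 p.1 * ψ p.1) :=
    ((continuous_fourierChar_inner z).measurable.comp measurable_fst).mul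
      ((hG.comp measurable_swap).mul (ψ.continuous.measurable.comp measurable_fst))
  rw [integrable_prod_iff hmeas.aestronglyMeasurable]
  refine ⟨.of_forall fun ζ => ((hGi ζ).mul_const (ψ ζ)).const_mul
    (Real.fourierChar (inner ℝ ζ z) : ℂ),
    ((integrable_one_add_norm_pow_mul_schwartz ψ k).const_mul K).mono'
      hmeas.aestronglyMeasurable.norm.integral_prod_right' (.of_forall fun ζ => ?_)⟩
  simp only [norm_mul, Circle.norm_coe, one_mul]
  rw [integral_mul_const, Real.norm_of_nonneg (by positivity), ← mul_assoc]
  gcongr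
  exact hGn ζ

lemma integrable_fourierInv_kernel_mul (hG : Measurable (Function.uncurry G))
    (hGi : ∀ ζ, Integrable (fun q => G q ζ) μ) (hGn : ∀ ζ, ∫ q, ‖G q ζ‖ ∂μ ≤ K * (1 + ‖ζ‖) ^ k)
    (φ : 𝓢(V, ℂ)) (z : V) :
    Integrable (fun q => 𝓕⁻ (fun ζ => G q ζ * 𝓕 (φ : V → ℂ) ζ) z) μ := by
  simp only [Real.fourierInv_eq, Circle.smul_def, smul_eq_mul, ← SchwartzMap.fourier_coe]
  exact (integrable_char_mul_kernel_mul_schwartz hG hGi hGn (𝓕 φ) z).integral_prod_right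

lemma integral_fourierInv_kernel_mul (hG : Measurable (Function.uncurry G))
    (hGi : ∀ ζ, Integrable (fun q => G q ζ) μ) (hGn : ∀ ζ, ∫ q, ‖G q ζ‖ ∂μ ≤ K * (1 + ‖ζ‖) ^ k)
    (hm : (fun ζ => ∫ q, G q ζ ∂μ).HasTemperateGrowth) (φ : 𝓢(V, ℂ)) (z : V) :
    ∫ q, 𝓕⁻ (fun ζ => G q ζ * 𝓕 (φ : V → ℂ) ζ) z ∂μ =
      SchwartzMap.fourierMultiplierCLM ℂ (fun ζ => ∫ q, G q ζ ∂μ) φ z := by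
  rw [fourierMultiplierCLM_eq_fourierInv hm]
  simp only [Real.fourierInv_eq, Circle.smul_def, smul_eq_mul, ← SchwartzMap.fourier_coe]
  rw [integral_integral_swap
    (f := fun q ζ => (Real.fourierChar (inner ℝ ζ z) : ℂ) * (G q ζ * 𝓕 φ ζ))
    (integrable_char_mul_kernel_mul_schwartz hG hGi hGn (𝓕 φ) z).swap]
  simp only [integral_const_mul, integral_mul_const]

end MultiplierKernel

lemma integrable_smul_schwartz_comp {X V E : Type*} [MeasurableSpace X] [TopologicalSpace X]
    [OpensMeasurableSpace X] [SecondCountableTopology X] {μ : Measure X} [NormedAddCommGroup V]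
    [NormedSpace ℝ V] [NormedAddCommGroup E] [NormedSpace ℝ E] {k : X → ℝ} (hk : Integrable k μ)
    (φ : 𝓢(V, E)) {g : X → V} (hg : Continuous g) : Integrable (fun x => k x • φ (g x)) μ :=
  hk.smul_bdd (SchwartzMap.seminorm ℝ 0 0 φ) (φ.continuous.comp hg).aestronglyMeasurable
    (.of_forall fun _ => φ.norm_le_seminorm ℝ _)

lemma integrable_schwartz_comp {X V E : Type*} [MeasurableSpace X] [TopologicalSpace X]
    [OpensMeasurableSpace X] [SecondCountableTopology X] (μ : Measure X) [IsFiniteMeasure μ]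
    [NormedAddCommGroup V] [NormedSpace ℝ V] [NormedAddCommGroup E] [NormedSpace ℝ E] (φ : 𝓢(V, E))
    {g : X → V} (hg : Continuous g) : Integrable (fun x => φ (g x)) μ := by
  simpa only [one_smul] using integrable_smul_schwartz_comp (integrable_const (μ := μ) (1 : ℝ)) φ hg

section SpaceSymbol

variable {s : ℝ}

lemma integrableOn_rpow_mul_one_sub_exp (hs0 : 0 < s) (hs1 : s < 1) {l : ℝ} (hl : 0 < l) :
    IntegrableOn (fun a : ℝ => a ^ (s - 1) * (1 - Real.exp (-(l / a)))) (Ioi 0) := by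
  have hmeas : Measurable (fun a : ℝ => a ^ (s - 1) * (1 - Real.exp (-(l / a)))) := by fun_prop
  have hle : ∀ a : ℝ, 0 < a →
      ‖a ^ (s - 1) * (1 - Real.exp (-(l / a)))‖ ≤ a ^ (s - 1) * min 1 (l / a) := fun a ha => by
    rw [Real.norm_of_nonneg (mul_nonneg (by positivity) (one_sub_exp_neg_nonneg (by positivity)))]
    gcongr
    exact one_sub_exp_neg_le_min _
  rw [← Ioc_union_Ioi_eq_Ioi zero_le_one]
  refine IntegrableOn.union ?_ ?_
  · have hnear : IntegrableOn (fun a : ℝ => a ^ (s - 1)) (Ioc 0 1) :=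
      (intervalIntegrable_iff_integrableOn_Ioc_of_le zero_le_one).1
        (intervalIntegral.intervalIntegrable_rpow' (by linarith))
    refine Integrable.mono' hnear hmeas.aestronglyMeasurable ?_
    filter_upwards [ae_restrict_mem measurableSet_Ioc] with a ha
    exact (hle a ha.1).trans
      (mul_le_of_le_one_right (Real.rpow_nonneg ha.1.le _) (min_le_left _ _))
  · have hfar : IntegrableOn (fun a : ℝ => a ^ (s - 2)) (Ioi 1) :=
      integrableOn_Ioi_rpow_of_lt (by linarith) one_pos
    refine Integrable.mono' (hfar.const_mul l) hmeas.aestronglyMeasurable ?_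
    filter_upwards [ae_restrict_mem measurableSet_Ioi] with a ha
    have ha0 : 0 < a := one_pos.trans ha
    calc ‖a ^ (s - 1) * (1 - Real.exp (-(l / a)))‖ ≤ a ^ (s - 1) * (l / a) :=
          (hle a ha0).trans (by gcongr; exact min_le_right _ _)
      _ = l * a ^ (s - 2) := by
          rw [show s - 1 = s - 2 + 1 by ring, Real.rpow_add_one ha0.ne']
          field_simp

/-- The constant `∫₀^∞ a^(s-1) (1 - e^(-1/a)) da`, through which `l ^ s` is subordinated to
exponentials. -/
noncomputable def subordinationConst (s : ℝ) : ℝ :=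
  ∫ a in Ioi (0 : ℝ), a ^ (s - 1) * (1 - Real.exp (-(1 / a)))

lemma subordinationConst_pos (hs0 : 0 < s) (hs1 : s < 1) : 0 < subordinationConst s := by
  have hpos : ∀ a ∈ Ioi (0 : ℝ), 0 < a ^ (s - 1) * (1 - Real.exp (-(1 / a))) :=
    fun a (ha : 0 < a) => mul_pos (by positivity)
      (sub_pos.2 (Real.exp_lt_one_iff.2 (neg_neg_of_pos (by positivity))))
  rw [subordinationConst, setIntegral_pos_iff_support_of_nonneg_ae]
  · rw [inter_eq_right.2 fun a ha => Function.mem_support.2 (hpos a ha).ne', Real.volume_Ioi]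
    exact ENNReal.zero_lt_top
  · filter_upwards [ae_restrict_mem measurableSet_Ioi] with a ha using (hpos a ha).le
  · exact integrableOn_rpow_mul_one_sub_exp hs0 hs1 one_pos

lemma integral_rpow_mul_one_sub_exp {l : ℝ} (hl : 0 < l) :
    ∫ a in Ioi (0 : ℝ), a ^ (s - 1) * (1 - Real.exp (-(l / a))) =
      l ^ s * subordinationConst s := by
  have hscale := integral_comp_mul_left_Ioi
    (fun a : ℝ => a ^ (s - 1) * (1 - Real.exp (-(l / a)))) 0 hl
  rw [mul_zero, smul_eq_mul, eq_inv_mul_iff_mul_eq₀ hl.ne'] at hscale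
  rw [← hscale, subordinationConst, ← integral_const_mul, ← integral_const_mul]
  refine setIntegral_congr_fun measurableSet_Ioi fun a (ha : 0 < a) => ?_
  have hl_pow : l ^ s = l ^ (s - 1) * l := by
    rw [← Real.rpow_add_one hl.ne', sub_add_cancel]
  simp only [div_mul_cancel_left₀ hl.ne', one_div, hl_pow, Real.mul_rpow hl.le ha.le]
  ring

lemma integrableOn_rpow_mul_exp_neg_mul {p r : ℝ} (hp : 0 < p) (hr : 0 < r) :
    IntegrableOn (fun a : ℝ => a ^ (p - 1) * Real.exp (-(r * a))) (Ioi 0) := by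
  simpa only [Real.rpow_one, neg_mul] using
    integrableOn_rpow_mul_exp_neg_mul_rpow (s := p - 1) (by linarith) one_pos hr

section Gaussian

variable {F : Type*} [NormedAddCommGroup F] [InnerProductSpace ℝ F]

lemma gaussian_mul_cos_eq_re (a : ℝ) (ξ y : F) :
    Real.exp (-(a * ‖y‖ ^ 2)) * Real.cos (2 * Real.pi * inner ℝ ξ y) =
      (Complex.exp (-(a : ℂ) * ‖y‖ ^ 2 + 2 * Real.pi * Complex.I * (inner ℝ ξ y : ℝ))).re := by
  have hexp : -(a : ℂ) * ‖y‖ ^ 2 + 2 * Real.pi * Complex.I * (inner ℝ ξ y : ℝ) =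
      ((-(a * ‖y‖ ^ 2) : ℝ) : ℂ) + ((2 * Real.pi * inner ℝ ξ y : ℝ) : ℂ) * Complex.I := by
    push_cast
    ring
  rw [hexp, Complex.exp_add, Complex.exp_mul_I, ← Complex.ofReal_exp, Complex.re_ofReal_mul,
    ← Complex.ofReal_cos, ← Complex.ofReal_sin, Complex.add_re, Complex.ofReal_re,
    Complex.re_ofReal_mul, Complex.I_re, mul_zero, add_zero]

variable [FiniteDimensional ℝ F] [MeasurableSpace F] [BorelSpace F]

lemma integrable_gaussian_mul_cos {a : ℝ} (ha : 0 < a) (ξ : F) :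
    Integrable fun y : F => Real.exp (-(a * ‖y‖ ^ 2)) * Real.cos (2 * Real.pi * inner ℝ ξ y) := by
  simp only [gaussian_mul_cos_eq_re]
  exact (GaussianFourier.integrable_cexp_neg_mul_sq_norm_add
    (by rwa [Complex.ofReal_re]) (2 * Real.pi * Complex.I) ξ).re

lemma integral_gaussian_mul_cos {a : ℝ} (ha : 0 < a) (ξ : F) :
    ∫ y : F, Real.exp (-(a * ‖y‖ ^ 2)) * Real.cos (2 * Real.pi * inner ℝ ξ y) =
      (Real.pi / a) ^ (Module.finrank ℝ F / 2 : ℝ) * Real.exp (-(Real.pi ^ 2 * ‖ξ‖ ^ 2 / a)) := by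
  have hre : 0 < (a : ℂ).re := by rwa [Complex.ofReal_re]
  have hcast : ((Real.pi : ℂ) / a) ^ (Module.finrank ℝ F / 2 : ℂ) *
      Complex.exp ((2 * Real.pi * Complex.I) ^ 2 * ‖ξ‖ ^ 2 / (4 * a)) =
      (((Real.pi / a) ^ (Module.finrank ℝ F / 2 : ℝ) *
        Real.exp (-(Real.pi ^ 2 * ‖ξ‖ ^ 2 / a)) : ℝ) : ℂ) := by
    rw [Complex.ofReal_mul, Complex.ofReal_cpow (by positivity)]
    push_cast
    rw [mul_pow, Complex.I_sq]
    field_simp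
    ring_nf
  simp only [gaussian_mul_cos_eq_re]
  rw [← Complex.ofReal_re ((Real.pi / a) ^ (Module.finrank ℝ F / 2 : ℝ) * _), ← hcast,
    ← GaussianFourier.integral_cexp_neg_mul_sq_norm_add hre (2 * Real.pi * Complex.I) ξ]
  exact integral_re (GaussianFourier.integrable_cexp_neg_mul_sq_norm_add hre _ ξ)

end Gaussian

section Density

variable {F : Type*} [NormedAddCommGroup F] [InnerProductSpace ℝ F]

/-- For `p = (a, y)`, the Gaussian weight whose integral over `a > 0` is
`Γ(d/2 + s) ‖y‖^(-d-2s)` with `d = dim F`, a multiple of the kernel of the fractional Laplacian. -/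
noncomputable def spaceDensity (s : ℝ) (p : ℝ × F) : ℝ :=
  p.1 ^ (Module.finrank ℝ F / 2 + s - 1) * Real.exp (-(p.1 * ‖p.2‖ ^ 2))

lemma spaceDensity_nonneg {p : ℝ × F} (hp : 0 < p.1) : 0 ≤ spaceDensity s p := by
  unfold spaceDensity
  positivity

lemma integrableOn_spaceDensity (hs0 : 0 < s) {y : F} (hy : y ≠ 0) :
    IntegrableOn (fun a : ℝ => spaceDensity s (a, y)) (Ioi 0) := by
  simpa only [spaceDensity, mul_comm _ (‖y‖ ^ 2)] using integrableOn_rpow_mul_exp_neg_mul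
    (p := Module.finrank ℝ F / 2 + s) (by positivity) (r := ‖y‖ ^ 2) (by positivity)

lemma integral_spaceDensity (hs0 : 0 < s) {y : F} (hy : y ≠ 0) :
    ∫ a in Ioi (0 : ℝ), spaceDensity s (a, y) =
      Real.Gamma (Module.finrank ℝ F / 2 + s) * ‖y‖ ^ (-(Module.finrank ℝ F + 2 * s)) := by
  have hGamma := Real.integral_rpow_mul_exp_neg_mul_Ioi (a := Module.finrank ℝ F / 2 + s)
    (by positivity) (r := ‖y‖ ^ 2) (by positivity)
  simp only [mul_comm (‖y‖ ^ 2)] at hGamma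
  simp only [spaceDensity]
  rw [hGamma, mul_comm, one_div, Real.inv_rpow (by positivity), ← Real.rpow_natCast,
    ← Real.rpow_mul (norm_nonneg y), ← Real.rpow_neg (norm_nonneg y)]
  congr 2
  push_cast
  ring

/-- The integrand of the subordination formula for `(1 + ‖ξ‖ ^ 2) ^ s`. Without the factor
`exp (-π² / a)` the integral would be proportional to `‖ξ‖ ^ (2 * s)`, the non-smooth symbol of the
fractional Laplacian. -/
noncomputable def spaceSymbolIntegrand (s : ℝ) (ξ : F) (p : ℝ × F) : ℝ :=
  spaceDensity s p *
    (1 - Real.exp (-(Real.pi ^ 2 / p.1)) * Real.cos (2 * Real.pi * inner ℝ ξ p.2))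

lemma spaceSymbolIntegrand_nonneg {ξ : F} {p : ℝ × F} (hp : 0 < p.1) :
    0 ≤ spaceSymbolIntegrand s ξ p := by
  refine mul_nonneg (spaceDensity_nonneg hp) (sub_nonneg.2 ?_)
  calc Real.exp (-(Real.pi ^ 2 / p.1)) * Real.cos (2 * Real.pi * inner ℝ ξ p.2)
      ≤ Real.exp (-(Real.pi ^ 2 / p.1)) * 1 := by
        gcongr
        exact Real.cos_le_one _
    _ ≤ 1 := by
        rw [mul_one]
        exact Real.exp_le_one_iff.2 (neg_nonpos.2 (by positivity))

lemma spaceSymbolIntegrand_eq_sub {ξ : F} {a : ℝ} (y : F) :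
    spaceSymbolIntegrand s ξ (a, y) = a ^ (Module.finrank ℝ F / 2 + s - 1) *
      (Real.exp (-(a * ‖y‖ ^ 2)) * Real.cos (2 * Real.pi * inner ℝ 0 y) -
        Real.exp (-(Real.pi ^ 2 / a)) *
          (Real.exp (-(a * ‖y‖ ^ 2)) * Real.cos (2 * Real.pi * inner ℝ ξ y))) := by
  rw [inner_zero_left, mul_zero, Real.cos_zero, spaceSymbolIntegrand, spaceDensity]
  ring

lemma spaceSymbolIntegrand_zero_le {p : ℝ × F} (hp : 0 < p.1) :
    spaceSymbolIntegrand s 0 p ≤ spaceDensity s p := by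
  refine mul_le_of_le_one_right (spaceDensity_nonneg hp) ?_
  rw [inner_zero_left, mul_zero, Real.cos_zero, mul_one]
  linarith [Real.exp_pos (-(Real.pi ^ 2 / p.1))]

lemma integrableOn_spaceSymbolIntegrand_fst (hs0 : 0 < s) {y : F} (hy : y ≠ 0) :
    IntegrableOn (fun a => spaceSymbolIntegrand s 0 (a, y)) (Ioi 0) := by
  have hmeas : Measurable fun a => spaceSymbolIntegrand s 0 (a, y) := by
    simp only [spaceSymbolIntegrand, spaceDensity]
    fun_prop
  refine (integrableOn_spaceDensity hs0 hy).mono' hmeas.aestronglyMeasurable ?_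
  filter_upwards [ae_restrict_mem measurableSet_Ioi] with a (ha : 0 < a)
  rw [Real.norm_of_nonneg (spaceSymbolIntegrand_nonneg (p := (a, y)) ha)]
  exact spaceSymbolIntegrand_zero_le (p := (a, y)) ha

variable [MeasurableSpace F] [BorelSpace F]

lemma measurable_spaceSymbolIntegrand [SecondCountableTopology F] :
    Measurable fun p : F × (ℝ × F) => spaceSymbolIntegrand s p.1 p.2 := by
  unfold spaceSymbolIntegrand spaceDensity
  fun_prop

variable [FiniteDimensional ℝ F]

lemma integrable_spaceSymbolIntegrand_snd {ξ : F} {a : ℝ} (ha : 0 < a) :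
    Integrable fun y : F => spaceSymbolIntegrand s ξ (a, y) := by
  simp only [spaceSymbolIntegrand_eq_sub]
  exact ((integrable_gaussian_mul_cos ha 0).sub
    ((integrable_gaussian_mul_cos ha ξ).const_mul _)).const_mul _

lemma integral_spaceSymbolIntegrand_snd {ξ : F} {a : ℝ} (ha : 0 < a) :
    ∫ y : F, spaceSymbolIntegrand s ξ (a, y) = Real.pi ^ (Module.finrank ℝ F / 2 : ℝ) *
      (a ^ (s - 1) * (1 - Real.exp (-(Real.pi ^ 2 * (1 + ‖ξ‖ ^ 2) / a)))) := by
  simp only [spaceSymbolIntegrand_eq_sub]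
  rw [integral_const_mul, integral_sub (integrable_gaussian_mul_cos ha 0)
      ((integrable_gaussian_mul_cos ha ξ).const_mul _), integral_const_mul,
    integral_gaussian_mul_cos ha, integral_gaussian_mul_cos ha]
  have hexp : Real.exp (-(Real.pi ^ 2 * (1 + ‖ξ‖ ^ 2) / a)) =
      Real.exp (-(Real.pi ^ 2 / a)) * Real.exp (-(Real.pi ^ 2 * ‖ξ‖ ^ 2 / a)) := by
    rw [← Real.exp_add]
    congr 1
    ring
  have hpow : a ^ (Module.finrank ℝ F / 2 + s - 1) =
      a ^ (Module.finrank ℝ F / 2 : ℝ) * a ^ (s - 1) := by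
    rw [← Real.rpow_add ha]
    congr 1
    ring
  have hne : a ^ (Module.finrank ℝ F / 2 : ℝ) ≠ 0 := by positivity
  rw [hexp, hpow, Real.div_rpow Real.pi_pos.le ha.le, norm_zero, zero_pow two_ne_zero, mul_zero,
    zero_div, neg_zero, Real.exp_zero]
  field_simp

/-- The parameter measure `da dy`, on `a > 0`, of the subordination formula. -/
noncomputable abbrev subordinationMeasure (F : Type*) [NormedAddCommGroup F]
    [InnerProductSpace ℝ F] [FiniteDimensional ℝ F] [MeasurableSpace F] [BorelSpace F] :
    Measure (ℝ × F) :=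
  (volume.restrict (Ioi 0)).prod volume

lemma ae_fst_pos_subordinationMeasure : ∀ᵐ p ∂subordinationMeasure F, 0 < p.1 :=
  Measure.quasiMeasurePreserving_fst.ae (ae_restrict_mem measurableSet_Ioi)

lemma integrable_spaceSymbolIntegrand (hs0 : 0 < s) (hs1 : s < 1) (ξ : F) :
    Integrable (spaceSymbolIntegrand s ξ) (subordinationMeasure F) := by
  have hmeas : Measurable (spaceSymbolIntegrand s ξ) :=
    measurable_spaceSymbolIntegrand.comp (measurable_const.prodMk measurable_id)
  have hmem := ae_restrict_mem (μ := volume) (measurableSet_Ioi (a := (0 : ℝ)))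
  rw [integrable_prod_iff hmeas.aestronglyMeasurable]
  refine ⟨by filter_upwards [hmem] with a ha using integrable_spaceSymbolIntegrand_snd ha, ?_⟩
  refine ((integrableOn_rpow_mul_one_sub_exp hs0 hs1 (l := Real.pi ^ 2 * (1 + ‖ξ‖ ^ 2))
    (by positivity)).const_mul (Real.pi ^ (Module.finrank ℝ F / 2 : ℝ))).congr ?_
  filter_upwards [hmem] with a ha
  rw [← integral_spaceSymbolIntegrand_snd ha]
  congr 1 with y
  exact (Real.norm_of_nonneg (spaceSymbolIntegrand_nonneg (p := (a, y)) ha)).symm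

end Density

section Symbol

variable {F : Type*} [NormedAddCommGroup F] [InnerProductSpace ℝ F]

/-- The smooth symbol, proportional to `(1 + ‖ξ‖ ^ 2) ^ s`, of the fractional Laplacian with
tempered kernel. -/
noncomputable def spaceSymbol (s : ℝ) (ξ : F) : ℝ :=
  Real.pi ^ (Module.finrank ℝ F / 2 : ℝ) * ((Real.pi ^ 2) ^ s * subordinationConst s) *
    (1 + ‖ξ‖ ^ 2) ^ s

lemma hasTemperateGrowth_spaceSymbol (s : ℝ) :
    (fun ξ : F => (spaceSymbol s ξ : ℂ)).HasTemperateGrowth :=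
  Complex.ofRealCLM.hasTemperateGrowth.comp
    ((Function.HasTemperateGrowth.const _).mul
      (Function.hasTemperateGrowth_one_add_norm_sq_rpow F s))

lemma exists_spaceSymbol_eq (hs0 : 0 < s) (hs1 : s < 1) :
    ∃ c, 0 < c ∧ ∀ ξ : F, spaceSymbol s ξ = c * (1 + ‖ξ‖ ^ 2) ^ s := by
  have := subordinationConst_pos hs0 hs1
  exact ⟨_, by positivity, fun _ => rfl⟩

/-- The integrable part of the fractional Laplacian's kernel `Γ(d/2 + s) ‖y‖^(-d-2s)`; the rest of
the kernel is tempered and has the smooth symbol `spaceSymbol`. -/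
noncomputable def spaceKernel (s : ℝ) (y : F) : ℝ :=
  ∫ a in Ioi (0 : ℝ), spaceSymbolIntegrand s 0 (a, y)

lemma spaceKernel_nonneg (y : F) : 0 ≤ spaceKernel s y :=
  setIntegral_nonneg measurableSet_Ioi fun _ ha => spaceSymbolIntegrand_nonneg ha

lemma spaceKernel_neg (y : F) : spaceKernel s (-y) = spaceKernel s y := by
  simp [spaceKernel, spaceSymbolIntegrand, spaceDensity]

lemma spaceKernel_le (hs0 : 0 < s) {y : F} (hy : y ≠ 0) :
    spaceKernel s y ≤ Real.Gamma (Module.finrank ℝ F / 2 + s) *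
      ‖y‖ ^ (-(Module.finrank ℝ F + 2 * s)) := by
  rw [← integral_spaceDensity hs0 hy]
  exact setIntegral_mono_on (integrableOn_spaceSymbolIntegrand_fst hs0 hy)
    (integrableOn_spaceDensity hs0 hy) measurableSet_Ioi fun a ha => spaceSymbolIntegrand_zero_le ha

lemma integral_spaceDensity_smul_add (hs0 : 0 < s) {y : F} (hy : y ≠ 0) (c d : ℂ) :
    ∫ a in Ioi (0 : ℝ), (spaceDensity s (a, y) • c + spaceSymbolIntegrand s 0 (a, y) • d) =
      (Real.Gamma (Module.finrank ℝ F / 2 + s) * ‖y‖ ^ (-(Module.finrank ℝ F + 2 * s))) • c +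
        spaceKernel s y • d := by
  rw [integral_add ((integrableOn_spaceDensity hs0 hy).smul_const c)
      ((integrableOn_spaceSymbolIntegrand_fst hs0 hy).smul_const d),
    integral_smul_const, integral_smul_const, integral_spaceDensity hs0 hy, spaceKernel]

variable [FiniteDimensional ℝ F] [MeasurableSpace F] [BorelSpace F]

lemma integral_spaceSymbolIntegrand (hs0 : 0 < s) (hs1 : s < 1) (ξ : F) :
    ∫ p, spaceSymbolIntegrand s ξ p ∂subordinationMeasure F = spaceSymbol s ξ := by
  rw [integral_prod _ (integrable_spaceSymbolIntegrand hs0 hs1 ξ),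
    setIntegral_congr_fun measurableSet_Ioi fun a ha => integral_spaceSymbolIntegrand_snd ha,
    integral_const_mul, integral_rpow_mul_one_sub_exp (by positivity),
    Real.mul_rpow (by positivity) (by positivity), spaceSymbol]
  ring

lemma integral_norm_spaceSymbolIntegrand (hs0 : 0 < s) (hs1 : s < 1) (ξ : F) :
    ∫ p, ‖spaceSymbolIntegrand s ξ p‖ ∂subordinationMeasure F = spaceSymbol s ξ := by
  rw [← integral_spaceSymbolIntegrand hs0 hs1]
  refine integral_congr_ae ?_
  filter_upwards [ae_fst_pos_subordinationMeasure] with p hp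
  exact Real.norm_of_nonneg (spaceSymbolIntegrand_nonneg hp)

lemma exists_integral_norm_spaceSymbolIntegrand_comp_le {V : Type*}
    [NormedAddCommGroup V] [NormedSpace ℝ V] (hs0 : 0 < s) (hs1 : s < 1) (p : V →L[ℝ] F) :
    ∃ K, ∀ ζ, ∫ q, ‖(spaceSymbolIntegrand s (p ζ) q : ℂ)‖ ∂subordinationMeasure F ≤
      K * (1 + ‖ζ‖) ^ 2 := by
  obtain ⟨c, hc, hsymbol⟩ := exists_spaceSymbol_eq (F := F) hs0 hs1
  refine ⟨c * (1 + ‖p‖) ^ 2, fun ζ => ?_⟩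
  simp only [Complex.norm_real]
  rw [integral_norm_spaceSymbolIntegrand hs0 hs1, hsymbol, mul_assoc]
  gcongr
  calc (1 + ‖p ζ‖ ^ 2) ^ s ≤ (1 + ‖p ζ‖ ^ 2) ^ (1 : ℝ) :=
        Real.rpow_le_rpow_of_exponent_le (by nlinarith [norm_nonneg (p ζ)]) hs1.le
    _ ≤ (1 + ‖p ζ‖) ^ 2 := by
        rw [Real.rpow_one]
        nlinarith [norm_nonneg (p ζ)]
    _ ≤ ((1 + ‖p‖) * (1 + ‖ζ‖)) ^ 2 := by
        gcongr
        nlinarith [p.le_opNorm ζ, norm_nonneg ζ, norm_nonneg p]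
    _ = (1 + ‖p‖) ^ 2 * (1 + ‖ζ‖) ^ 2 := mul_pow _ _ _

lemma integrable_spaceKernel (hs0 : 0 < s) (hs1 : s < 1) : Integrable (spaceKernel s : F → ℝ) :=
  (integrable_spaceSymbolIntegrand hs0 hs1 0).integral_prod_right

variable {V : Type*} [NormedAddCommGroup V] [NormedSpace ℝ V] {J : F →L[ℝ] V}

lemma integrable_spaceKernel_smul_symm (hs0 : 0 < s) (hs1 : s < 1) (φ : 𝓢(V, ℂ)) (z : V) :
    Integrable fun y : F => spaceKernel s y • ((φ (z + J y) + φ (z - J y)) / 2) := by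
  have hk := integrable_spaceKernel (F := F) hs0 hs1
  simp only [← smul_div_assoc, smul_add]
  exact ((integrable_smul_schwartz_comp hk φ (by fun_prop)).add
    (integrable_smul_schwartz_comp hk φ (by fun_prop))).div_const 2

lemma integral_spaceKernel_smul_symm (hs0 : 0 < s) (hs1 : s < 1) (φ : 𝓢(V, ℂ)) (z : V) :
    ∫ y : F, spaceKernel s y • ((φ (z + J y) + φ (z - J y)) / 2) =
      ∫ y : F, spaceKernel s y • φ (z + J y) := by
  have hreflect : ∫ y : F, spaceKernel s y • φ (z - J y) =
      ∫ y : F, spaceKernel s y • φ (z + J y) := by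
    rw [← integral_neg_eq_self]
    simp only [spaceKernel_neg, map_neg, sub_neg_eq_add]
  have hk := integrable_spaceKernel (F := F) hs0 hs1
  simp only [← smul_div_assoc, smul_add]
  rw [integral_div, integral_add (integrable_smul_schwartz_comp hk φ (by fun_prop))
    (integrable_smul_schwartz_comp hk φ (by fun_prop)), hreflect, add_self_div_two]

end Symbol

end SpaceSymbol

section TimeKernel

variable {α : ℝ}

/-- The integrable part of the Marchaud kernel `σ ^ (-(1 + α))`; the rest of the kernel is tempered
and has the smooth symbol `timeSymbol`. -/
noncomputable def timeKernel (α : ℝ) : ℝ → ℝ :=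
  (Ioi (0 : ℝ)).indicator fun σ => σ ^ (-(1 + α)) * (1 - Real.exp (-(2 * Real.pi * σ)))

lemma timeKernel_nonneg (σ : ℝ) : 0 ≤ timeKernel α σ :=
  indicator_nonneg (fun σ (hσ : 0 < σ) =>
    mul_nonneg (by positivity) (one_sub_exp_neg_nonneg (by positivity))) σ

lemma timeKernel_le (σ : ℝ) : timeKernel α σ ≤ ‖σ‖ ^ (-(1 + α)) := by
  refine indicator_le' (g := fun σ => ‖σ‖ ^ (-(1 + α))) (fun σ (hσ : 0 < σ) => ?_)
    (fun σ _ => by positivity) σ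
  rw [Real.norm_of_nonneg hσ.le]
  exact mul_le_of_le_one_right (by positivity)
    ((one_sub_exp_neg_le_min _).trans (min_le_left _ _))

lemma integrable_timeKernel (hα0 : 0 < α) (hα1 : α < 1) : Integrable (timeKernel α) := by
  have hre := (integrableOn_timeSymbolIntegrand hα0 hα1 0).re
  simp only [RCLike.re_eq_complex_re, timeSymbolIntegrand_re, mul_zero, Real.cos_zero,
    mul_one] at hre
  exact (integrable_indicator_iff measurableSet_Ioi).2 hre

lemma integral_timeKernel_smul {E : Type*} [NormedAddCommGroup E] [NormedSpace ℝ E] (f : ℝ → E) :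
    ∫ σ, timeKernel α σ • f σ =
      ∫ σ in Ioi (0 : ℝ), (σ ^ (-(1 + α)) * (1 - Real.exp (-(2 * Real.pi * σ)))) • f σ := by
  rw [← integral_indicator measurableSet_Ioi]
  congr 1 with σ
  by_cases hσ : σ ∈ Ioi (0 : ℝ) <;> simp [timeKernel, hσ]

end TimeKernel

section Representation

variable {V : Type*} [NormedAddCommGroup V] [InnerProductSpace ℝ V] [FiniteDimensional ℝ V]
  [MeasurableSpace V] [BorelSpace V]

section Time

variable {α : ℝ}

lemma fourierInv_timeSymbolIntegrand_mul (e : V) (φ : 𝓢(V, ℂ)) (z : V) (σ : ℝ) :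
    𝓕⁻ (fun ζ => timeSymbolIntegrand α (inner ℝ ζ e) σ * 𝓕 (φ : V → ℂ) ζ) z =
      σ ^ (-(1 + α)) • (φ z - φ (z + σ • e)) +
        (σ ^ (-(1 + α)) * (1 - Real.exp (-(2 * Real.pi * σ)))) • φ (z + σ • e) := by
  have hchar := fourierInv_sum_char_mul_fourier φ z
    ![(σ ^ (-(1 + α)) : ℝ), -((σ ^ (-(1 + α)) * Real.exp (-(2 * Real.pi * σ)) : ℝ) : ℂ)]
    ![0, σ • e]
  simp only [Fin.sum_univ_two, Matrix.cons_val_zero, Matrix.cons_val_one, inner_zero_right,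
    AddChar.map_zero_eq_one, Circle.coe_one, mul_one, add_zero] at hchar
  have hsymbol : ∀ ζ : V, timeSymbolIntegrand α (inner ℝ ζ e) σ = (σ ^ (-(1 + α)) : ℝ) +
      -((σ ^ (-(1 + α)) * Real.exp (-(2 * Real.pi * σ)) : ℝ) : ℂ) *
        (Real.fourierChar (inner ℝ ζ (σ • e)) : ℂ) := fun ζ => by
    simp only [timeSymbolIntegrand, Real.fourierChar_apply, inner_smul_right]
    push_cast
    rw [neg_mul, mul_assoc _ (Complex.exp _) (Complex.exp _), ← Complex.exp_add]
    ring_nf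
  simp only [hsymbol, hchar, Complex.real_smul]
  push_cast
  ring

lemma integral_rpow_smul_sub_eq (hα0 : 0 < α) (hα1 : α < 1) (e : V) (φ : 𝓢(V, ℂ)) (z : V) :
    ∫ σ in Ioi (0 : ℝ), σ ^ (-(1 + α)) • (φ z - φ (z + σ • e)) =
      SchwartzMap.fourierMultiplierCLM ℂ (fun ζ => timeSymbol α (inner ℝ ζ e)) φ z -
        ∫ σ, timeKernel α σ • φ (z + σ • e) := by
  have hmeas : Measurable (Function.uncurry fun (σ : ℝ) (ζ : V) =>
      timeSymbolIntegrand α (inner ℝ ζ e) σ) :=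
    measurable_timeSymbolIntegrand.comp
      (by fun_prop : Measurable fun p : ℝ × V => ((inner ℝ p.2 e : ℝ), p.1))
  have hint : ∀ ζ : V, IntegrableOn (fun σ => timeSymbolIntegrand α (inner ℝ ζ e) σ) (Ioi 0) :=
    fun ζ => integrableOn_timeSymbolIntegrand hα0 hα1 _
  have hgrowth : ∀ ζ : V, ∫ σ in Ioi 0, ‖timeSymbolIntegrand α (inner ℝ ζ e) σ‖ ≤
      (2 * Real.pi * (∫ σ in Ioi (0 : ℝ), σ ^ (-(1 + α)) * min 1 σ) * (1 + ‖e‖)) *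
        (1 + ‖ζ‖) ^ 1 := fun ζ => by
    refine (integral_norm_timeSymbolIntegrand_le hα0 hα1 _).trans ?_
    have hnonneg : 0 ≤ ∫ σ in Ioi (0 : ℝ), σ ^ (-(1 + α)) * min 1 σ :=
      setIntegral_nonneg measurableSet_Ioi fun σ (hσ : 0 < σ) => by positivity
    rw [mul_assoc _ (1 + ‖e‖), pow_one]
    gcongr
    nlinarith [abs_real_inner_le_norm ζ e, norm_nonneg ζ, norm_nonneg e]
  have hm : (fun ζ : V => timeSymbol α (inner ℝ ζ e)).HasTemperateGrowth :=
    (hasTemperateGrowth_timeSymbol hα0 hα1).comp (f := fun ζ : V => inner ℝ ζ e) (by fun_prop)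
  have hsum := integrable_fourierInv_kernel_mul hmeas hint hgrowth φ z
  have hmult := integral_fourierInv_kernel_mul hmeas hint hgrowth hm φ z
  have haverage : IntegrableOn (fun σ : ℝ =>
      (σ ^ (-(1 + α)) * (1 - Real.exp (-(2 * Real.pi * σ)))) • φ (z + σ • e)) (Ioi 0) :=
    integrable_smul_schwartz_comp
      ((integrable_indicator_iff measurableSet_Ioi).1 (integrable_timeKernel hα0 hα1)) φ
      (by fun_prop)
  simp only [fourierInv_timeSymbolIntegrand_mul] at hsum hmult
  rw [integral_timeKernel_smul, eq_sub_iff_add_eq, ← integral_add _ haverage]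
  · exact hmult
  · simpa only [Pi.sub_def, add_sub_cancel_right] using hsum.sub haverage

end Time

section Space

variable {F : Type*} [NormedAddCommGroup F] [InnerProductSpace ℝ F] {s : ℝ} {J : F →L[ℝ] V}
  {p : V →L[ℝ] F}

lemma fourierInv_spaceSymbolIntegrand_mul (hJ : ∀ ζ y, inner ℝ ζ (J y) = inner ℝ (p ζ) y)
    (φ : 𝓢(V, ℂ)) (z : V) (q : ℝ × F) :
    𝓕⁻ (fun ζ => (spaceSymbolIntegrand s (p ζ) q : ℂ) * 𝓕 (φ : V → ℂ) ζ) z =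
      spaceDensity s q • ((2 * φ z - φ (z + J q.2) - φ (z - J q.2)) / 2) +
        spaceSymbolIntegrand s 0 q • ((φ (z + J q.2) + φ (z - J q.2)) / 2) := by
  set r : ℂ := -(spaceDensity s q * (Real.exp (-(Real.pi ^ 2 / q.1)) : ℂ) / 2) with hr
  have hchar := fourierInv_sum_char_mul_fourier φ z ![(spaceDensity s q : ℂ), r, r]
    ![0, J q.2, -J q.2]
  simp only [Fin.sum_univ_three, Matrix.cons_val_zero, Matrix.cons_val_one, Matrix.cons_val,
    inner_zero_right, AddChar.map_zero_eq_one, Circle.coe_one, mul_one, add_zero,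
    ← sub_eq_add_neg z] at hchar
  have hsymbol : ∀ ζ : V, (spaceSymbolIntegrand s (p ζ) q : ℂ) = spaceDensity s q +
      r * (Real.fourierChar (inner ℝ ζ (J q.2)) : ℂ) +
      r * (Real.fourierChar (inner ℝ ζ (-J q.2)) : ℂ) := fun ζ => by
    simp only [spaceSymbolIntegrand, hr, inner_neg_right, hJ, Real.fourierChar_apply]
    push_cast
    rw [Complex.cos]
    ring_nf
  simp only [hsymbol, hchar]
  simp only [hr, spaceSymbolIntegrand, inner_zero_left, mul_zero, Real.cos_zero,
    mul_one, Complex.real_smul]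
  push_cast
  ring

variable [FiniteDimensional ℝ F] [MeasurableSpace F] [BorelSpace F]

lemma integral_norm_rpow_smul_eq [Nontrivial F] (hs0 : 0 < s) (hs1 : s < 1)
    (hJ : ∀ ζ y, inner ℝ ζ (J y) = inner ℝ (p ζ) y) (φ : 𝓢(V, ℂ)) (z : V) :
    (Real.Gamma (Module.finrank ℝ F / 2 + s) / 2) • ∫ y : F,
        ‖y‖ ^ (-(Module.finrank ℝ F + 2 * s)) • (2 * φ z - φ (z + J y) - φ (z - J y)) =
      SchwartzMap.fourierMultiplierCLM ℂ (fun ζ => (spaceSymbol s (p ζ) : ℂ)) φ z -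
        ∫ y : F, spaceKernel s y • φ (z + J y) := by
  have hmeas : Measurable (Function.uncurry fun (q : ℝ × F) (ζ : V) =>
      (spaceSymbolIntegrand s (p ζ) q : ℂ)) :=
    Complex.measurable_ofReal.comp (measurable_spaceSymbolIntegrand.comp
      (by fun_prop : Measurable fun r : (ℝ × F) × V => (p r.2, r.1)))
  have hint : ∀ ζ : V, Integrable (fun q => (spaceSymbolIntegrand s (p ζ) q : ℂ))
      (subordinationMeasure F) := fun ζ => (integrable_spaceSymbolIntegrand hs0 hs1 (p ζ)).ofReal
  obtain ⟨K, hgrowth⟩ := exists_integral_norm_spaceSymbolIntegrand_comp_le hs0 hs1 p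
  have hsymbol : ∀ ζ : V, ∫ q, (spaceSymbolIntegrand s (p ζ) q : ℂ) ∂subordinationMeasure F =
      spaceSymbol s (p ζ) := fun ζ => by
    rw [integral_complex_ofReal, integral_spaceSymbolIntegrand hs0 hs1]
  have hm : (fun ζ : V => (spaceSymbol s (p ζ) : ℂ)).HasTemperateGrowth :=
    (hasTemperateGrowth_spaceSymbol s).comp p.hasTemperateGrowth
  have hsum := integrable_fourierInv_kernel_mul hmeas hint hgrowth φ z
  have hmult := integral_fourierInv_kernel_mul hmeas hint hgrowth (by simpa only [hsymbol]) φ z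
  simp only [fourierInv_spaceSymbolIntegrand_mul hJ, hsymbol] at hsum hmult
  have hinner : ∀ᵐ y : F, _ := (Measure.ae_ne volume (0 : F)).mono fun y hy =>
    integral_spaceDensity_smul_add hs0 hy ((2 * φ z - φ (z + J y) - φ (z - J y)) / 2)
      ((φ (z + J y) + φ (z - J y)) / 2)
  have haverage := integrable_spaceKernel_smul_symm (F := F) (J := J) hs0 hs1 φ z
  rw [← hmult, integral_prod_symm _ hsum, integral_congr_ae hinner,
    integral_add _ haverage, integral_spaceKernel_smul_symm hs0 hs1, add_sub_cancel_right,
    ← integral_smul]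
  · congr 1 with y
    simp only [Complex.real_smul]
    push_cast
    ring
  · simpa only [Pi.sub_def, add_sub_cancel_right] using
      (hsum.integral_prod_right.congr hinner).sub haverage

end Space

end Representation

section WithDensity

variable {X G : Type*} [MeasurableSpace X] {μ : Measure X} [NormedAddCommGroup G] [NormedSpace ℝ G]
  {k : X → ℝ}

lemma integrable_withDensity_ofReal_iff (hk0 : ∀ x, 0 ≤ k x) (hk : AEMeasurable k μ) {f : X → G} :
    Integrable f (μ.withDensity fun x => ENNReal.ofReal (k x)) ↔
      Integrable (fun x => k x • f x) μ := by
  simp only [integrable_withDensity_iff_integrable_smul₀' hk.ennreal_ofReal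
    (.of_forall fun _ => ENNReal.ofReal_lt_top), ENNReal.toReal_ofReal (hk0 _)]

lemma integral_withDensity_ofReal (hk0 : ∀ x, 0 ≤ k x) (hk : AEMeasurable k μ) (f : X → G) :
    ∫ x, f x ∂(μ.withDensity fun x => ENNReal.ofReal (k x)) = ∫ x, k x • f x ∂μ := by
  simp only [integral_withDensity_eq_integral_toReal_smul₀ hk.ennreal_ofReal
    (.of_forall fun _ => ENNReal.ofReal_lt_top), ENNReal.toReal_ofReal (hk0 _)]

end WithDensity

section PushKernel

variable {F V : Type*} [NormedAddCommGroup F] [NormedSpace ℝ F] [MeasureSpace F]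
  [NormedAddCommGroup V] [NormedSpace ℝ V] [MeasurableSpace V]

/-- The measure with density `k`, pushed forward by `J`. -/
noncomputable def pushKernel (k : F → ℝ) (J : F →L[ℝ] V) : Measure V :=
  ((volume : Measure F).withDensity fun y => ENNReal.ofReal (k y)).map J

variable {k : F → ℝ} {J : F →L[ℝ] V}

lemma isFiniteMeasure_pushKernel (hk : Integrable k) : IsFiniteMeasure (pushKernel k J) := by
  have := isFiniteMeasure_withDensity_ofReal hk.2
  exact Measure.isFiniteMeasure_map _ _

variable [OpensMeasurableSpace F] [BorelSpace V]

lemma integrable_pushKernel_iff {G : Type*} [NormedAddCommGroup G] [NormedSpace ℝ G]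
    [SecondCountableTopology G] (hk0 : ∀ y, 0 ≤ k y) (hk : AEMeasurable k) {f : V → G}
    (hf : Continuous f) : Integrable f (pushKernel k J) ↔ Integrable fun y => k y • f (J y) := by
  rw [pushKernel, integrable_map_measure hf.aestronglyMeasurable J.continuous.aemeasurable,
    integrable_withDensity_ofReal_iff hk0 hk]
  rfl

lemma integral_pushKernel {G : Type*} [NormedAddCommGroup G] [NormedSpace ℝ G]
    [SecondCountableTopology G] (hk0 : ∀ y, 0 ≤ k y) (hk : AEMeasurable k) {f : V → G}
    (hf : Continuous f) : ∫ z, f z ∂(pushKernel k J) = ∫ y, k y • f (J y) := by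
  rw [pushKernel, integral_map J.continuous.aemeasurable hf.aestronglyMeasurable,
    integral_withDensity_ofReal hk0 hk]

end PushKernel

namespace ExcessiveWeight

variable {V : Type*} [NormedAddCommGroup V] [MeasurableSpace V] {w : V → ℝ}

lemma add {ν₁ ν₂ : Measure V} {C₁ C₂ : ℝ} (h₁ : ExcessiveWeight w ν₁ C₁)
    (h₂ : ExcessiveWeight w ν₂ C₂) : ExcessiveWeight w (ν₁ + ν₂) (C₁ + C₂) where
  pos := h₁.pos
  continuous := h₁.continuous
  integrable z := (h₁.integrable z).add_measure (h₂.integrable z)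
  integral_le z := by
    rw [integral_add_measure (h₁.integrable z) (h₂.integrable z), add_mul]
    exact add_le_add (h₁.integral_le z) (h₂.integral_le z)

lemma map {F : Type*} [NormedAddCommGroup F] [MeasurableSpace F] [OpensMeasurableSpace F]
    [NormedSpace ℝ F] [NormedSpace ℝ V] [BorelSpace V]
    {w₀ : F → ℝ} {ν : Measure F} {C : ℝ} (h : ExcessiveWeight w₀ ν C) {J : F →L[ℝ] V}
    {p : V → F} {g : V → ℝ} (hw0 : ∀ z, 0 < w z) (hw : Continuous w)
    (hJ : ∀ z y, w (z + J y) = g z * w₀ (p z + y)) : ExcessiveWeight w (ν.map J) C where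
  pos := hw0
  continuous := hw
  integrable z := by
    have hwz : Continuous fun y => w (z + y) := by fun_prop
    rw [integrable_map_measure hwz.aestronglyMeasurable J.continuous.aemeasurable]
    simpa only [Function.comp_def, hJ] using (h.integrable (p z)).const_mul (g z)
  integral_le z := by
    have hz : w z = g z * w₀ (p z) := by simpa only [map_zero, add_zero] using hJ z 0
    have hg : 0 ≤ g z := (pos_of_mul_pos_left (hz ▸ hw0 z) (h.pos (p z)).le).le
    have hwz : Continuous fun y => w (z + y) := by fun_prop
    rw [integral_map J.continuous.aemeasurable hwz.aestronglyMeasurable, hz, mul_left_comm]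
    simp only [hJ, integral_const_mul]
    exact mul_le_mul_of_nonneg_left (h.integral_le (p z)) hg

end ExcessiveWeight

section PolynomialWeight

lemma rpow_neg_le_mul_rpow_neg {a c r p : ℝ} (ha : 0 < a) (hc : 0 < c) (hp : 0 ≤ p)
    (hr : a / c ≤ r) : r ^ (-p) ≤ c ^ p * a ^ (-p) := by
  calc r ^ (-p) ≤ (a / c) ^ (-p) :=
        Real.rpow_le_rpow_of_nonpos (by positivity) hr (neg_nonpos.2 hp)
    _ = c ^ p * a ^ (-p) := by
        rw [Real.div_rpow ha.le hc.le, Real.rpow_neg hc.le, div_inv_eq_mul, mul_comm]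

variable {F : Type*} [NormedAddCommGroup F] {p B : ℝ} {k : F → ℝ}

lemma kernel_mul_rpow_neg_le (hp : 0 < p) (hB : 0 ≤ B) (hk0 : ∀ y, 0 ≤ k y)
    (hk : ∀ y, y ≠ 0 → k y ≤ B * ‖y‖ ^ (-p)) (x y : F) :
    k y * (1 + ‖x + y‖) ^ (-p) ≤
      ((2 ^ p + B * 4 ^ p) * (1 + ‖x‖) ^ (-p)) * (k y + (1 + ‖x + y‖) ^ (-p)) := by
  have hky := hk0 y
  have hx : 0 < 1 + ‖x‖ := by positivity
  rcases le_or_gt ((1 + ‖x‖) / 2) (1 + ‖x + y‖) with hnear | hfar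
  · calc k y * (1 + ‖x + y‖) ^ (-p) ≤ k y * (2 ^ p * (1 + ‖x‖) ^ (-p)) := by
          gcongr
          exact rpow_neg_le_mul_rpow_neg hx two_pos hp.le hnear
      _ = (2 ^ p * (1 + ‖x‖) ^ (-p)) * k y := mul_comm _ _
      _ ≤ _ := by
          gcongr
          · exact le_add_of_nonneg_right (by positivity)
          · exact le_add_of_nonneg_right (by positivity)
  · have hy : (1 + ‖x‖) / 4 ≤ ‖y‖ := by
      have htri := norm_sub_le (x + y) y
      rw [add_sub_cancel_right] at htri
      linarith
    have hy0 : y ≠ 0 := norm_pos_iff.1 (lt_of_lt_of_le (by positivity) hy)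
    calc k y * (1 + ‖x + y‖) ^ (-p)
        ≤ B * (4 ^ p * (1 + ‖x‖) ^ (-p)) * (1 + ‖x + y‖) ^ (-p) := by
          gcongr
          refine (hk y hy0).trans ?_
          gcongr
          exact rpow_neg_le_mul_rpow_neg hx four_pos hp.le hy
      _ = (B * 4 ^ p * (1 + ‖x‖) ^ (-p)) * (1 + ‖x + y‖) ^ (-p) := by ring
      _ ≤ _ := by
          gcongr
          · exact le_add_of_nonneg_left (by positivity)
          · exact le_add_of_nonneg_left hky

variable [NormedSpace ℝ F] [FiniteDimensional ℝ F] [MeasureSpace F] [BorelSpace F]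
  [(volume : Measure F).IsAddHaarMeasure]

lemma exists_excessiveWeight_rpow_neg (hp : Module.finrank ℝ F < p) (hB : 0 ≤ B)
    (hk0 : ∀ y, 0 ≤ k y) (hki : Integrable k) (hk : ∀ y, y ≠ 0 → k y ≤ B * ‖y‖ ^ (-p)) :
    ∃ C, ExcessiveWeight (fun x => (1 + ‖x‖) ^ (-p))
      ((volume : Measure F).withDensity fun y => ENNReal.ofReal (k y)) C := by
  have hp0 : 0 < p := lt_of_le_of_lt (Nat.cast_nonneg _) hp
  have hw : Integrable fun y : F => (1 + ‖y‖) ^ (-p) := integrable_one_add_norm hp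
  have hbound := kernel_mul_rpow_neg_le hp0 hB hk0 hk
  have hdom : ∀ x, Integrable fun y =>
      ((2 ^ p + B * 4 ^ p) * (1 + ‖x‖) ^ (-p)) * (k y + (1 + ‖x + y‖) ^ (-p)) :=
    fun x => (hki.add (hw.comp_add_left x)).const_mul _
  have hint : ∀ x, Integrable fun y => k y * (1 + ‖x + y‖) ^ (-p) := fun x => by
    refine (hdom x).mono'
      (hki.aestronglyMeasurable.mul (hw.comp_add_left x).aestronglyMeasurable)
      (.of_forall fun y => ?_)
    rw [Real.norm_of_nonneg (mul_nonneg (hk0 y) (by positivity))]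
    exact hbound x y
  refine ⟨(2 ^ p + B * 4 ^ p) * ((∫ y, k y) + ∫ y : F, (1 + ‖y‖) ^ (-p)),
    fun x => by positivity, ?_,
    fun x => (integrable_withDensity_ofReal_iff hk0 hki.aemeasurable).2 (hint x), fun x => ?_⟩
  · exact Continuous.rpow_const (by fun_prop) fun x => .inl (by positivity)
  · rw [integral_withDensity_ofReal hk0 hki.aemeasurable]
    refine (integral_mono (hint x) (hdom x) (hbound x)).trans_eq ?_
    rw [integral_const_mul, integral_add hki (hw.comp_add_left x),
      integral_add_left_eq_self (fun y : F => (1 + ‖y‖) ^ (-p)) x]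
    ring

end PolynomialWeight

section SpaceTime

/-- Space-time `F × ℝ` with its Euclidean structure. -/
abbrev SpaceTime (F : Type*) := WithLp 2 (F × ℝ)

/-- The unit time vector. -/
def timeVec (F : Type*) [NormedAddCommGroup F] : SpaceTime F := WithLp.toLp 2 (0, 1)

/-- The inclusion of space in space-time. -/
noncomputable def spaceIncl (F : Type*) [NormedAddCommGroup F] [InnerProductSpace ℝ F] :
    F →L[ℝ] SpaceTime F :=
  ((WithLp.prodContinuousLinearEquiv 2 ℝ F ℝ).symm : F × ℝ →L[ℝ] SpaceTime F) ∘L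
    ContinuousLinearMap.inl ℝ F ℝ

lemma SpaceTime.ext {F : Type*} {z z' : SpaceTime F} (hfst : z.fst = z'.fst)
    (hsnd : z.snd = z'.snd) : z = z' :=
  WithLp.ofLp_injective 2 (Prod.ext hfst hsnd)

section Weight

variable {F : Type*} [NormedAddCommGroup F]

@[simp] lemma timeVec_fst : (timeVec F).fst = 0 := rfl

@[simp] lemma timeVec_snd : (timeVec F).snd = 1 := rfl

/-- The product weight on space-time; `p = n + 2 s` and `q = 1 + α` give a weight comparable to the
one defining `𝓛_{2s,α}`. -/
noncomputable def prodWeight (p q : ℝ) (z : SpaceTime F) : ℝ :=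
  (1 + ‖z.fst‖) ^ (-p) * (1 + ‖z.snd‖) ^ (-q)

lemma prodWeight_pos (p q : ℝ) (z : SpaceTime F) : 0 < prodWeight p q z := by
  unfold prodWeight
  positivity

lemma continuous_prodWeight (p q : ℝ) : Continuous (prodWeight p q : SpaceTime F → ℝ) := by
  have : Continuous fun z : SpaceTime F => z.fst := by fun_prop
  have : Continuous fun z : SpaceTime F => z.snd := by fun_prop
  unfold prodWeight
  refine Continuous.mul (Continuous.rpow_const (by fun_prop) fun z => ?_)
    (Continuous.rpow_const (by fun_prop) fun z => ?_) <;> exact Or.inl (by positivity)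

lemma exists_one_le_pow_mul_prodWeight {p q : ℝ} (hp : 0 ≤ p) (hq : 0 ≤ q) :
    ∃ M : ℕ, ∀ z : SpaceTime F, 1 ≤ (1 + ‖z‖) ^ M * prodWeight p q z := by
  obtain ⟨M, hM⟩ := exists_nat_ge (p + q)
  refine ⟨M, fun z => ?_⟩
  calc (1 : ℝ) = (1 + ‖z‖) ^ (p + q) * ((1 + ‖z‖) ^ (-p) * (1 + ‖z‖) ^ (-q)) := by
        rw [← Real.rpow_add (by positivity), ← Real.rpow_add (by positivity),
          add_add_add_comm, add_neg_cancel, add_neg_cancel, add_zero, Real.rpow_zero]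
    _ ≤ (1 + ‖z‖) ^ (M : ℝ) * ((1 + ‖z.fst‖) ^ (-p) * (1 + ‖z.snd‖) ^ (-q)) := by
        gcongr ?_ * (?_ * ?_)
        · exact Real.rpow_le_rpow_of_exponent_le (by linarith [norm_nonneg z]) hM
        · exact Real.rpow_le_rpow_of_nonpos (by positivity)
            (by gcongr; exact WithLp.norm_fst_le F z) (neg_nonpos.2 hp)
        · exact Real.rpow_le_rpow_of_nonpos (by positivity)
            (by gcongr; exact WithLp.norm_snd_le F z) (neg_nonpos.2 hq)
    _ = (1 + ‖z‖) ^ M * prodWeight p q z := by rw [Real.rpow_natCast, prodWeight]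

lemma half_one_add_norm_le_sqrt_or_le (ζ : SpaceTime F) :
    2⁻¹ * (1 + ‖ζ‖) ≤ √(1 + ‖ζ.fst‖ ^ 2) ∨ 2⁻¹ * (1 + ‖ζ‖) ≤ 1 + |ζ.snd| := by
  by_contra! hcon
  obtain ⟨hfst, hsnd⟩ := hcon
  have hnorm := WithLp.prod_norm_sq_eq_of_L2 ζ
  rw [Real.norm_eq_abs] at hnorm
  rw [Real.sqrt_lt' (by positivity)] at hfst
  nlinarith [norm_nonneg ζ, abs_nonneg ζ.snd]

lemma half_one_add_norm_rpow_le {α s : ℝ} (hs0 : 0 < s) (hα0 : 0 < α) (ζ : SpaceTime F) :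
    (2⁻¹ * (1 + ‖ζ‖)) ^ min (2 * s) α ≤ (1 + ‖ζ.fst‖ ^ 2) ^ s + (1 + |ζ.snd|) ^ α := by
  have : 0 < min (2 * s) α := lt_min (by positivity) hα0
  rcases half_one_add_norm_le_sqrt_or_le ζ with hfst | hsnd
  · calc (2⁻¹ * (1 + ‖ζ‖)) ^ min (2 * s) α ≤ √(1 + ‖ζ.fst‖ ^ 2) ^ min (2 * s) α := by gcongr
      _ ≤ √(1 + ‖ζ.fst‖ ^ 2) ^ (2 * s) := by
          refine Real.rpow_le_rpow_of_exponent_le ?_ (min_le_left _ _)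
          rw [Real.one_le_sqrt]
          exact le_add_of_nonneg_right (by positivity)
      _ = (1 + ‖ζ.fst‖ ^ 2) ^ s := by
          rw [Real.rpow_mul (by positivity), Real.rpow_two, Real.sq_sqrt (by positivity)]
      _ ≤ _ := le_add_of_nonneg_right (by positivity)
  · calc (2⁻¹ * (1 + ‖ζ‖)) ^ min (2 * s) α ≤ (1 + |ζ.snd|) ^ min (2 * s) α := by gcongr
      _ ≤ (1 + |ζ.snd|) ^ α := Real.rpow_le_rpow_of_exponent_le
          (le_add_of_nonneg_right (abs_nonneg _)) (min_le_right _ _)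
      _ ≤ _ := le_add_of_nonneg_left (by positivity)

lemma exists_schwartz_le_prodWeight [InnerProductSpace ℝ F] {p q : ℝ} (hp : 0 ≤ p) (hq : 0 ≤ q)
    (φ : 𝓢(SpaceTime F, ℂ)) : ∃ B, ∀ z, ‖φ z‖ ≤ B * prodWeight p q z := by
  obtain ⟨M, hM⟩ := exists_one_le_pow_mul_prodWeight (F := F) hp hq
  exact exists_schwartz_le_weight (prodWeight_pos p q) one_pos hM φ

end Weight

variable {F : Type*} [NormedAddCommGroup F] [InnerProductSpace ℝ F]

@[simp] lemma spaceIncl_fst (y : F) : (spaceIncl F y).fst = y := rfl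

@[simp] lemma spaceIncl_snd (y : F) : (spaceIncl F y).snd = 0 := rfl

lemma SpaceTime.eq_spaceIncl_add_smul_timeVec (z : SpaceTime F) :
    z = spaceIncl F z.fst + z.snd • timeVec F := by
  apply SpaceTime.ext <;> simp

lemma inner_spaceIncl (ζ : SpaceTime F) (y : F) : inner ℝ ζ (spaceIncl F y) = inner ℝ ζ.fst y := by
  simp [WithLp.prod_inner_apply, spaceIncl]

lemma inner_timeVec (ζ : SpaceTime F) : inner ℝ ζ (timeVec F) = ζ.snd := by
  simp [WithLp.prod_inner_apply, timeVec]

end SpaceTime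

section JumpSymbol

variable {F : Type*} [NormedAddCommGroup F] [InnerProductSpace ℝ F] {α s a b : ℝ}

/-- The Fourier symbol of the tempered part of `jumpOperator α s a b`. -/
noncomputable def jumpSymbol (α s a b : ℝ) (ζ : SpaceTime F) : ℂ :=
  a * (spaceSymbol s ζ.fst : ℂ) + b * timeSymbol α ζ.snd

lemma hasTemperateGrowth_spaceSymbol_fst (s : ℝ) :
    (fun ζ : SpaceTime F => (spaceSymbol s ζ.fst : ℂ)).HasTemperateGrowth :=
  (hasTemperateGrowth_spaceSymbol s).comp (WithLp.fstL 2 ℝ F ℝ).hasTemperateGrowth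

lemma hasTemperateGrowth_timeSymbol_snd (hα0 : 0 < α) (hα1 : α < 1) :
    (fun ζ : SpaceTime F => timeSymbol α ζ.snd).HasTemperateGrowth :=
  (hasTemperateGrowth_timeSymbol hα0 hα1).comp (WithLp.sndL 2 ℝ F ℝ).hasTemperateGrowth

lemma hasTemperateGrowth_jumpSymbol (hα0 : 0 < α) (hα1 : α < 1) :
    (jumpSymbol α s a b : SpaceTime F → ℂ).HasTemperateGrowth :=
  ((Function.HasTemperateGrowth.const (a : ℂ)).mul (hasTemperateGrowth_spaceSymbol_fst s)).add
    ((Function.HasTemperateGrowth.const (b : ℂ)).mul (hasTemperateGrowth_timeSymbol_snd hα0 hα1))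

lemma exists_mul_rpow_le_norm_jumpSymbol (hα0 : 0 < α) (hα1 : α < 1) (hs0 : 0 < s) (hs1 : s < 1)
    (ha : 0 < a) (hb : 0 < b) :
    ∃ c δ : ℝ, 0 < c ∧ 0 < δ ∧
      ∀ ζ : SpaceTime F, c * (1 + ‖ζ‖) ^ δ ≤ ‖jumpSymbol α s a b ζ‖ := by
  obtain ⟨cs, hcs, hspace⟩ := exists_spaceSymbol_eq (F := F) hs0 hs1
  obtain ⟨cα, hcα, htime⟩ := exists_mul_rpow_le_timeSymbol_re hα0 hα1
  have hδ : 0 < min (2 * s) α := lt_min (by positivity) hα0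
  refine ⟨min (a * cs) (b * cα) * 2⁻¹ ^ min (2 * s) α, _, by positivity, hδ, fun ζ => ?_⟩
  calc min (a * cs) (b * cα) * 2⁻¹ ^ min (2 * s) α * (1 + ‖ζ‖) ^ min (2 * s) α
      = min (a * cs) (b * cα) * (2⁻¹ * (1 + ‖ζ‖)) ^ min (2 * s) α := by
        rw [mul_assoc, Real.mul_rpow (by positivity) (by positivity)]
    _ ≤ min (a * cs) (b * cα) * ((1 + ‖ζ.fst‖ ^ 2) ^ s + (1 + |ζ.snd|) ^ α) := by
        gcongr
        exact half_one_add_norm_rpow_le hs0 hα0 ζ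
    _ ≤ a * cs * (1 + ‖ζ.fst‖ ^ 2) ^ s + b * cα * (1 + |ζ.snd|) ^ α := by
        rw [mul_add]
        gcongr
        · exact min_le_left _ _
        · exact min_le_right _ _
    _ ≤ a * spaceSymbol s ζ.fst + b * (timeSymbol α ζ.snd).re := by
        rw [hspace, mul_assoc, mul_assoc b]
        gcongr
        exact htime _
    _ = (jumpSymbol α s a b ζ).re := by
        simp only [jumpSymbol, Complex.add_re, Complex.re_ofReal_mul, Complex.ofReal_re]
    _ ≤ ‖jumpSymbol α s a b ζ‖ := Complex.re_le_norm _

variable [FiniteDimensional ℝ F] [MeasurableSpace F] [BorelSpace F]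

open SchwartzMap in
lemma fourierMultiplierCLM_jumpSymbol (hα0 : 0 < α) (hα1 : α < 1) (φ : 𝓢(SpaceTime F, ℂ)) :
    fourierMultiplierCLM ℂ (jumpSymbol α s a b) φ =
      (a : ℂ) • fourierMultiplierCLM ℂ (fun ζ : SpaceTime F => (spaceSymbol s ζ.fst : ℂ)) φ +
      (b : ℂ) • fourierMultiplierCLM ℂ (fun ζ : SpaceTime F => timeSymbol α ζ.snd) φ := by
  rw [fourierMultiplierCLM_apply, fourierMultiplierCLM_apply, fourierMultiplierCLM_apply,
    ← FourierTransform.fourierInv_smul, ← FourierTransform.fourierInv_smul,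
    ← FourierTransform.fourierInv_add]
  congr 1
  ext ζ
  rw [smulLeftCLM_apply_apply (hasTemperateGrowth_jumpSymbol hα0 hα1), add_apply, smul_apply,
    smul_apply, smulLeftCLM_apply_apply (hasTemperateGrowth_spaceSymbol_fst s),
    smulLeftCLM_apply_apply (hasTemperateGrowth_timeSymbol_snd hα0 hα1), jumpSymbol]
  simp only [smul_eq_mul]
  ring

end JumpSymbol

section JumpOperator

variable {F : Type*} [NormedAddCommGroup F] [InnerProductSpace ℝ F] [MeasurableSpace F]
  [BorelSpace F] {α s a b : ℝ}

lemma exists_excessiveWeight_pushKernel_time (hα0 : 0 < α) (hα1 : α < 1) (hb : 0 ≤ b) (p : ℝ) :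
    ∃ C, ExcessiveWeight (prodWeight p (1 + α)) (pushKernel (fun σ => b * timeKernel α σ)
      (ContinuousLinearMap.toSpanSingleton ℝ (timeVec F))) C := by
  obtain ⟨C, hC⟩ := exists_excessiveWeight_rpow_neg (F := ℝ) (p := 1 + α)
    (by rw [Module.finrank_self, Nat.cast_one]; linarith) hb
    (fun σ => mul_nonneg hb (timeKernel_nonneg σ)) ((integrable_timeKernel hα0 hα1).const_mul b)
    (fun σ _ => mul_le_mul_of_nonneg_left (timeKernel_le σ) hb)
  refine ⟨C, hC.map (p := fun z => z.snd) (g := fun z => (1 + ‖z.fst‖) ^ (-p)) (prodWeight_pos _ _)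
    (continuous_prodWeight _ _) fun z σ => ?_⟩
  simp only [prodWeight, WithLp.add_fst, WithLp.add_snd, WithLp.smul_fst, WithLp.smul_snd,
    ContinuousLinearMap.toSpanSingleton_apply, timeVec_fst, timeVec_snd, smul_zero, add_zero,
    smul_eq_mul, mul_one]

variable [FiniteDimensional ℝ F]

/-- The jump measure of the integrable part of `jumpOperator α s a b`. -/
noncomputable def jumpMeasure (F : Type*) [NormedAddCommGroup F] [InnerProductSpace ℝ F]
    [FiniteDimensional ℝ F] [MeasurableSpace F] [BorelSpace F] (α s a b : ℝ) :
    Measure (SpaceTime F) :=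
  pushKernel (fun y => a * spaceKernel s y) (spaceIncl F) +
    pushKernel (fun σ => b * timeKernel α σ) (ContinuousLinearMap.toSpanSingleton ℝ (timeVec F))

lemma isFiniteMeasure_jumpMeasure (hα0 : 0 < α) (hα1 : α < 1) (hs0 : 0 < s) (hs1 : s < 1) :
    IsFiniteMeasure (jumpMeasure F α s a b) := by
  have := isFiniteMeasure_pushKernel (J := spaceIncl F)
    ((integrable_spaceKernel (F := F) hs0 hs1).const_mul a)
  have := isFiniteMeasure_pushKernel (J := ContinuousLinearMap.toSpanSingleton ℝ (timeVec F))
    ((integrable_timeKernel hα0 hα1).const_mul b)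
  unfold jumpMeasure
  infer_instance

lemma exists_excessiveWeight_pushKernel_space (hs0 : 0 < s) (hs1 : s < 1) (ha : 0 ≤ a) (q : ℝ) :
    ∃ C, ExcessiveWeight (prodWeight (Module.finrank ℝ F + 2 * s) q)
      (pushKernel (fun y => a * spaceKernel s y) (spaceIncl F)) C := by
  have : 0 < Real.Gamma (Module.finrank ℝ F / 2 + s) := Real.Gamma_pos_of_pos (by positivity)
  obtain ⟨C, hC⟩ := exists_excessiveWeight_rpow_neg (F := F) (p := Module.finrank ℝ F + 2 * s)
    (B := a * Real.Gamma (Module.finrank ℝ F / 2 + s)) (by linarith) (by positivity)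
    (fun y => mul_nonneg ha (spaceKernel_nonneg y)) ((integrable_spaceKernel hs0 hs1).const_mul a)
    (fun y hy => by
      rw [mul_assoc]
      exact mul_le_mul_of_nonneg_left (spaceKernel_le hs0 hy) ha)
  refine ⟨C, hC.map (p := fun z => z.fst) (g := fun z => (1 + ‖z.snd‖) ^ (-q)) (prodWeight_pos _ _)
    (continuous_prodWeight _ _) fun z y => ?_⟩
  rw [prodWeight, WithLp.add_fst, WithLp.add_snd, spaceIncl_fst, spaceIncl_snd, add_zero, mul_comm]

lemma exists_excessiveWeight_jumpMeasure (hα0 : 0 < α) (hα1 : α < 1) (hs0 : 0 < s) (hs1 : s < 1)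
    (ha : 0 ≤ a) (hb : 0 ≤ b) :
    ∃ C, ExcessiveWeight (prodWeight (Module.finrank ℝ F + 2 * s) (1 + α))
      (jumpMeasure F α s a b) C := by
  obtain ⟨_, hspace⟩ := exists_excessiveWeight_pushKernel_space (F := F) hs0 hs1 ha (1 + α)
  obtain ⟨_, htime⟩ := exists_excessiveWeight_pushKernel_time (F := F) hα0 hα1 hb
    (Module.finrank ℝ F + 2 * s)
  exact ⟨_, hspace.add htime⟩

/-- The nonlocal operator `b D_right^α + a (-Δ)^s`, up to the normalization of its two parts. -/
noncomputable def jumpOperator (α s a b : ℝ) (φ : SpaceTime F → ℂ) (z : SpaceTime F) : ℂ :=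
  a • ((Real.Gamma (Module.finrank ℝ F / 2 + s) / 2) • ∫ y : F,
      ‖y‖ ^ (-(Module.finrank ℝ F + 2 * s)) •
        (2 * φ z - φ (z + spaceIncl F y) - φ (z - spaceIncl F y))) +
    b • ∫ σ in Ioi (0 : ℝ), σ ^ (-(1 + α)) • (φ z - φ (z + σ • timeVec F))

lemma integral_add_jumpMeasure (hα0 : 0 < α) (hα1 : α < 1) (hs0 : 0 < s) (hs1 : s < 1)
    (ha : 0 ≤ a) (hb : 0 ≤ b) (φ : 𝓢(SpaceTime F, ℂ)) (z : SpaceTime F) :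
    ∫ y, φ (z + y) ∂(jumpMeasure F α s a b) =
      a • (∫ y : F, spaceKernel s y • φ (z + spaceIncl F y)) +
        b • ∫ σ, timeKernel α σ • φ (z + σ • timeVec F) := by
  have hspace : Integrable fun y : F => a * spaceKernel s y :=
    (integrable_spaceKernel hs0 hs1).const_mul a
  have htime : Integrable fun σ => b * timeKernel α σ := (integrable_timeKernel hα0 hα1).const_mul b
  have hφ : Continuous fun y => φ (z + y) := by fun_prop
  have := isFiniteMeasure_pushKernel (J := spaceIncl F) hspace
  have := isFiniteMeasure_pushKernel (J := ContinuousLinearMap.toSpanSingleton ℝ (timeVec F)) htime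
  rw [jumpMeasure, integral_add_measure (integrable_schwartz_comp _ φ (continuous_const_add z))
      (integrable_schwartz_comp _ φ (continuous_const_add z)),
    integral_pushKernel (fun y => mul_nonneg ha (spaceKernel_nonneg y)) hspace.aemeasurable hφ,
    integral_pushKernel (fun σ => mul_nonneg hb (timeKernel_nonneg σ)) htime.aemeasurable hφ]
  simp only [mul_smul, integral_smul, ContinuousLinearMap.toSpanSingleton_apply]

lemma jumpOperator_eq [Nontrivial F] (hα0 : 0 < α) (hα1 : α < 1) (hs0 : 0 < s) (hs1 : s < 1)
    (ha : 0 ≤ a) (hb : 0 ≤ b) (φ : 𝓢(SpaceTime F, ℂ)) (z : SpaceTime F) :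
    jumpOperator α s a b φ z = SchwartzMap.fourierMultiplierCLM ℂ (jumpSymbol α s a b) φ z -
      ∫ y, φ (z + y) ∂(jumpMeasure F α s a b) := by
  have hspace := integral_norm_rpow_smul_eq hs0 hs1 (p := WithLp.fstL 2 ℝ F ℝ)
    (fun ζ y => inner_spaceIncl ζ y) φ z
  have htime := integral_rpow_smul_sub_eq hα0 hα1 (timeVec F) φ z
  simp only [inner_timeVec] at htime
  rw [jumpOperator, hspace, htime, integral_add_jumpMeasure hα0 hα1 hs0 hs1 ha hb,
    fourierMultiplierCLM_jumpSymbol hα0 hα1]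
  simp only [add_apply, smul_apply, Complex.real_smul, smul_eq_mul,
    WithLp.fstL_apply]
  ring

end JumpOperator

section ChangeOfVariables

variable {V G : Type*} [NormedAddCommGroup V] [NormedSpace ℝ V] [FiniteDimensional ℝ V]
  [MeasurableSpace V] [BorelSpace V] (μ : Measure V) [μ.IsAddHaarMeasure] [NormedAddCommGroup G]

lemma map_addHaar_continuousLinearEquiv (S : V ≃L[ℝ] V) :
    μ.map S = ENNReal.ofReal |LinearMap.det (S : V →ₗ[ℝ] V)|⁻¹ • μ := by
  rw [← abs_inv]
  exact Measure.map_linearMap_addHaar_eq_smul_addHaar μ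
    (LinearEquiv.isUnit_det' S.toLinearEquiv).ne_zero

lemma integrable_comp_continuousLinearEquiv (S : V ≃L[ℝ] V) {f : V → G} (hf : Integrable f μ) :
    Integrable (fun z => f (S z)) μ := by
  refine (S.toHomeomorph.measurableEmbedding.integrable_map_iff (μ := μ) (g := f)).1 ?_
  change Integrable f (μ.map S)
  rw [map_addHaar_continuousLinearEquiv]
  exact hf.smul_measure ENNReal.ofReal_ne_top

variable [NormedSpace ℝ G]

lemma integral_comp_continuousLinearEquiv (S : V ≃L[ℝ] V) (f : V → G) :
    ∫ z, f (S z) ∂μ = |LinearMap.det (S : V →ₗ[ℝ] V)|⁻¹ • ∫ z, f z ∂μ := by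
  refine (S.toHomeomorph.measurableEmbedding.integral_map (μ := μ) f).symm.trans ?_
  change ∫ y, f y ∂(μ.map S) = _
  rw [map_addHaar_continuousLinearEquiv, integral_smul_measure,
    ENNReal.toReal_ofReal (by positivity)]

lemma integral_norm_rpow_smul_comp_smul {r : ℝ} (hr : 0 < r) (p : ℝ) (f : V → G) :
    ∫ y, ‖y‖ ^ (-p) • f (r • y) ∂μ =
      r ^ (p - Module.finrank ℝ V) • ∫ y, ‖y‖ ^ (-p) • f y ∂μ := by
  calc ∫ y, ‖y‖ ^ (-p) • f (r • y) ∂μ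
      = ∫ y, r ^ p • (‖r • y‖ ^ (-p) • f (r • y)) ∂μ := by
        congr 1 with y
        rw [smul_smul, norm_smul, Real.norm_of_nonneg hr.le, Real.mul_rpow hr.le (norm_nonneg y),
          ← mul_assoc, ← Real.rpow_add hr, add_neg_cancel, Real.rpow_zero, one_mul]
    _ = r ^ (p - Module.finrank ℝ V) • ∫ y, ‖y‖ ^ (-p) • f y ∂μ := by
        rw [integral_smul, Measure.integral_comp_smul μ (fun y => ‖y‖ ^ (-p) • f y), smul_smul,
          abs_of_pos (by positivity), ← Real.rpow_natCast, ← Real.rpow_neg hr.le,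
          ← Real.rpow_add hr, sub_eq_add_neg]

lemma integral_Ioi_rpow_smul_comp_mul {r : ℝ} (hr : 0 < r) (q : ℝ) (f : ℝ → G) :
    ∫ σ in Ioi (0 : ℝ), σ ^ (-q) • f (r * σ) =
      r ^ (q - 1) • ∫ σ in Ioi (0 : ℝ), σ ^ (-q) • f σ := by
  calc ∫ σ in Ioi (0 : ℝ), σ ^ (-q) • f (r * σ)
      = ∫ σ in Ioi (0 : ℝ), r ^ q • ((r * σ) ^ (-q) • f (r * σ)) := by
        refine setIntegral_congr_fun measurableSet_Ioi fun σ (hσ : 0 < σ) => ?_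
        rw [smul_smul, Real.mul_rpow hr.le hσ.le, ← mul_assoc, ← Real.rpow_add hr, add_neg_cancel,
          Real.rpow_zero, one_mul]
    _ = r ^ (q - 1) • ∫ σ in Ioi (0 : ℝ), σ ^ (-q) • f σ := by
        rw [integral_smul, integral_comp_mul_left_Ioi (fun σ => σ ^ (-q) • f σ) 0 hr, mul_zero,
          smul_smul, Real.rpow_sub hr, Real.rpow_one, div_eq_mul_inv]

end ChangeOfVariables

section Dilation

variable {F : Type*} [NormedAddCommGroup F] [InnerProductSpace ℝ F]

/-- The anisotropic dilation `(x, t) ↦ (l x, m t)`. -/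
noncomputable def dilation (F : Type*) [NormedAddCommGroup F] [InnerProductSpace ℝ F] (l m : ℝˣ) :
    SpaceTime F ≃L[ℝ] SpaceTime F :=
  ((WithLp.prodContinuousLinearEquiv 2 ℝ F ℝ).trans
    ((ContinuousLinearEquiv.smulLeft l).prodCongr (ContinuousLinearEquiv.smulLeft m))).trans
    (WithLp.prodContinuousLinearEquiv 2 ℝ F ℝ).symm

variable (l m : ℝˣ) (z : SpaceTime F)

@[simp] lemma dilation_fst : (dilation F l m z).fst = (l : ℝ) • z.fst := rfl

@[simp] lemma dilation_snd : (dilation F l m z).snd = (m : ℝ) * z.snd := rfl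

@[simp] lemma dilation_symm_fst : ((dilation F l m).symm z).fst = (l : ℝ)⁻¹ • z.fst := by
  rw [← Units.val_inv_eq_inv_val]
  rfl

@[simp] lemma dilation_symm_snd : ((dilation F l m).symm z).snd = (m : ℝ)⁻¹ * z.snd := by
  rw [← Units.val_inv_eq_inv_val]
  rfl

lemma dilation_spaceIncl (y : F) : dilation F l m (spaceIncl F y) = spaceIncl F ((l : ℝ) • y) := by
  apply SpaceTime.ext <;> simp

lemma dilation_smul_timeVec (σ : ℝ) :
    dilation F l m (σ • timeVec F) = ((m : ℝ) * σ) • timeVec F := by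
  apply SpaceTime.ext <;> simp [mul_comm]

lemma dilation_symmetric (x y : SpaceTime F) :
    inner ℝ (dilation F l m x) y = inner ℝ x (dilation F l m y) := by
  change inner ℝ ((l : ℝ) • x.fst) y.fst + inner ℝ ((m : ℝ) • x.snd) y.snd =
    inner ℝ x.fst ((l : ℝ) • y.fst) + inner ℝ x.snd ((m : ℝ) • y.snd)
  simp only [real_inner_smul_left, real_inner_smul_right]

variable {l m}

lemma norm_dilation_symm_le (hl : 1 ≤ (l : ℝ)) (hm : 1 ≤ (m : ℝ)) :
    ‖((dilation F l m).symm : SpaceTime F →L[ℝ] SpaceTime F)‖ ≤ 1 := by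
  have hinv {r : ℝ} (hr : 1 ≤ r) : ‖r⁻¹‖ ≤ 1 := by
    rw [norm_inv, Real.norm_of_nonneg (by linarith)]
    exact inv_le_one_of_one_le₀ hr
  refine ContinuousLinearMap.opNorm_le_bound _ zero_le_one fun z => ?_
  rw [one_mul, ContinuousLinearEquiv.coe_coe]
  refine le_of_sq_le_sq ?_ (norm_nonneg _)
  rw [WithLp.prod_norm_sq_eq_of_L2, WithLp.prod_norm_sq_eq_of_L2, dilation_symm_fst,
    dilation_symm_snd, norm_smul, norm_mul]
  gcongr
  · exact mul_le_of_le_one_left (norm_nonneg _) (hinv hl)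
  · exact mul_le_of_le_one_left (norm_nonneg _) (hinv hm)

lemma one_add_inv_mul_rpow_neg_le {r x p : ℝ} (hr : 1 ≤ r) (hx : 0 ≤ x) (hp : 0 ≤ p) :
    (1 + r⁻¹ * x) ^ (-p) ≤ r ^ p * (1 + x) ^ (-p) := by
  have hr0 : 0 < r := by linarith
  calc (1 + r⁻¹ * x) ^ (-p) ≤ (r⁻¹ * (1 + x)) ^ (-p) := by
        refine Real.rpow_le_rpow_of_nonpos (by positivity) ?_ (neg_nonpos.2 hp)
        linarith [inv_le_one_of_one_le₀ hr]
    _ = r ^ p * (1 + x) ^ (-p) := by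
        rw [Real.mul_rpow (by positivity) (by positivity), Real.inv_rpow hr0.le,
          Real.rpow_neg hr0.le, inv_inv]

lemma prodWeight_dilation_symm_le {p q : ℝ} (hp : 0 ≤ p) (hq : 0 ≤ q) (hl : 1 ≤ (l : ℝ))
    (hm : 1 ≤ (m : ℝ)) (z : SpaceTime F) :
    prodWeight p q ((dilation F l m).symm z) ≤ (l : ℝ) ^ p * (m : ℝ) ^ q * prodWeight p q z := by
  rw [prodWeight, prodWeight, dilation_symm_fst, dilation_symm_snd, norm_smul, norm_mul, norm_inv,
    norm_inv, Real.norm_of_nonneg (zero_le_one.trans hl),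
    Real.norm_of_nonneg (zero_le_one.trans hm), mul_mul_mul_comm]
  gcongr
  · exact one_add_inv_mul_rpow_neg_le hl (norm_nonneg _) hp
  · exact one_add_inv_mul_rpow_neg_le hm (norm_nonneg _) hq

lemma norm_prodWeight_dilation_symm_mul_le {p q : ℝ} (hp : 0 ≤ p) (hq : 0 ≤ q) (hl : 1 ≤ (l : ℝ))
    (hm : 1 ≤ (m : ℝ)) (u : SpaceTime F → ℂ) (z : SpaceTime F) :
    ‖(prodWeight p q ((dilation F l m).symm z) : ℂ) * u z‖ ≤
      (l : ℝ) ^ p * (m : ℝ) ^ q * ‖(prodWeight p q z : ℂ) * u z‖ := by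
  rw [norm_ofReal_mul (prodWeight_pos _ _ _).le, norm_ofReal_mul (prodWeight_pos _ _ _).le,
    ← mul_assoc]
  gcongr
  exact prodWeight_dilation_symm_le hp hq hl hm z

variable [FiniteDimensional ℝ F]

lemma det_dilation (l m : ℝˣ) : LinearMap.det (dilation F l m : SpaceTime F →ₗ[ℝ] SpaceTime F) =
    (l : ℝ) ^ Module.finrank ℝ F * m := by
  have hconj : (dilation F l m : SpaceTime F →ₗ[ℝ] SpaceTime F) =
      (WithLp.linearEquiv 2 ℝ (F × ℝ)).symm ∘ₗ
        (LinearMap.prodMap ((l : ℝ) • LinearMap.id) ((m : ℝ) • LinearMap.id)) ∘ₗ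
        ((WithLp.linearEquiv 2 ℝ (F × ℝ)).symm.symm : WithLp 2 (F × ℝ) →ₗ[ℝ] F × ℝ) := by
    ext z
    rfl
  rw [hconj, LinearMap.det_conj, LinearMap.det_prodMap]
  simp

variable [MeasurableSpace F] [BorelSpace F] {p q α s a b : ℝ} {u : SpaceTime F → ℂ}

lemma integrable_prodWeight_dilation_symm_mul (hp : 0 ≤ p) (hq : 0 ≤ q) (hl : 1 ≤ (l : ℝ))
    (hm : 1 ≤ (m : ℝ))
    (hu : Integrable fun z => (prodWeight p q z : ℂ) * u z) :
    Integrable fun z => (prodWeight p q ((dilation F l m).symm z) : ℂ) * u z := by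
  have hweight := (continuous_prodWeight (F := F) p q).comp (dilation F l m).symm.continuous
  have hum := aestronglyMeasurable_of_integrable_weight_mul (prodWeight_pos p q)
    (continuous_prodWeight p q) hu
  exact (hu.norm.const_mul _).mono'
    ((Complex.continuous_ofReal.comp hweight).aestronglyMeasurable.mul hum)
    (.of_forall (norm_prodWeight_dilation_symm_mul_le hp hq hl hm u))

lemma integrable_prodWeight_comp_dilation (hp : 0 ≤ p) (hq : 0 ≤ q) (hl : 1 ≤ (l : ℝ))
    (hm : 1 ≤ (m : ℝ))
    (hu : Integrable fun z => (prodWeight p q z : ℂ) * u z) :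
    Integrable fun z => (prodWeight p q z : ℂ) * u (dilation F l m z) := by
  simpa only [ContinuousLinearEquiv.symm_apply_apply] using
    integrable_comp_continuousLinearEquiv volume (dilation F l m)
      (integrable_prodWeight_dilation_symm_mul hp hq hl hm hu)

lemma integral_prodWeight_comp_dilation_le (hp : 0 ≤ p) (hq : 0 ≤ q) (hl : 1 ≤ (l : ℝ))
    (hm : 1 ≤ (m : ℝ))
    (hu : Integrable fun z => (prodWeight p q z : ℂ) * u z) :
    ∫ z, ‖(prodWeight p q z : ℂ) * u (dilation F l m z)‖ ≤
      |LinearMap.det (dilation F l m : SpaceTime F →ₗ[ℝ] SpaceTime F)|⁻¹ *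
        ((l : ℝ) ^ p * (m : ℝ) ^ q) * ∫ z, ‖(prodWeight p q z : ℂ) * u z‖ := by
  have hcov := integral_comp_continuousLinearEquiv volume (dilation F l m)
    (fun z => ‖(prodWeight p q ((dilation F l m).symm z) : ℂ) * u z‖)
  simp only [ContinuousLinearEquiv.symm_apply_apply] at hcov
  rw [hcov, smul_eq_mul, mul_assoc]
  gcongr
  rw [← integral_const_mul]
  exact integral_mono (integrable_prodWeight_dilation_symm_mul hp hq hl hm hu).norm
    (hu.norm.const_mul _) (norm_prodWeight_dilation_symm_mul_le hp hq hl hm u)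

lemma jumpOperator_comp_dilation (hl : 0 < (l : ℝ)) (hm : 0 < (m : ℝ))
    (hlm : (l : ℝ) ^ (2 * s) = (m : ℝ) ^ α) (φ : SpaceTime F → ℂ) (z : SpaceTime F) :
    jumpOperator α s a b (fun z => φ (dilation F l m z)) z =
      (l : ℝ) ^ (2 * s) • jumpOperator α s a b φ (dilation F l m z) := by
  simp only [jumpOperator, map_add, map_sub, dilation_spaceIncl, dilation_smul_timeVec]
  rw [integral_norm_rpow_smul_comp_smul volume hl _ fun y => 2 * φ (dilation F l m z) -
      φ (dilation F l m z + spaceIncl F y) - φ (dilation F l m z - spaceIncl F y),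
    integral_Ioi_rpow_smul_comp_mul hm _ fun σ =>
      φ (dilation F l m z) - φ (dilation F l m z + σ • timeVec F),
    add_sub_cancel_left, add_sub_cancel_left, ← hlm, smul_add, smul_comm b,
    smul_comm (Real.Gamma _ / 2), smul_comm a]

/-- Very weak solutions of the homogeneous equation for the adjoint of `jumpOperator`. -/
def IsJumpSol (α s a b : ℝ) (u : SpaceTime F → ℂ) : Prop :=
  ∀ φ : 𝓢(SpaceTime F, ℂ), ∫ z, u z * jumpOperator α s a b φ z = 0

lemma IsJumpSol.comp_dilation (hu : IsJumpSol α s a b u) (hl : 0 < (l : ℝ)) (hm : 0 < (m : ℝ))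
    (hlm : (l : ℝ) ^ (2 * s) = (m : ℝ) ^ α) :
    IsJumpSol α s a b fun z => u (dilation F l m z) := by
  intro φ
  set φ' := SchwartzMap.compCLMOfContinuousLinearEquiv ℂ (dilation F l m).symm φ with hφ'
  have hφ : (φ : SpaceTime F → ℂ) = fun z => φ' (dilation F l m z) := by
    ext z
    simp [hφ']
  simp only [hφ, jumpOperator_comp_dilation hl hm hlm, mul_smul_comm]
  rw [integral_smul, integral_comp_continuousLinearEquiv volume (dilation F l m)
    (fun z => u z * jumpOperator α s a b φ' z), hu φ', smul_zero, smul_zero]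

end Dilation

section WeakSolutions

variable {F : Type*} [NormedAddCommGroup F] [InnerProductSpace ℝ F] [FiniteDimensional ℝ F]
  [MeasurableSpace F] [BorelSpace F] {α s a b : ℝ} {u : SpaceTime F → ℂ}

/-- Membership in the weighted space `L¹((1 + |x|)^{-(d + 2 s)} (1 + |t|)^{-(1 + α)})`. -/
def WeightedIntegrable (α s : ℝ) (u : SpaceTime F → ℂ) : Prop :=
  Integrable fun z => (prodWeight (Module.finrank ℝ F + 2 * s) (1 + α) z : ℂ) * u z

lemma WeightedIntegrable.aestronglyMeasurable (hu : WeightedIntegrable α s u) :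
    AEStronglyMeasurable u :=
  aestronglyMeasurable_of_integrable_weight_mul (prodWeight_pos _ _) (continuous_prodWeight _ _) hu

lemma WeightedIntegrable.integrable_mul_schwartz (hα0 : 0 ≤ α) (hs0 : 0 ≤ s)
    (hu : WeightedIntegrable α s u) (φ : 𝓢(SpaceTime F, ℂ)) : Integrable fun z => u z * φ z := by
  obtain ⟨B, hB⟩ := exists_schwartz_le_prodWeight (F := F) (p := Module.finrank ℝ F + 2 * s)
    (q := 1 + α) (by positivity) (by positivity) φ
  exact integrable_mul_of_le_weight (prodWeight_pos _ _) (continuous_prodWeight _ _) hu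
    φ.continuous.aestronglyMeasurable hB

lemma WeightedIntegrable.integrable_mul_average (hα0 : 0 < α) (hα1 : α < 1) (hs0 : 0 < s)
    (hs1 : s < 1) (ha : 0 ≤ a) (hb : 0 ≤ b) (hu : WeightedIntegrable α s u)
    (φ : 𝓢(SpaceTime F, ℂ)) :
    Integrable fun z => u z * ∫ y, φ (z + y) ∂(jumpMeasure F α s a b) := by
  have := isFiniteMeasure_jumpMeasure (F := F) (a := a) (b := b) hα0 hα1 hs0 hs1
  obtain ⟨C, hC⟩ := exists_excessiveWeight_jumpMeasure (F := F) hα0 hα1 hs0 hs1 ha hb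
  obtain ⟨B, hB⟩ := exists_schwartz_le_prodWeight (F := F) (p := Module.finrank ℝ F + 2 * s)
    (q := 1 + α) (by positivity) (by positivity) φ
  have hφ : StronglyMeasurable fun p : SpaceTime F × SpaceTime F => φ (p.1 + p.2) :=
    (φ.continuous.comp (continuous_fst.add continuous_snd)).stronglyMeasurable
  exact integrable_mul_of_le_weight hC.pos hC.continuous hu
    hφ.integral_prod_right'.aestronglyMeasurable (hC.norm_integral_add_le hB)

variable [Nontrivial F]

lemma WeightedIntegrable.integrable_mul_jumpOperator (hα0 : 0 < α) (hα1 : α < 1) (hs0 : 0 < s)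
    (hs1 : s < 1) (ha : 0 ≤ a) (hb : 0 ≤ b) (hu : WeightedIntegrable α s u)
    (φ : 𝓢(SpaceTime F, ℂ)) : Integrable fun z => u z * jumpOperator α s a b φ z := by
  simp only [jumpOperator_eq hα0 hα1 hs0 hs1 ha hb, mul_sub]
  exact (hu.integrable_mul_schwartz hα0.le hs0.le _).sub
    (hu.integrable_mul_average hα0 hα1 hs0 hs1 ha hb φ)

lemma jumpOperator_add_smul (hα0 : 0 < α) (hα1 : α < 1) (hs0 : 0 < s) (hs1 : s < 1) (ha : 0 ≤ a)
    (hb : 0 ≤ b) (φ χ : 𝓢(SpaceTime F, ℂ)) (c : ℂ) (z : SpaceTime F) :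
    jumpOperator α s a b (φ + c • χ) z =
      jumpOperator α s a b φ z + c * jumpOperator α s a b χ z := by
  have := isFiniteMeasure_jumpMeasure (F := F) (a := a) (b := b) hα0 hα1 hs0 hs1
  have hint (φ : 𝓢(SpaceTime F, ℂ)) : Integrable (fun y => φ (z + y)) (jumpMeasure F α s a b) :=
    integrable_schwartz_comp _ φ (continuous_const_add z)
  simp only [jumpOperator_eq hα0 hα1 hs0 hs1 ha hb, map_add, map_smul, add_apply, smul_apply,
    smul_eq_mul]
  rw [integral_add (hint φ) ((hint χ).const_mul c), integral_const_mul]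
  ring

lemma WeightedIntegrable.isJumpSol_of_real (hα0 : 0 < α) (hα1 : α < 1) (hs0 : 0 < s) (hs1 : s < 1)
    (ha : 0 ≤ a) (hb : 0 ≤ b) (hu : WeightedIntegrable α s u)
    (h : ∀ g : 𝓢(SpaceTime F, ℝ), ∫ z, u z * jumpOperator α s a b (fun z => (g z : ℂ)) z = 0) :
    IsJumpSol α s a b u := by
  intro φ
  let reφ := SchwartzMap.postcompCLM Complex.reCLM φ
  let imφ := SchwartzMap.postcompCLM Complex.imCLM φ
  let reφ' := SchwartzMap.postcompCLM Complex.ofRealCLM reφ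
  let imφ' := SchwartzMap.postcompCLM Complex.ofRealCLM imφ
  have hφ : φ = reφ' + Complex.I • imφ' := by
    ext z
    change φ z = ((φ z).re : ℂ) + Complex.I * ((φ z).im : ℂ)
    rw [mul_comm, Complex.re_add_im]
  have hre : ∫ z, u z * jumpOperator α s a b reφ' z = 0 := h reφ
  have him : ∫ z, u z * jumpOperator α s a b imφ' z = 0 := h imφ
  have hint := hu.integrable_mul_jumpOperator hα0 hα1 hs0 hs1 ha hb
  rw [hφ]
  simp only [jumpOperator_add_smul hα0 hα1 hs0 hs1 ha hb, mul_add, mul_left_comm _ Complex.I]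
  rw [integral_add (hint reφ') ((hint imφ').const_mul _), integral_const_mul, hre, him, mul_zero,
    add_zero]

lemma IsJumpSol.isAverageSol (hα0 : 0 < α) (hα1 : α < 1) (hs0 : 0 < s) (hs1 : s < 1) (ha : 0 ≤ a)
    (hb : 0 ≤ b) (hu : WeightedIntegrable α s u) (h : IsJumpSol α s a b u) :
    IsAverageSol (SchwartzMap.fourierMultiplierCLM ℂ (jumpSymbol α s a b))
      (jumpMeasure F α s a b) u := by
  intro φ
  have := isFiniteMeasure_jumpMeasure (F := F) (a := a) (b := b) hα0 hα1 hs0 hs1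
  obtain ⟨C, hC⟩ := exists_excessiveWeight_jumpMeasure (F := F) hα0 hα1 hs0 hs1 ha hb
  obtain ⟨B, hB⟩ := exists_schwartz_le_prodWeight (F := F) (p := Module.finrank ℝ F + 2 * s)
    (q := 1 + α) (by positivity) (by positivity) φ
  have hsol := h φ
  simp only [jumpOperator_eq hα0 hα1 hs0 hs1 ha hb, mul_sub] at hsol
  rw [integral_sub (hu.integrable_mul_schwartz hα0.le hs0.le _)
    (hu.integrable_mul_average hα0 hα1 hs0 hs1 ha hb φ), sub_eq_zero] at hsol
  rw [hsol, hC.integral_backAverage_mul' hu φ.continuous hB]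

end WeakSolutions

section SecondDerivatives

lemma eq_zero_of_forall_sq_mul_le_rpow {x C β : ℝ} (hx : 0 ≤ x) (hβ : β < 2)
    (h : ∀ r : ℝ, 1 ≤ r → r ^ 2 * x ≤ C * r ^ β) : x = 0 := by
  have hlim : Filter.Tendsto (fun r : ℝ => C * r ^ (-(2 - β))) Filter.atTop (𝓝 0) := by
    simpa using (tendsto_rpow_neg_atTop (sub_pos.2 hβ)).const_mul C
  refine le_antisymm (ge_of_tendsto hlim ?_) hx
  filter_upwards [Filter.eventually_ge_atTop 1] with r hr
  have hr0 : 0 < r := by linarith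
  rw [neg_sub, Real.rpow_sub hr0, Real.rpow_two, ← mul_div_assoc, le_div_iff₀ (by positivity),
    mul_comm]
  exact h r hr

lemma exists_unit_rpow_eq {r p : ℝ} (hr : 1 ≤ r) (hp : 0 < p) {q : ℝ} (hq : 0 ≤ q) :
    ∃ l : ℝˣ, 1 ≤ (l : ℝ) ∧ (l : ℝ) ^ p = r ^ q := by
  have hr0 : 0 < r := by linarith
  refine ⟨Units.mk0 (r ^ (q / p)) (by positivity), Real.one_le_rpow hr (by positivity), ?_⟩
  rw [Units.val_mk0, ← Real.rpow_mul hr0.le, div_mul_cancel₀ q hp.ne']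

lemma lineDeriv_lineDeriv_comp_of_eq_smul {V : Type*} [NormedAddCommGroup V] [NormedSpace ℝ V]
    (S : V ≃L[ℝ] V) {r : ℝ} {v v' : V} (hv : S v = r • v) (hv' : S v' = r • v') (η : 𝓢(V, ℂ))
    (z : V) : (∂_{v} (∂_{v'} (SchwartzMap.compCLMOfContinuousLinearEquiv ℂ S η))) z =
      r ^ 2 • (∂_{v} (∂_{v'} η)) (S z) := by
  rw [SchwartzMap.lineDerivOp_compCLMOfContinuousLinearEquiv,
    SchwartzMap.lineDerivOp_compCLMOfContinuousLinearEquiv, hv, hv',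
    LineDeriv.lineDerivOp_left_smul, LineDeriv.lineDerivOp_left_smul, LineDeriv.lineDerivOp_smul,
    smul_smul, ← sq]
  rfl

variable {F : Type*} [NormedAddCommGroup F] [InnerProductSpace ℝ F] [FiniteDimensional ℝ F]
  [MeasurableSpace F] [BorelSpace F] {α s a b : ℝ} {u : SpaceTime F → ℂ}

lemma ae_comp_dilation_eq {u₀ : F → ℂ} (hu₀ : ∀ᵐ z, u z = u₀ z.fst) (l m : ℝˣ) :
    ∀ᵐ z, u (dilation F l m z) = u₀ ((l : ℝ) • z.fst) := by
  have hquasi : Measure.QuasiMeasurePreserving (dilation F l m) volume volume :=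
    ⟨(dilation F l m).continuous.measurable, by
      rw [map_addHaar_continuousLinearEquiv]
      exact Measure.smul_absolutelyContinuous⟩
  exact hquasi.ae hu₀

lemma WeightedIntegrable.integral_comp_dilation_le (hα0 : 0 ≤ α) (hs0 : 0 ≤ s)
    (hu : WeightedIntegrable α s u) {l m : ℝˣ} (hl : 1 ≤ (l : ℝ)) (hm : 1 ≤ (m : ℝ)) :
    ∫ z, ‖(prodWeight (Module.finrank ℝ F + 2 * s) (1 + α) z : ℂ) * u (dilation F l m z)‖ ≤
      (l : ℝ) ^ (2 * s) * (m : ℝ) ^ α *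
        ∫ z, ‖(prodWeight (Module.finrank ℝ F + 2 * s) (1 + α) z : ℂ) * u z‖ := by
  have hl0 : 0 < (l : ℝ) := by linarith
  have hm0 : 0 < (m : ℝ) := by linarith
  refine (integral_prodWeight_comp_dilation_le (p := Module.finrank ℝ F + 2 * s) (q := 1 + α)
    (by positivity) (by positivity) hl hm hu).trans_eq ?_
  rw [det_dilation, abs_of_pos (by positivity), Real.rpow_add hl0, Real.rpow_natCast,
    Real.rpow_add hm0, Real.rpow_one]
  field_simp

variable [Nontrivial F]

open SchwartzMap in
/-- The a priori bound is uniform over dilations, while a second derivative of the test function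
along an eigendirection gains the square of the eigenvalue. -/
lemma IsJumpSol.exists_sq_mul_norm_integral_le (hα0 : 0 < α) (hα1 : α < 1) (hs0 : 0 < s)
    (hs1 : s < 1) (ha : 0 < a) (hb : 0 < b) (hu : WeightedIntegrable α s u)
    (h : IsJumpSol α s a b u) (v v' : SpaceTime F) (η : 𝓢(SpaceTime F, ℂ)) :
    ∃ K, 0 ≤ K ∧ ∀ l m : ℝˣ, 1 ≤ (l : ℝ) → 1 ≤ (m : ℝ) → (l : ℝ) ^ (2 * s) = (m : ℝ) ^ α → ∀ r : ℝ,
      dilation F l m v = r • v → dilation F l m v' = r • v' →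
      r ^ 2 * ‖∫ z, u z * (∂_{v} (∂_{v'} η)) z‖ ≤
        K * ∫ z, ‖(prodWeight (Module.finrank ℝ F + 2 * s) (1 + α) z : ℂ) *
          u (dilation F l m z)‖ := by
  have := isFiniteMeasure_jumpMeasure (F := F) (a := a) (b := b) hα0 hα1 hs0 hs1
  obtain ⟨C, hC⟩ := exists_excessiveWeight_jumpMeasure (F := F) hα0 hα1 hs0 hs1 ha.le hb.le
  obtain ⟨M, hM⟩ := exists_one_le_pow_mul_prodWeight (F := F) (p := Module.finrank ℝ F + 2 * s)
    (q := 1 + α) (by positivity) (by positivity)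
  obtain ⟨c, δ, hc, hδ, hmc⟩ := exists_mul_rpow_le_norm_jumpSymbol (F := F) hα0 hα1 hs0 hs1 ha hb
  obtain ⟨K, hK⟩ := exists_norm_integral_mul_comp_le hC one_pos hM
    (hasTemperateGrowth_jumpSymbol hα0 hα1) (hasTemperateGrowth_secondDerivSymbol v v') hc hδ hmc η
  refine ⟨|K|, abs_nonneg K, fun l m hl hm hlm r hv hv' => ?_⟩
  have hui : WeightedIntegrable α s fun z => u (dilation F l m z) :=
    integrable_prodWeight_comp_dilation (by positivity) (by positivity) hl hm hu
  have hsol := (h.comp_dilation (by linarith) (by linarith) hlm).isAverageSol hα0 hα1 hs0 hs1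
    ha.le hb.le hui
  have hbound := hK (dilation F l m) (dilation_symmetric l m) (norm_dilation_symm_le hl hm) _ hui
    hsol
  have hdet : 0 < |LinearMap.det (dilation F l m : SpaceTime F →ₗ[ℝ] SpaceTime F)|⁻¹ :=
    inv_pos.2 (abs_pos.2 (LinearEquiv.isUnit_det' (dilation F l m).toLinearEquiv).ne_zero)
  simp only [← lineDeriv_lineDeriv_eq, lineDeriv_lineDeriv_comp_of_eq_smul _ hv hv',
    mul_smul_comm] at hbound
  rw [integral_smul, integral_comp_continuousLinearEquiv volume (dilation F l m)
    (fun z => u z * (∂_{v} (∂_{v'} η) : 𝓢(SpaceTime F, ℂ)) z), norm_smul, norm_smul,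
    Real.norm_of_nonneg (sq_nonneg r), Real.norm_of_nonneg hdet.le, mul_left_comm, mul_comm K,
    mul_assoc] at hbound
  refine (le_of_mul_le_mul_left hbound hdet).trans ?_
  gcongr
  exact le_abs_self K

lemma IsJumpSol.integral_mul_time_deriv_eq_zero (hα0 : 0 < α) (hα1 : α < 1) (hs0 : 0 < s)
    (hs1 : s < 1) (ha : 0 < a) (hb : 0 < b) (hu : WeightedIntegrable α s u)
    (h : IsJumpSol α s a b u) (η : 𝓢(SpaceTime F, ℂ)) :
    ∫ z, u z * (∂_{timeVec F} (∂_{timeVec F} η)) z = 0 := by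
  obtain ⟨K, hK0, hK⟩ := h.exists_sq_mul_norm_integral_le hα0 hα1 hs0 hs1 ha hb hu
    (timeVec F) (timeVec F) η
  set N := ∫ z, ‖(prodWeight (Module.finrank ℝ F + 2 * s) (1 + α) z : ℂ) * u z‖
  rw [← norm_eq_zero]
  refine eq_zero_of_forall_sq_mul_le_rpow (C := K * N) (β := 2 * α) (norm_nonneg _) (by linarith)
    fun r hr => ?_
  have hr0 : 0 < r := by linarith
  obtain ⟨l, hl, hlr⟩ := exists_unit_rpow_eq hr (p := 2 * s) (by positivity) hα0.le
  set m : ℝˣ := Units.mk0 r hr0.ne'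
  have htime : dilation F l m (timeVec F) = r • timeVec F := by
    simpa [m] using dilation_smul_timeVec (F := F) l m 1
  calc _ ≤ K * ∫ z, ‖(prodWeight (Module.finrank ℝ F + 2 * s) (1 + α) z : ℂ) *
          u (dilation F l m z)‖ := hK l m hl hr hlr r htime htime
    _ ≤ K * (r ^ α * r ^ α * N) := by
        gcongr
        exact hlr ▸ hu.integral_comp_dilation_le hα0.le hs0.le hl (m := m) hr
    _ = K * N * r ^ (2 * α) := by
        rw [← Real.rpow_add hr0, ← two_mul]
        ring

/-- For a function of space alone the time scale is free, and is taken to be one in the norm. -/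
lemma IsJumpSol.integral_mul_space_deriv_eq_zero (hα0 : 0 < α) (hα1 : α < 1) (hs0 : 0 < s)
    (hs1 : s < 1) (ha : 0 < a) (hb : 0 < b) (hu : WeightedIntegrable α s u)
    (h : IsJumpSol α s a b u) {u₀ : F → ℂ} (hu₀ : ∀ᵐ z, u z = u₀ z.fst) (y y' : F)
    (η : 𝓢(SpaceTime F, ℂ)) :
    ∫ z, u z * (∂_{spaceIncl F y} (∂_{spaceIncl F y'} η)) z = 0 := by
  obtain ⟨K, hK0, hK⟩ := h.exists_sq_mul_norm_integral_le hα0 hα1 hs0 hs1 ha hb hu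
    (spaceIncl F y) (spaceIncl F y') η
  set N := ∫ z, ‖(prodWeight (Module.finrank ℝ F + 2 * s) (1 + α) z : ℂ) * u z‖
  rw [← norm_eq_zero]
  refine eq_zero_of_forall_sq_mul_le_rpow (C := K * N) (β := 2 * s) (norm_nonneg _) (by linarith)
    fun r hr => ?_
  have hr0 : 0 < r := by linarith
  obtain ⟨m, hm, hmr⟩ := exists_unit_rpow_eq hr hα0 (q := 2 * s) (by positivity)
  set l : ℝˣ := Units.mk0 r hr0.ne'
  have hspace (y : F) : dilation F l m (spaceIncl F y) = r • spaceIncl F y := by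
    rw [dilation_spaceIncl, map_smul, Units.val_mk0]
  calc _ ≤ K * ∫ z, ‖(prodWeight (Module.finrank ℝ F + 2 * s) (1 + α) z : ℂ) *
          u (dilation F l m z)‖ := hK l m hr hm hmr.symm r (hspace y) (hspace y')
    _ = K * ∫ z, ‖(prodWeight (Module.finrank ℝ F + 2 * s) (1 + α) z : ℂ) *
          u (dilation F l 1 z)‖ := by
        congr 1
        refine integral_congr_ae ?_
        filter_upwards [ae_comp_dilation_eq hu₀ l m, ae_comp_dilation_eq hu₀ l 1] with z hzm hz1
        rw [hzm, hz1]
    _ ≤ K * (r ^ (2 * s) * 1 ^ α * N) := by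
        gcongr
        exact hu.integral_comp_dilation_le hα0.le hs0.le (l := l) hr (m := 1) le_rfl
    _ = K * N * r ^ (2 * s) := by
        rw [Real.one_rpow]
        ring

end SecondDerivatives

section TranslatePairing

variable {V : Type*} [NormedAddCommGroup V] {M : ℕ}

/-- The polynomially decaying weight `(1 + ‖z‖)^{-M}`. -/
noncomputable def temperateWeight (M : ℕ) (z : V) : ℝ := ((1 + ‖z‖) ^ M)⁻¹

lemma temperateWeight_pos (M : ℕ) (z : V) : 0 < temperateWeight M z := by
  unfold temperateWeight
  positivity

lemma continuous_temperateWeight (M : ℕ) : Continuous (temperateWeight M : V → ℝ) := by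
  unfold temperateWeight
  exact Continuous.inv₀ (by fun_prop) fun z => by positivity

lemma temperateWeight_sub_le {y : V} {R : ℝ} (hy : ‖y‖ ≤ R) (z : V) :
    temperateWeight M (z - y) ≤ (1 + R) ^ M * temperateWeight M z := by
  unfold temperateWeight
  rw [← div_eq_mul_inv, le_div_iff₀ (by positivity), inv_mul_le_iff₀ (by positivity), ← mul_pow]
  have htri := norm_add_le (z - y) y
  rw [sub_add_cancel] at htri
  gcongr
  nlinarith [norm_nonneg (z - y), norm_nonneg y]

lemma exists_schwartz_sub_le_temperateWeight [NormedSpace ℝ V] (ψ : 𝓢(V, ℂ)) (M : ℕ) (R : ℝ) :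
    ∃ B, ∀ y, ‖y‖ ≤ R → ∀ z, ‖ψ (z - y)‖ ≤ B * temperateWeight M z := by
  obtain ⟨B, hB⟩ := exists_schwartz_le_weight (M := M) (temperateWeight_pos M) one_pos
    (fun z => (mul_inv_cancel₀ (by positivity)).ge) ψ
  have hB0 : 0 ≤ B :=
    nonneg_of_mul_nonneg_left ((norm_nonneg _).trans (hB 0)) (temperateWeight_pos M 0)
  refine ⟨B * (1 + R) ^ M, fun y hy z => (hB (z - y)).trans ?_⟩
  rw [mul_assoc]
  gcongr
  exact temperateWeight_sub_le hy z

lemma exists_norm_mul_schwartz_sub_le [NormedSpace ℝ V] (ψ : 𝓢(V, ℂ)) (M : ℕ) (u : V → ℂ) (R : ℝ) :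
    ∃ B, ∀ y, ‖y‖ ≤ R → ∀ z, ‖u z * ψ (z - y)‖ ≤ B * ‖(temperateWeight M z : ℂ) * u z‖ := by
  obtain ⟨B, hB⟩ := exists_schwartz_sub_le_temperateWeight ψ M R
  exact ⟨B, fun y hy z =>
    norm_mul_le_mul_norm_ofReal_mul (temperateWeight_pos M z).le (hB y hy z) (u z)⟩

lemma lineDerivOp_compSubConstCLM [NormedSpace ℝ V] (ψ : 𝓢(V, ℂ)) (v a : V) :
    ∂_{v} (ψ.compSubConstCLM ℂ a) = (∂_{v} ψ).compSubConstCLM ℂ a := by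
  ext z
  rw [SchwartzMap.compSubConstCLM_apply, SchwartzMap.lineDerivOp_apply_eq_fderiv,
    SchwartzMap.lineDerivOp_apply_eq_fderiv]
  exact congrArg (fun L : V →L[ℝ] ℂ => L v) (fderiv_comp_sub (f := ψ) a)

variable [MeasureSpace V]

/-- Integrability against the polynomially decaying weight `(1 + ‖z‖)^{-M}`. -/
def TemperateIntegrable (M : ℕ) (u : V → ℂ) : Prop :=
  Integrable fun z => (temperateWeight M z : ℂ) * u z

variable {u : V → ℂ}

section

variable [BorelSpace V]

lemma TemperateIntegrable.aestronglyMeasurable (hu : TemperateIntegrable M u) :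
    AEStronglyMeasurable u :=
  aestronglyMeasurable_of_integrable_weight_mul (temperateWeight_pos M)
    (continuous_temperateWeight M) hu

lemma TemperateIntegrable.locallyIntegrable [LocallyCompactSpace V] (hu : TemperateIntegrable M u) :
    LocallyIntegrable u := by
  have hinv : Continuous fun z : V => ((temperateWeight M z : ℂ))⁻¹ :=
    (Complex.continuous_ofReal.comp (continuous_temperateWeight M)).inv₀ fun z =>
      Complex.ofReal_ne_zero.2 (temperateWeight_pos M z).ne'
  refine (Integrable.locallyIntegrable hu).continuous_mul hinv |>.congr (.of_forall fun z => ?_)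
  exact inv_mul_cancel_left₀ (Complex.ofReal_ne_zero.2 (temperateWeight_pos M z).ne') (u z)

end

variable [NormedSpace ℝ V]

/-- The pairing of `u` with the translate of `ψ` by `y`. -/
noncomputable def translatePairing (u : V → ℂ) (ψ : 𝓢(V, ℂ)) (y : V) : ℂ := ∫ z, u z * ψ (z - y)

lemma translatePairing_zero (u : V → ℂ) (ψ : 𝓢(V, ℂ)) :
    translatePairing u ψ 0 = ∫ z, u z * ψ z := by
  simp only [translatePairing, sub_zero]

lemma translatePairing_lineDeriv_eq_zero {v : V}
    (h : ∀ φ : 𝓢(V, ℂ), ∫ z, u z * (∂_{v} φ) z = 0) (ψ : 𝓢(V, ℂ)) (y : V) :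
    translatePairing u (∂_{v} ψ) y = 0 := by
  have htranslate := h (ψ.compSubConstCLM ℂ y)
  rwa [lineDerivOp_compSubConstCLM] at htranslate

lemma translatePairing_lineDeriv_lineDeriv_eq_zero {v v' : V}
    (h : ∀ φ : 𝓢(V, ℂ), ∫ z, u z * (∂_{v} (∂_{v'} φ)) z = 0) (ψ : 𝓢(V, ℂ)) (y : V) :
    translatePairing u (∂_{v} (∂_{v'} ψ)) y = 0 := by
  have htranslate := h (ψ.compSubConstCLM ℂ y)
  rwa [lineDerivOp_compSubConstCLM, lineDerivOp_compSubConstCLM] at htranslate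

namespace TemperateIntegrable

variable [BorelSpace V]

lemma integrable_mul_schwartz_sub (hu : TemperateIntegrable M u) (ψ : 𝓢(V, ℂ)) (y : V) :
    Integrable fun z => u z * ψ (z - y) := by
  obtain ⟨B, hB⟩ := exists_schwartz_sub_le_temperateWeight ψ M ‖y‖
  exact integrable_mul_of_le_weight (temperateWeight_pos M) (continuous_temperateWeight M) hu
    (by fun_prop : Continuous fun z => ψ (z - y)).aestronglyMeasurable (hB y le_rfl)

lemma integrable_mul_schwartz (hu : TemperateIntegrable M u) (ψ : 𝓢(V, ℂ)) :
    Integrable fun z => u z * ψ z := by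
  simpa only [sub_zero] using hu.integrable_mul_schwartz_sub ψ 0

lemma hasDerivAt_translatePairing (hu : TemperateIntegrable M u) (ψ : 𝓢(V, ℂ)) (y v : V) (r : ℝ) :
    HasDerivAt (fun r : ℝ => translatePairing u ψ (y + r • v))
      (-translatePairing u (∂_{v} ψ) (y + r • v)) r := by
  let χ : 𝓢(V, ℂ) := ∂_{v} ψ
  obtain ⟨B, hB⟩ := exists_norm_mul_schwartz_sub_le χ M u (‖y‖ + (|r| + 1) * ‖v‖)
  have hderiv (z : V) (r : ℝ) :
      HasDerivAt (fun r : ℝ => u z * ψ (z - (y + r • v))) (-(u z * χ (z - (y + r • v)))) r := by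
    have hline : HasDerivAt (fun r : ℝ => z - (y + r • v)) (-v) r := by
      simpa using (((hasDerivAt_id r).smul_const v).const_add y).const_sub z
    have hψ := (ψ.differentiableAt (x := z - (y + r • v))).hasFDerivAt.comp_hasDerivAt r hline
    rw [map_neg] at hψ
    rw [← mul_neg, SchwartzMap.lineDerivOp_apply_eq_fderiv]
    exact hψ.const_mul (u z)
  have hbound (z : V) (r' : ℝ) (hr' : r' ∈ Metric.ball r 1) :
      ‖-(u z * χ (z - (y + r' • v)))‖ ≤ B * ‖(temperateWeight M z : ℂ) * u z‖ := by
    rw [norm_neg]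
    refine hB _ ((norm_add_le _ _).trans ?_) z
    rw [norm_smul, Real.norm_eq_abs]
    gcongr
    rw [Metric.mem_ball, Real.dist_eq] at hr'
    linarith [abs_sub_abs_le_abs_sub r' r]
  refine (hasDerivAt_integral_of_dominated_loc_of_deriv_le (Metric.ball_mem_nhds r one_pos)
    (.of_forall fun r => (hu.integrable_mul_schwartz_sub ψ _).aestronglyMeasurable)
    (hu.integrable_mul_schwartz_sub ψ _)
    (hu.integrable_mul_schwartz_sub χ _).neg.aestronglyMeasurable (.of_forall hbound)
    (hu.norm.const_mul B) (.of_forall fun z r _ => hderiv z r)).2.congr_deriv ?_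
  exact integral_neg _

lemma continuous_translatePairing (hu : TemperateIntegrable M u) (ψ : 𝓢(V, ℂ)) :
    Continuous (translatePairing u ψ) := by
  refine continuous_iff_continuousAt.2 fun y => ?_
  obtain ⟨B, hB⟩ := exists_norm_mul_schwartz_sub_le ψ M u (‖y‖ + 1)
  refine continuousAt_of_dominated (bound := fun z => B * ‖(temperateWeight M z : ℂ) * u z‖)
    (.of_forall fun y => (hu.integrable_mul_schwartz_sub ψ y).aestronglyMeasurable)
    ?_ (hu.norm.const_mul B) (.of_forall fun z => by fun_prop)
  filter_upwards [Metric.ball_mem_nhds y one_pos] with y' hy'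
  rw [Metric.mem_ball, dist_eq_norm] at hy'
  exact .of_forall (hB y' (by linarith [norm_sub_norm_le y' y]))

lemma translatePairing_add_smul_of_lineDeriv_eq_zero (hu : TemperateIntegrable M u) {ψ : 𝓢(V, ℂ)}
    {v : V} (h : ∀ y, translatePairing u (∂_{v} ψ) y = 0) (y : V) (r : ℝ) :
    translatePairing u ψ (y + r • v) = translatePairing u ψ y := by
  have hderiv (r : ℝ) : HasDerivAt (fun r : ℝ => translatePairing u ψ (y + r • v)) 0 r := by
    simpa only [h, neg_zero] using hu.hasDerivAt_translatePairing ψ y v r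
  simpa only [zero_smul, add_zero] using
    is_const_of_deriv_eq_zero (fun r => (hderiv r).differentiableAt) (fun r => (hderiv r).deriv) r 0

lemma translatePairing_smul (hu : TemperateIntegrable M u) {v : V}
    (h : ∀ φ : 𝓢(V, ℂ), ∫ z, u z * (∂_{v} (∂_{v} φ)) z = 0) (ψ : 𝓢(V, ℂ)) (r : ℝ) :
    translatePairing u ψ (r • v) =
      translatePairing u ψ 0 - r * translatePairing u (∂_{v} ψ) 0 := by
  have hderiv (r : ℝ) : HasDerivAt (fun r : ℝ => translatePairing u ψ (0 + r • v) +
      r * translatePairing u (∂_{v} ψ) 0) 0 r := by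
    have hsum := (hu.hasDerivAt_translatePairing ψ 0 v r).add
      ((Complex.ofRealCLM.hasDerivAt (x := r)).mul_const (translatePairing u (∂_{v} ψ) 0))
    rw [hu.translatePairing_add_smul_of_lineDeriv_eq_zero
      (translatePairing_lineDeriv_lineDeriv_eq_zero h ψ)] at hsum
    exact hsum.congr_deriv (by simp)
  have hconst :=
    is_const_of_deriv_eq_zero (fun r => (hderiv r).differentiableAt) (fun r => (hderiv r).deriv) r 0
  simp only [zero_add, zero_smul, Complex.ofReal_zero, zero_mul, add_zero] at hconst
  rw [← hconst, add_sub_cancel_right]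

lemma translatePairing_add (hu : TemperateIntegrable M u) {v v' : V}
    (h : ∀ φ : 𝓢(V, ℂ), ∫ z, u z * (∂_{v} (∂_{v'} φ)) z = 0) (ψ : 𝓢(V, ℂ)) :
    translatePairing u ψ (v + v') =
      translatePairing u ψ v + translatePairing u ψ v' - translatePairing u ψ 0 := by
  have hderiv (r : ℝ) : HasDerivAt (fun r : ℝ => translatePairing u ψ (v + r • v') -
      translatePairing u ψ (0 + r • v')) 0 r := by
    have hdiff := (hu.hasDerivAt_translatePairing ψ v v' r).sub
      (hu.hasDerivAt_translatePairing ψ 0 v' r)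
    have htranslate := hu.translatePairing_add_smul_of_lineDeriv_eq_zero
      (translatePairing_lineDeriv_lineDeriv_eq_zero h ψ) (0 + r • v') 1
    rw [one_smul, add_right_comm, zero_add] at htranslate
    rwa [htranslate, sub_self] at hdiff
  have hconst :=
    is_const_of_deriv_eq_zero (fun r => (hderiv r).differentiableAt) (fun r => (hderiv r).deriv) 1 0
  simp only [one_smul, zero_smul, zero_add, add_zero] at hconst
  linear_combination hconst

lemma exists_translatePairing_eq_add (hu : TemperateIntegrable M u)
    (h : ∀ (v v' : V) (φ : 𝓢(V, ℂ)), ∫ z, u z * (∂_{v} (∂_{v'} φ)) z = 0) (ψ : 𝓢(V, ℂ)) :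
    ∃ l : V →L[ℝ] ℂ, ∀ y, translatePairing u ψ y = translatePairing u ψ 0 + l y := by
  have hadd (v v' : V) : translatePairing u ψ (v + v') - translatePairing u ψ 0 =
      (translatePairing u ψ v - translatePairing u ψ 0) +
        (translatePairing u ψ v' - translatePairing u ψ 0) := by
    rw [hu.translatePairing_add (h v v') ψ]
    ring
  refine ⟨(AddMonoidHom.mk' _ hadd).toRealLinearMap
    ((hu.continuous_translatePairing ψ).sub continuous_const), fun y => ?_⟩
  exact (add_sub_cancel _ _).symm

end TemperateIntegrable

end TranslatePairing

section Affine

variable {V : Type*} [NormedAddCommGroup V] [NormedSpace ℝ V] [FiniteDimensional ℝ V]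
  [MeasureSpace V] [BorelSpace V] {u : V → ℂ} {M : ℕ}

lemma ae_eq_of_forall_integral_mul_schwartz_eq {w : V → ℂ} (hu : LocallyIntegrable u)
    (hw : LocallyIntegrable w)
    (h : ∀ ψ : 𝓢(V, ℂ), HasCompactSupport ψ → ∫ z, u z * ψ z = ∫ z, w z * ψ z) :
    ∀ᵐ z, u z = w z := by
  refine ae_eq_of_integral_contDiff_smul_eq hu hw fun g hg hgs => ?_
  have hgs' : HasCompactSupport fun z => (g z : ℂ) := hgs.comp_left (g := Complex.ofReal) rfl
  simp only [Complex.real_smul, mul_comm (g _ : ℂ)]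
  exact h (hgs'.toSchwartzMap (Complex.ofRealCLM.contDiff.comp hg)) hgs'

variable [(volume : Measure V).IsAddHaarMeasure]

variable (V) in
lemma exists_even_schwartz_integral_eq_one :
    ∃ χ : 𝓢(V, ℂ), HasCompactSupport χ ∧ (∀ z, χ (-z) = χ z) ∧ ∫ z, χ z = 1 := by
  let f : ContDiffBump (0 : V) := ⟨1, 2, one_pos, one_lt_two⟩
  have hs : HasCompactSupport fun z => (f.normed volume z : ℂ) :=
    f.hasCompactSupport_normed.comp_left (g := Complex.ofReal) rfl
  refine ⟨hs.toSchwartzMap (Complex.ofRealCLM.contDiff.comp f.contDiff_normed), hs,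
    fun z => congrArg Complex.ofReal (f.normed_neg z), ?_⟩
  exact integral_complex_ofReal.trans (congrArg Complex.ofReal f.integral_normed)

lemma integral_mul_eq_of_add_neg_eq {g χ : V → ℂ} {c : ℂ} (hχ : ∀ y, χ (-y) = χ y)
    (hi : Integrable fun y => g y * χ y) (hg : ∀ y, g y + g (-y) = 2 * c) :
    ∫ y, g y * χ y = c * ∫ y, χ y := by
  have hneg : ∫ y, g (-y) * χ y = ∫ y, g y * χ y := by
    simpa only [hχ] using integral_neg_eq_self (fun y => g y * χ y) volume
  have hi' : Integrable fun y => g (-y) * χ y := by simpa only [hχ] using hi.comp_neg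
  have hsum : ∫ y, (g y * χ y + g (-y) * χ y) = 2 * c * ∫ y, χ y := by
    simp only [← add_mul, hg, integral_const_mul]
  rw [integral_add hi hi', hneg] at hsum
  linear_combination hsum / 2

namespace TemperateIntegrable

lemma integrable_prod_mul_schwartz_sub_mul (hu : TemperateIntegrable M u) (ψ : 𝓢(V, ℂ))
    {χ : 𝓢(V, ℂ)} (hχ : HasCompactSupport χ) :
    Integrable (fun p : V × V => u p.1 * ψ (p.1 - p.2) * χ p.2) (volume.prod volume) := by
  obtain ⟨R, hR⟩ := hχ.isCompact.isBounded.exists_norm_le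
  obtain ⟨B, hB⟩ := exists_norm_mul_schwartz_sub_le ψ M u R
  refine ((hu.norm.const_mul B).mul_prod χ.integrable.norm).mono'
    ((hu.aestronglyMeasurable.comp_fst.mul (by fun_prop :
      Continuous fun p : V × V => ψ (p.1 - p.2)).aestronglyMeasurable).mul
      (χ.continuous.comp continuous_snd).aestronglyMeasurable) (.of_forall fun p => ?_)
  rw [norm_mul]
  by_cases hp : p.2 ∈ tsupport χ
  · gcongr
    exact hB p.2 (hR p.2 hp) p.1
  · simp [image_eq_zero_of_notMem_tsupport hp]

lemma integral_translatePairing_mul (hu : TemperateIntegrable M u) (ψ : 𝓢(V, ℂ)) {χ : 𝓢(V, ℂ)}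
    (hχ : HasCompactSupport χ) :
    ∫ y, translatePairing u ψ y * χ y = ∫ z, u z * ∫ y, ψ (z - y) * χ y := by
  have hswap := integral_integral_swap (f := fun z y => u z * ψ (z - y) * χ y)
    (hu.integrable_prod_mul_schwartz_sub_mul ψ hχ)
  simp only [integral_mul_const] at hswap
  simp only [translatePairing, ← hswap, mul_assoc, integral_const_mul]

lemma integral_translatePairing_mul_comm (hu : TemperateIntegrable M u) {ψ χ : 𝓢(V, ℂ)}
    (hψ : HasCompactSupport ψ) (hχ : HasCompactSupport χ) :
    ∫ y, translatePairing u ψ y * χ y = ∫ y, translatePairing u χ y * ψ y := by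
  rw [hu.integral_translatePairing_mul ψ hχ, hu.integral_translatePairing_mul χ hψ]
  congr 1 with z
  rw [← integral_sub_left_eq_self _ volume z]
  simp [mul_comm]

lemma ae_eq_add_smul (hu : TemperateIntegrable M u) {v : V}
    (h : ∀ φ : 𝓢(V, ℂ), ∫ z, u z * (∂_{v} φ) z = 0) (r : ℝ) : ∀ᵐ z, u (z + r • v) = u z := by
  have hloc : LocallyIntegrable fun z => u (z + r • v) :=
    (locallyIntegrable_map_homeomorph (Homeomorph.addRight (r • v))).1 <| by
      rw [Homeomorph.coe_addRight, map_add_right_eq_self]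
      exact hu.locallyIntegrable
  refine ae_eq_of_forall_integral_mul_schwartz_eq hloc hu.locallyIntegrable fun ψ _ => ?_
  have hconst := hu.translatePairing_add_smul_of_lineDeriv_eq_zero
    (translatePairing_lineDeriv_eq_zero h ψ) 0 r
  rw [zero_add, translatePairing_zero, translatePairing,
    ← integral_add_right_eq_self _ (r • v)] at hconst
  simpa only [add_sub_cancel_right] using hconst

/-- The mean value property: averaging an affine function against an even mollifier does nothing. -/
lemma ae_eq_translatePairing (hu : TemperateIntegrable M u)
    (h : ∀ (v v' : V) (φ : 𝓢(V, ℂ)), ∫ z, u z * (∂_{v} (∂_{v'} φ)) z = 0) {χ : 𝓢(V, ℂ)}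
    (hχs : HasCompactSupport χ) (hχe : ∀ z, χ (-z) = χ z) (hχ : ∫ z, χ z = 1) :
    ∀ᵐ z, u z = translatePairing u χ z := by
  refine ae_eq_of_forall_integral_mul_schwartz_eq hu.locallyIntegrable
    (hu.continuous_translatePairing χ).locallyIntegrable fun ψ hψ => ?_
  rw [← hu.integral_translatePairing_mul_comm hψ hχs, ← translatePairing_zero,
    integral_mul_eq_of_add_neg_eq hχe, hχ, mul_one]
  · exact ((hu.continuous_translatePairing ψ).mul χ.continuous).integrable_of_hasCompactSupport
      hχs.mul_left
  · intro y
    have hmid := hu.translatePairing_add (h y (-y)) ψ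
    rw [add_neg_cancel] at hmid
    linear_combination -hmid

theorem exists_affine (hu : TemperateIntegrable M u)
    (h : ∀ (v v' : V) (φ : 𝓢(V, ℂ)), ∫ z, u z * (∂_{v} (∂_{v'} φ)) z = 0) :
    ∃ (c : ℂ) (l : V →L[ℝ] ℂ), ∀ᵐ z, u z = c + l z := by
  obtain ⟨χ, hχs, hχe, hχ⟩ := exists_even_schwartz_integral_eq_one V
  obtain ⟨l, hl⟩ := hu.exists_translatePairing_eq_add h χ
  refine ⟨translatePairing u χ 0, l, ?_⟩
  filter_upwards [hu.ae_eq_translatePairing h hχs hχe hχ] with z hz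
  rw [hz, hl]

end TemperateIntegrable

end Affine

section TimeKernelMoment

variable {α : ℝ}

lemma rpow_neg_mul_le_timeKernel_mul {σ : ℝ} (hσ : 1 ≤ σ) :
    σ ^ (-α) * (1 - Real.exp (-(2 * Real.pi))) ≤ timeKernel α σ * σ := by
  have hσ0 : 0 < σ := by linarith
  have hpow : σ ^ (-α) = σ ^ (-(1 + α)) * σ := by
    rw [← Real.rpow_add_one hσ0.ne']
    ring_nf
  calc σ ^ (-α) * (1 - Real.exp (-(2 * Real.pi)))
      ≤ σ ^ (-α) * (1 - Real.exp (-(2 * Real.pi * σ))) := by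
        gcongr _ * (1 - Real.exp (-?_))
        exact le_mul_of_one_le_right Real.two_pi_pos.le hσ
    _ = timeKernel α σ * σ := by
        rw [timeKernel, indicator_of_mem (mem_Ioi.2 hσ0), hpow, mul_right_comm]

lemma not_integrable_timeKernel_mul (hα1 : α < 1) : ¬ Integrable fun σ => timeKernel α σ * σ := by
  intro h
  have hc : 0 < 1 - Real.exp (-(2 * Real.pi)) :=
    sub_pos.2 (Real.exp_lt_one_iff.2 (neg_lt_zero.2 Real.two_pi_pos))
  have hpow : IntegrableOn (fun σ : ℝ => σ ^ (-α)) (Ioi 1) := by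
    refine (h.integrableOn.div_const (1 - Real.exp (-(2 * Real.pi)))).mono'
      (measurable_id.pow_const _).aestronglyMeasurable
      ((ae_restrict_iff' measurableSet_Ioi).2 (.of_forall fun σ (hσ : 1 < σ) => ?_))
    rw [Real.norm_of_nonneg (by positivity), le_div_iff₀ hc]
    exact rpow_neg_mul_le_timeKernel_mul hσ.le
  rw [integrableOn_Ioi_rpow_iff one_pos] at hpow
  linarith

lemma eq_zero_of_integrable_timeKernel_smul_add_mul (hα0 : 0 < α) (hα1 : α < 1) {A D : ℂ}
    (h : Integrable fun σ : ℝ => timeKernel α σ • (A + σ * D)) : D = 0 := by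
  by_contra hD
  have hk := integrable_timeKernel hα0 hα1
  refine not_integrable_timeKernel_mul hα1 (((h.sub (hk.smul_const A)).div_const D).norm.mono'
    (hk.aestronglyMeasurable.mul measurable_id.aestronglyMeasurable) (.of_forall fun σ => ?_))
  have hdiv : (timeKernel α σ • (A + σ * D) - timeKernel α σ • A) / D =
      ((timeKernel α σ * σ : ℝ) : ℂ) := by
    simp only [Complex.real_smul, Complex.ofReal_mul]
    field_simp
    ring
  rw [Pi.sub_apply, hdiv, Complex.norm_real]

end TimeKernelMoment

section Liouville

variable {F : Type*} [NormedAddCommGroup F] [InnerProductSpace ℝ F] [FiniteDimensional ℝ F]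
  [MeasurableSpace F] [BorelSpace F] {α s a b : ℝ} {u : SpaceTime F → ℂ}

lemma WeightedIntegrable.exists_temperateIntegrable (hα0 : 0 ≤ α) (hs0 : 0 ≤ s)
    (hu : WeightedIntegrable α s u) : ∃ M, TemperateIntegrable M u := by
  obtain ⟨M, hM⟩ := exists_one_le_pow_mul_prodWeight (F := F) (p := Module.finrank ℝ F + 2 * s)
    (q := 1 + α) (by positivity) (by positivity)
  have hw : Continuous fun z : SpaceTime F => (temperateWeight M z : ℂ) :=
    Complex.continuous_ofReal.comp (continuous_temperateWeight M)
  refine ⟨M, (Integrable.norm hu).mono' (hw.aestronglyMeasurable.mul hu.aestronglyMeasurable)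
    (.of_forall fun z => ?_)⟩
  rw [norm_ofReal_mul (temperateWeight_pos M z).le, norm_ofReal_mul (prodWeight_pos _ _ z).le]
  gcongr
  rw [temperateWeight, inv_le_iff_one_le_mul₀ (by positivity), mul_comm]
  exact hM z

lemma WeightedIntegrable.integrable_timeKernel_smul_translatePairing (hα0 : 0 < α) (hα1 : α < 1)
    (hs0 : 0 ≤ s) (hu : WeightedIntegrable α s u) (ψ : 𝓢(SpaceTime F, ℂ)) :
    Integrable fun σ => timeKernel α σ • translatePairing u ψ (-(σ • timeVec F)) := by
  obtain ⟨M, hM⟩ := hu.exists_temperateIntegrable hα0.le hs0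
  obtain ⟨B, hB⟩ := exists_schwartz_le_prodWeight (F := F) (p := Module.finrank ℝ F + 2 * s)
    (q := 1 + α) (by positivity) (by positivity) ψ
  obtain ⟨C, hC⟩ := exists_excessiveWeight_pushKernel_time (F := F) hα0 hα1 zero_le_one
    (Module.finrank ℝ F + 2 * s)
  simp only [one_mul] at hC
  have hk := integrable_timeKernel hα0 hα1
  have := isFiniteMeasure_pushKernel
    (J := ContinuousLinearMap.toSpanSingleton ℝ (timeVec F)) hk
  have hint := (hC.integrable_unshear_mul hu ψ.continuous hB).integral_prod_right
  have hpair (y : SpaceTime F) : ∫ z, u (z - y) * ψ z = translatePairing u ψ (-y) := by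
    rw [← integral_add_right_eq_self (fun z => u (z - y) * ψ z) y, translatePairing]
    simp only [add_sub_cancel_right, sub_neg_eq_add]
  simp only [hpair] at hint
  have hcont : Continuous fun y => translatePairing u ψ (-y) :=
    (hM.continuous_translatePairing ψ).comp continuous_neg
  rw [integrable_pushKernel_iff timeKernel_nonneg hk.aemeasurable hcont] at hint
  exact hint

/-- A solution without pure second time derivative is affine in time, and the time part of the
weight does not integrate a nonconstant affine function. -/
lemma WeightedIntegrable.integral_mul_lineDeriv_timeVec_eq_zero (hα0 : 0 < α) (hα1 : α < 1)
    (hs0 : 0 ≤ s) (hu : WeightedIntegrable α s u)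
    (h : ∀ φ : 𝓢(SpaceTime F, ℂ), ∫ z, u z * (∂_{timeVec F} (∂_{timeVec F} φ)) z = 0)
    (ψ : 𝓢(SpaceTime F, ℂ)) : ∫ z, u z * (∂_{timeVec F} ψ) z = 0 := by
  obtain ⟨M, hM⟩ := hu.exists_temperateIntegrable hα0.le hs0
  rw [← translatePairing_zero]
  refine eq_zero_of_integrable_timeKernel_smul_add_mul hα0 hα1 (A := translatePairing u ψ 0)
    ((hu.integrable_timeKernel_smul_translatePairing hα0 hα1 hs0 ψ).congr (.of_forall fun σ => ?_))
  simp only [← neg_smul, hM.translatePairing_smul h, Complex.ofReal_neg, neg_mul, sub_neg_eq_add]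

lemma exists_ae_eq_comp_fst (hu : AEStronglyMeasurable u)
    (h : ∀ r : ℝ, ∀ᵐ z, u (z + r • timeVec F) = u z) :
    ∃ u₀ : F → ℂ, ∀ᵐ z : SpaceTime F, u z = u₀ z.fst := by
  obtain ⟨w, hw, huw⟩ := hu
  have hshift (r : ℝ) : ∀ᵐ z, w (z + r • timeVec F) = w z := by
    filter_upwards [h r, huw, (measurePreserving_add_right volume
      (r • timeVec F)).quasiMeasurePreserving.ae huw] with z hr hz hzr
    rw [← hzr, hr, hz]
  have hmeas : MeasurableSet {p : SpaceTime F × ℝ | w (p.1 + p.2 • timeVec F) = w p.1} :=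
    measurableSet_eq_fun (hw.measurable.comp (by fun_prop :
      Continuous fun p : SpaceTime F × ℝ => p.1 + p.2 • timeVec F).measurable)
      (hw.measurable.comp measurable_fst)
  have hline : ∀ᵐ z : SpaceTime F, ∀ᵐ r : ℝ, w (z + r • timeVec F) = w z :=
    (Measure.ae_ae_comm hmeas).2 (.of_forall hshift)
  refine ⟨fun x => ∫ r in Ioc (0 : ℝ) 1, w (WithLp.toLp 2 (x, r)), ?_⟩
  filter_upwards [hline, huw] with z hz huz
  have hconst : ∀ᵐ r : ℝ, w (WithLp.toLp 2 (z.fst, r)) = w z := by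
    filter_upwards [(measurePreserving_sub_right volume
      z.snd).quasiMeasurePreserving.ae hz] with r hr
    rw [← hr]
    congr 1
    apply SpaceTime.ext <;> simp
  rw [integral_congr_ae (ae_restrict_of_ae hconst), huz]
  simp

lemma TemperateIntegrable.integral_mul_lineDeriv_lineDeriv_timeVec_eq_zero {M : ℕ}
    (hu : TemperateIntegrable M u)
    (h : ∀ φ : 𝓢(SpaceTime F, ℂ), ∫ z, u z * (∂_{timeVec F} φ) z = 0) (v : SpaceTime F)
    (φ : 𝓢(SpaceTime F, ℂ)) : ∫ z, u z * (∂_{v} (∂_{timeVec F} φ)) z = 0 := by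
  have hderiv := hu.hasDerivAt_translatePairing (∂_{timeVec F} φ) 0 v 0
  simp only [translatePairing_lineDeriv_eq_zero h] at hderiv
  have hzero := hderiv.unique (hasDerivAt_const 0 0)
  rwa [zero_smul, add_zero, neg_eq_zero, translatePairing_zero] at hzero

lemma TemperateIntegrable.integral_mul_lineDeriv_lineDeriv_eq_zero {M : ℕ}
    (hu : TemperateIntegrable M u)
    (htime : ∀ φ : 𝓢(SpaceTime F, ℂ), ∫ z, u z * (∂_{timeVec F} φ) z = 0)
    (hspace : ∀ (y y' : F) (φ : 𝓢(SpaceTime F, ℂ)),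
      ∫ z, u z * (∂_{spaceIncl F y} (∂_{spaceIncl F y'} φ)) z = 0)
    (v v' : SpaceTime F) (φ : 𝓢(SpaceTime F, ℂ)) : ∫ z, u z * (∂_{v} (∂_{v'} φ)) z = 0 := by
  have hdecomp (v : SpaceTime F) (φ : 𝓢(SpaceTime F, ℂ)) :
      ∂_{v} φ = ∂_{spaceIncl F v.fst} φ + v.snd • ∂_{timeVec F} φ := by
    rw [← LineDeriv.lineDerivOp_left_smul, ← LineDeriv.lineDerivOp_left_add,
      ← v.eq_spaceIncl_add_smul_timeVec]
  have hpair (r : ℝ) (φ χ : 𝓢(SpaceTime F, ℂ)) :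
      ∫ z, u z * (φ + r • χ) z = (∫ z, u z * φ z) + r * ∫ z, u z * χ z := by
    simp only [add_apply, smul_apply, Complex.real_smul, mul_add, mul_left_comm _ (r : ℂ)]
    rw [integral_add (hu.integrable_mul_schwartz φ) ((hu.integrable_mul_schwartz χ).const_mul _),
      integral_const_mul]
  rw [hdecomp v, hpair, htime, mul_zero, add_zero, hdecomp v', LineDeriv.lineDerivOp_add,
    LineDeriv.lineDerivOp_smul, hpair, hspace,
    hu.integral_mul_lineDeriv_lineDeriv_timeVec_eq_zero htime, mul_zero, add_zero]

lemma ae_eq_add_comp_fst {c : ℂ} {l : SpaceTime F →L[ℝ] ℂ}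
    (hl : ∀ᵐ z, u z = c + l z) (h : ∀ᵐ z, u (z + timeVec F) = u z) :
    ∀ᵐ z, u z = c + (l ∘L spaceIncl F) z.fst := by
  have hl0 : l (timeVec F) = 0 := by
    obtain ⟨z, hz, hlz, hlz'⟩ := (h.and (hl.and ((measurePreserving_add_right volume
      (timeVec F)).quasiMeasurePreserving.ae hl))).exists
    rw [hz, hlz, map_add, ← add_assoc] at hlz'
    exact left_eq_add.1 hlz'
  filter_upwards [hl] with z hz
  rw [hz, ContinuousLinearMap.comp_apply]
  nth_rw 1 [z.eq_spaceIncl_add_smul_timeVec]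
  rw [map_add, map_smul, hl0, smul_zero, add_zero]

theorem IsJumpSol.exists_affine [Nontrivial F] (hα0 : 0 < α) (hα1 : α < 1) (hs0 : 0 < s)
    (hs1 : s < 1) (ha : 0 < a) (hb : 0 < b) (hu : WeightedIntegrable α s u)
    (h : IsJumpSol α s a b u) : ∃ (c : ℂ) (l : F →L[ℝ] ℂ), ∀ᵐ z, u z = c + l z.fst := by
  obtain ⟨M, hM⟩ := hu.exists_temperateIntegrable hα0.le hs0.le
  have htime := hu.integral_mul_lineDeriv_timeVec_eq_zero hα0 hα1 hs0.le
    (h.integral_mul_time_deriv_eq_zero hα0 hα1 hs0 hs1 ha hb hu)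
  have hshift := hM.ae_eq_add_smul htime
  obtain ⟨u₀, hu₀⟩ := exists_ae_eq_comp_fst hM.aestronglyMeasurable hshift
  obtain ⟨c, l, hl⟩ := hM.exists_affine (hM.integral_mul_lineDeriv_lineDeriv_eq_zero htime
    (h.integral_mul_space_deriv_eq_zero hα0 hα1 hs0 hs1 ha hb hu hu₀))
  exact ⟨c, l ∘L spaceIncl F,
    ae_eq_add_comp_fst hl (by simpa only [one_smul] using hshift 1)⟩

end Liouville

section FractionalOperators

variable {n : ℕ} {α s : ℝ}

lemma Gamma_neg_ne_zero (hα0 : 0 < α) (hα1 : α < 1) : Real.Gamma (-α) ≠ 0 :=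
  Real.Gamma_ne_zero fun m hm => by
    have hm0 : 0 < (m : ℝ) := by linarith
    have hm1 : (m : ℝ) < 1 := by linarith
    norm_cast at hm0 hm1
    omega

lemma Calpha_pos (hα0 : 0 < α) (hα1 : α < 1) : 0 < Calpha α :=
  one_div_pos.2 (abs_pos.2 (Gamma_neg_ne_zero hα0 hα1))

lemma Cns_pos (hs0 : 0 < s) (hs1 : s < 1) : 0 < Cns n s := by
  have := Gamma_neg_ne_zero hs0 hs1
  have := Real.Gamma_pos_of_pos (by positivity : 0 < (n : ℝ) / 2 + s)
  unfold Cns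
  positivity

lemma marchaudRight_eq (φ : EuclideanSpace ℝ (Fin n) × ℝ → ℝ) (x : EuclideanSpace ℝ (Fin n))
    (t : ℝ) : marchaudRight α φ x t =
      Calpha α * ∫ σ in Ioi (0 : ℝ), σ ^ (-(1 + α)) * (φ (x, t) - φ (x, t + σ)) := by
  have hshift := (measurePreserving_add_right volume t).setIntegral_preimage_emb
    (measurableEmbedding_addRight t)
    (fun τ => (φ (x, t) - φ (x, τ)) / (τ - t) ^ (1 + α)) (Ioi t)
  rw [marchaudRight, ← hshift, preimage_add_const_Ioi, sub_self]
  congr 1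
  refine setIntegral_congr_fun measurableSet_Ioi fun σ (hσ : 0 < σ) => ?_
  rw [add_sub_cancel_right, Real.rpow_neg hσ.le, div_eq_inv_mul, add_comm t σ]

lemma fracLap_eq (φ : EuclideanSpace ℝ (Fin n) × ℝ → ℝ) (x : EuclideanSpace ℝ (Fin n))
    (t : ℝ) : fracLap s φ x t = Cns n s / 2 * ∫ y : EuclideanSpace ℝ (Fin n),
      ‖y‖ ^ (-((n : ℝ) + 2 * s)) * (2 * φ (x, t) - φ (x + y, t) - φ (x - y, t)) := by
  simp only [fracLap, Real.rpow_neg (norm_nonneg _), inv_mul_eq_div]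

/-- The parameter `a` for which `a (-Δ)^s` carries the normalization of `fracLap`: the spatial part
of `jumpOperator` is normalized by a Gamma factor of its own. -/
noncomputable def fracLapCoeff (n : ℕ) (s : ℝ) : ℝ := Cns n s / Real.Gamma ((n : ℝ) / 2 + s)

lemma fracLapCoeff_pos (hs0 : 0 < s) (hs1 : s < 1) : 0 < fracLapCoeff n s :=
  div_pos (Cns_pos hs0 hs1) (Real.Gamma_pos_of_pos (by positivity))

lemma jumpOperator_ofReal (hs0 : 0 < s) (φ : EuclideanSpace ℝ (Fin n) × ℝ → ℝ)
    (z : SpaceTime (EuclideanSpace ℝ (Fin n))) :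
    jumpOperator α s (fracLapCoeff n s) (Calpha α) (fun z => (φ (z.fst, z.snd) : ℂ)) z =
      ((marchaudRight α φ z.fst z.snd + fracLap s φ z.fst z.snd : ℝ) : ℂ) := by
  have : Real.Gamma ((n : ℝ) / 2 + s) ≠ 0 := (Real.Gamma_pos_of_pos (by positivity)).ne'
  have hcoeff : fracLapCoeff n s * (Real.Gamma ((n : ℝ) / 2 + s) / 2) = Cns n s / 2 := by
    rw [fracLapCoeff]
    field_simp
  rw [marchaudRight_eq, fracLap_eq, jumpOperator, finrank_euclideanSpace_fin, smul_smul, hcoeff,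
    add_comm, Complex.ofReal_add, Complex.ofReal_mul, Complex.ofReal_mul,
    ← integral_complex_ofReal, ← integral_complex_ofReal]
  simp only [WithLp.add_fst, WithLp.add_snd, WithLp.sub_fst, WithLp.sub_snd, WithLp.smul_fst,
    WithLp.smul_snd, timeVec_fst, timeVec_snd, spaceIncl_fst, spaceIncl_snd, smul_zero, add_zero,
    sub_zero, smul_eq_mul, mul_one, Complex.real_smul, Complex.ofReal_mul, Complex.ofReal_sub,
    Complex.ofReal_ofNat]

lemma one_add_rpow_neg_le {r p : ℝ} (hr : 0 ≤ r) (hp : 1 ≤ p) :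
    (1 + r) ^ (-p) ≤ (1 + r ^ p)⁻¹ := by
  rw [Real.rpow_neg (by positivity)]
  gcongr
  simpa only [Real.one_rpow] using Real.add_rpow_le_rpow_add zero_le_one hr hp

variable {u : EuclideanSpace ℝ (Fin n) × ℝ → ℝ}

lemma weightedIntegrable_ofReal (hn : 1 ≤ n) (hα0 : 0 ≤ α) (hs0 : 0 ≤ s)
    (hu_meas : AEStronglyMeasurable u)
    (hu_space : Integrable (fun p : EuclideanSpace ℝ (Fin n) × ℝ =>
      |u p| / ((1 + ‖p.1‖ ^ ((n : ℝ) + 2 * s)) * (1 + |p.2| ^ (1 + α))))) :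
    WeightedIntegrable α s
      (fun z : SpaceTime (EuclideanSpace ℝ (Fin n)) => (u (z.fst, z.snd) : ℂ)) := by
  have hofLp := WithLp.volume_preserving_ofLp (U := EuclideanSpace ℝ (Fin n)) (V := ℝ)
  have hn' : (1 : ℝ) ≤ n := Nat.one_le_cast.2 hn
  refine (hofLp.integrable_comp_of_integrable hu_space).mono'
    ((Complex.continuous_ofReal.comp (continuous_prodWeight _ _)).aestronglyMeasurable.mul
      (Complex.continuous_ofReal.comp_aestronglyMeasurable
        (hu_meas.comp_quasiMeasurePreserving hofLp.quasiMeasurePreserving)))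
    (.of_forall fun z => ?_)
  change _ ≤ |u (z.fst, z.snd)| / ((1 + ‖z.fst‖ ^ ((n : ℝ) + 2 * s)) * (1 + ‖z.snd‖ ^ (1 + α)))
  rw [norm_ofReal_mul (prodWeight_pos _ _ z).le, Complex.norm_real, Real.norm_eq_abs (u _),
    prodWeight, finrank_euclideanSpace_fin, div_eq_mul_inv, mul_comm, mul_inv]
  gcongr <;> exact one_add_rpow_neg_le (norm_nonneg _) (by linarith)

lemma isJumpSol_of_forall_integral_eq_zero (hn : 1 ≤ n) (hα0 : 0 < α) (hα1 : α < 1) (hs0 : 0 < s)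
    (hs1 : s < 1) (hu : WeightedIntegrable α s
      (fun z : SpaceTime (EuclideanSpace ℝ (Fin n)) => (u (z.fst, z.snd) : ℂ)))
    (hu_sol : ∀ φ : 𝓢(EuclideanSpace ℝ (Fin n) × ℝ, ℝ),
      ∫ t : ℝ, ∫ x, u (x, t) * (marchaudRight α φ x t + fracLap s φ x t) = 0) :
    IsJumpSol α s (fracLapCoeff n s) (Calpha α)
      (fun z : SpaceTime (EuclideanSpace ℝ (Fin n)) => (u (z.fst, z.snd) : ℂ)) := by
  have : Nonempty (Fin n) := ⟨0, hn⟩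
  have ha := (fracLapCoeff_pos (n := n) hs0 hs1).le
  have hb := (Calpha_pos hα0 hα1).le
  refine hu.isJumpSol_of_real hα0 hα1 hs0 hs1 ha hb fun g => ?_
  let φ : 𝓢(EuclideanSpace ℝ (Fin n) × ℝ, ℝ) := SchwartzMap.compCLMOfContinuousLinearEquiv ℝ
    (WithLp.prodContinuousLinearEquiv 2 ℝ (EuclideanSpace ℝ (Fin n)) ℝ).symm g
  have hop (z : SpaceTime (EuclideanSpace ℝ (Fin n))) :
      (u (z.fst, z.snd) : ℂ) * jumpOperator α s (fracLapCoeff n s) (Calpha α)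
        (fun z => (g z : ℂ)) z = ((u (z.fst, z.snd) *
          (marchaudRight α φ z.fst z.snd + fracLap s φ z.fst z.snd) : ℝ) : ℂ) := by
    rw [Complex.ofReal_mul, ← jumpOperator_ofReal hs0]
    rfl
  have hint := hu.integrable_mul_jumpOperator hα0 hα1 hs0 hs1 ha hb
    (SchwartzMap.postcompCLM Complex.ofRealCLM g)
  have htoLp := WithLp.volume_preserving_toLp (U := EuclideanSpace ℝ (Fin n)) (V := ℝ)
  have hintProd := htoLp.integrable_comp_of_integrable (hint.congr (.of_forall hop)).re
  rw [integral_congr_ae (.of_forall hop), integral_complex_ofReal, ← htoLp.integral_comp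
    (MeasurableEquiv.toLp 2 (EuclideanSpace ℝ (Fin n) × ℝ)).measurableEmbedding]
  exact congrArg Complex.ofReal ((integral_prod_symm _ hintProd).trans (hu_sol φ))

lemma exists_re_add_eq_add_sum (c : ℂ) (l : EuclideanSpace ℝ (Fin n) →L[ℝ] ℂ) :
    ∃ (C₀ : ℝ) (C : Fin n → ℝ), ∀ x, (c + l x).re = C₀ + ∑ i, C i * x i := by
  refine ⟨c.re, fun i => (l (EuclideanSpace.single i 1)).re, fun x => ?_⟩
  have hx : x = ∑ i, x i • EuclideanSpace.single i (1 : ℝ) := by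
    ext j
    simp [Pi.single_apply]
  rw [Complex.add_re, add_right_inj]
  nth_rw 1 [hx]
  simp [mul_comm]

end FractionalOperators

theorem dual_fractional_solutions_are_affine_general
    (n : ℕ) (hn : 1 ≤ n) (α s : ℝ) (hα0 : 0 < α) (hα1 : α < 1)
    (hs0 : 0 < s) (hs1 : s < 1)
    (u : EuclideanSpace ℝ (Fin n) × ℝ → ℝ)
    (hu_meas : AEStronglyMeasurable u)
    (hu_space : Integrable (fun p : EuclideanSpace ℝ (Fin n) × ℝ =>
      |u p| / ((1 + ‖p.1‖ ^ ((n : ℝ) + 2 * s)) * (1 + |p.2| ^ (1 + α)))))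
    (hu_sol : ∀ φ : SchwartzMap (EuclideanSpace ℝ (Fin n) × ℝ) ℝ,
      ∫ t : ℝ, ∫ x : EuclideanSpace ℝ (Fin n),
        u (x, t) * (marchaudRight α (⇑φ) x t + fracLap s (⇑φ) x t) = 0) :
    ∃ (C₀ : ℝ) (C : Fin n → ℝ), ∀ᵐ p : EuclideanSpace ℝ (Fin n) × ℝ ∂volume,
      u p = C₀ + ∑ i : Fin n, C i * p.1 i := by
  have : Nonempty (Fin n) := ⟨0, hn⟩
  have hu := weightedIntegrable_ofReal hn hα0.le hs0.le hu_meas hu_space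
  have hsol := isJumpSol_of_forall_integral_eq_zero hn hα0 hα1 hs0 hs1 hu hu_sol
  obtain ⟨c, l, hcl⟩ := hsol.exists_affine hα0 hα1 hs0 hs1 (fracLapCoeff_pos hs0 hs1)
    (Calpha_pos hα0 hα1) hu
  obtain ⟨C₀, C, hC⟩ := exists_re_add_eq_add_sum c l
  refine ⟨C₀, C, ?_⟩
  filter_upwards [(WithLp.volume_preserving_toLp (U := EuclideanSpace ℝ (Fin n))
    (V := ℝ)).quasiMeasurePreserving.ae hcl] with p hp
  rw [← hC]
  exact congrArg Complex.re hp

/-- every distributional solution `u ∈ 𝓛_{2s,α}(ℝⁿ×ℝ)` of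
`∂_t^α u + (-Δ)^s u = 0` in `ℝⁿ × ℝ` is (a.e.) affine in `x` and independent of `t`:
`u(x,t) = C₀ + Σᵢ Cᵢ xᵢ`. -/
theorem dual_fractional_solutions_are_affine
    (n : ℕ) (hn : 2 ≤ n) (α s : ℝ) (hα0 : 0 < α) (hα1 : α < 1)
    (hs0 : 0 < s) (hs1 : s < 1)
    (u : EuclideanSpace ℝ (Fin n) × ℝ → ℝ)
    (hu_loc : LocallyIntegrable u)
    (hu_space : Integrable (fun p : EuclideanSpace ℝ (Fin n) × ℝ =>
      |u p| / ((1 + ‖p.1‖ ^ ((n : ℝ) + 2 * s)) * (1 + |p.2| ^ (1 + α)))))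
    (hu_sol : ∀ φ : SchwartzMap (EuclideanSpace ℝ (Fin n) × ℝ) ℝ,
      ∫ t : ℝ, ∫ x : EuclideanSpace ℝ (Fin n),
        u (x, t) * (marchaudRight α (⇑φ) x t + fracLap s (⇑φ) x t) = 0) :
    ∃ (C₀ : ℝ) (C : Fin n → ℝ), ∀ᵐ p : EuclideanSpace ℝ (Fin n) × ℝ ∂volume,
      u p = C₀ + ∑ i : Fin n, C i * p.1 i :=
  dual_fractional_solutions_are_affine_general n (one_le_two.trans hn) α s hα0 hα1 hs0 hs1 u
    hu_loc.aestronglyMeasurable hu_space hu_sol
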